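/- arXiv:1609.04438 — 3 statements merged into one kernel-verified Lean document; each statement's English description precedes it below -/
import Mathlib

section
/- Let $n\geq 1$, $s\in(0,1)$, $e\in\partial B_1\subset\mathbb{R}^n$. Let $\phi_\star$ be the first Dirichlet eigenfunction of $(-\Delta)^s$ on $B_1$ with eigenvalue $\lambda_\star>0$, and set $\kappa_\star=2^s\kappa(n,s)\int_{B_1}\phi_\star(z)\frac{(1-|z|^2)^s}{s|z-e|^n}\,dz$. Then for every $\omega\in\partial B_1$: $\lim_{\varepsilon\searrow0}\varepsilon^{-s}\,\phi_\star(e+\varepsilon\omega)=\kappa_\star\,\lambda_\star\,(-e\cdot\omega)_+^s$, where $t_+=\max\{t,0\}$. -/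
open MeasureTheory Filter Metric Set
open scoped RealInnerProductSpace

/-- The normalizing constant `C(n,s)` of the fractional Laplacian. -/
noncomputable def fracC (n : ℕ) (s : ℝ) : ℝ :=
  4 ^ s * s * Real.Gamma ((n : ℝ) / 2 + s) / (Real.pi ^ ((n : ℝ) / 2) * Real.Gamma (1 - s))

/-- `HasFracLap n s u x L` : the principal value limit defining `(-Δ)^s u (x)`
exists and equals `L`. -/
def HasFracLap (n : ℕ) (s : ℝ) (u : EuclideanSpace ℝ (Fin n) → ℝ)
    (x : EuclideanSpace ℝ (Fin n)) (L : ℝ) : Prop :=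
  Tendsto (fun ρ : ℝ =>
      fracC n s * ∫ y in {y : EuclideanSpace ℝ (Fin n) | ρ ≤ ‖y‖},
        (u x - u (x + y)) / ‖y‖ ^ ((n : ℝ) + 2 * s))
    (nhdsWithin 0 (Set.Ioi 0)) (nhds L)

/-- The constant `κ(n,s) = Γ(n/2) / (4^s π^{n/2} Γ(s)²)`. -/
noncomputable def kappaC (n : ℕ) (s : ℝ) : ℝ :=
  Real.Gamma ((n : ℝ) / 2) / (4 ^ s * Real.pi ^ ((n : ℝ) / 2) * Real.Gamma s ^ 2)

section Polar

variable {E : Type*} [NormedAddCommGroup E] [NormedSpace ℝ E] [MeasurableSpace E] [BorelSpace E]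
  [FiniteDimensional ℝ E] [Nontrivial E] (μ : Measure E) [μ.IsAddHaarMeasure]

/-- Integration in polar coordinates. -/
theorem integral_eq_integral_toSphere {f : E → ℝ} (hf : Integrable f μ) :
    ∫ x, f x ∂μ = ∫ θ : sphere (0 : E) 1, (∫ t in Ioi (0 : ℝ),
      t ^ (Module.finrank ℝ E - 1) * f (t • (θ : E))) ∂μ.toSphere := by
  have hmp := μ.measurePreserving_homeomorphUnitSphereProd
  have hemb := (homeomorphUnitSphereProd E).measurableEmbedding
  let g : sphere (0 : E) 1 × Ioi (0 : ℝ) → ℝ := fun q => f ((q.2 : ℝ) • (q.1 : E))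
  have hcomp : ∀ x : ({(0 : E)}ᶜ : Set E), g (homeomorphUnitSphereProd E x) = f x := by
    intro x
    have : ‖(x : E)‖ ≠ 0 := norm_ne_zero_iff.2 x.2
    simp [g, smul_smul, this]
  have hg : Integrable g (μ.toSphere.prod (.volumeIoiPow (Module.finrank ℝ E - 1))) := by
    rw [← hmp.integrable_comp_emb hemb]
    have h1 : Integrable (fun x : ({(0 : E)}ᶜ : Set E) => f x) (μ.comap (↑)) := by
      have := (integrableOn_iff_comap_subtypeVal (μ := μ) (f := f)
        (measurableSet_singleton (0 : E)).compl).1 hf.integrableOn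
      exact this
    exact h1.congr (Eventually.of_forall fun x => (hcomp x).symm)
  calc
    ∫ x, f x ∂μ = ∫ x : ({(0)}ᶜ : Set E), f x ∂(μ.comap (↑)) := by
      rw [integral_subtype_comap (measurableSet_singleton _).compl fun x ↦ f x,
        restrict_compl_singleton]
    _ = ∫ q, g q ∂μ.toSphere.prod (.volumeIoiPow (Module.finrank ℝ E - 1)) := by
      rw [← hmp.integral_comp hemb]
      exact integral_congr_ae (Eventually.of_forall fun x => (hcomp x).symm)
    _ = _ := by
      rw [integral_prod _ hg]
      congr 1
      ext θ
      simp only [Measure.volumeIoiPow, ENNReal.ofReal]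
      rw [integral_withDensity_eq_integral_smul]
      · rw [integral_subtype_comap measurableSet_Ioi fun a : ℝ ↦
          Real.toNNReal (a ^ (Module.finrank ℝ E - 1)) • f (a • (θ : E))]
        refine setIntegral_congr_fun measurableSet_Ioi fun t ht => ?_
        simp only [NNReal.smul_def, Real.coe_toNNReal _ (pow_nonneg ht.out.le _), smul_eq_mul]
      · exact (measurable_subtype_coe.pow_const _).real_toNNReal

end Polar

section Inversion

open EuclideanGeometry

variable {n : ℕ}

theorem abs_det_smul_reflection (c : ℝ) (K : Submodule ℝ (EuclideanSpace ℝ (Fin n))) :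
    |(c • (K.reflection : EuclideanSpace ℝ (Fin n) →L[ℝ] EuclideanSpace ℝ (Fin n))).det|
      = |c| ^ n := by
  have h : LinearMap.det (K.reflection.toLinearEquiv.toLinearMap) = 1 ∨
      LinearMap.det (K.reflection.toLinearEquiv.toLinearMap) = -1 := by
    have h2 : LinearMap.det (K.reflection.toLinearEquiv.toLinearMap) *
        LinearMap.det (K.reflection.toLinearEquiv.toLinearMap) = 1 := by
      rw [← LinearMap.det_comp]
      convert LinearMap.det_id
      ext x
      simp
    exact mul_self_eq_one_iff.1 h2
  have h3 : (c • (K.reflection : EuclideanSpace ℝ (Fin n) →L[ℝ] EuclideanSpace ℝ (Fin n))).det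
      = c ^ n * LinearMap.det (K.reflection.toLinearEquiv.toLinearMap) := by
    have := LinearMap.det_smul c (K.reflection.toLinearEquiv.toLinearMap)
    rw [finrank_euclideanSpace_fin] at this
    exact this
  rw [h3, abs_mul, abs_pow]
  rcases h with h | h <;> rw [h] <;> simp

variable (p : EuclideanSpace ℝ (Fin n)) {a : ℝ}

theorem image_inversion_compl_center (ha : a ≠ 0) :
    inversion p a '' {p}ᶜ = {p}ᶜ := by
  rw [image_compl_eq (inversion_bijective p ha), image_singleton, inversion_self]

/-- Change of variables under an inversion. -/
theorem integral_comp_inversion (hn : 1 ≤ n) (ha : a ≠ 0) (f : EuclideanSpace ℝ (Fin n) → ℝ) :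
    ∫ y, f y = ∫ z, ((a / ‖z - p‖) ^ 2) ^ n * f (inversion p a z) := by
  have : Nonempty (Fin n) := ⟨⟨0, hn⟩⟩
  have h := integral_image_eq_integral_abs_det_fderiv_smul volume (s := {p}ᶜ)
    (f := inversion p a) (measurableSet_singleton p).compl
    (fun x hx => (hasFDerivAt_inversion hx).hasFDerivWithinAt)
    ((inversion_injective p ha).injOn) f
  rw [image_inversion_compl_center p ha] at h
  simp only [restrict_compl_singleton] at h
  rw [h]
  congr 1
  ext z
  rw [abs_det_smul_reflection, abs_of_nonneg (by positivity), dist_eq_norm, smul_eq_mul]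

end Inversion

section PrincipalValue

variable {n : ℕ} {s : ℝ}

/-- `HasPrincipalValue s u x L`: the principal value integral
`∫ (u x - u y) / ‖y - x‖ ^ (n + 2 s) dy` exists and equals `L`. -/
def HasPrincipalValue (s : ℝ) (u : EuclideanSpace ℝ (Fin n) → ℝ) (x : EuclideanSpace ℝ (Fin n))
    (L : ℝ) : Prop :=
  Tendsto (fun ρ : ℝ => ∫ y in {y : EuclideanSpace ℝ (Fin n) | ρ ≤ ‖y - x‖},
      (u x - u y) / ‖y - x‖ ^ ((n : ℝ) + 2 * s)) (nhdsWithin 0 (Ioi 0)) (nhds L)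

theorem measurableSet_le_norm_sub (x : EuclideanSpace ℝ (Fin n)) (ρ : ℝ) :
    MeasurableSet {y : EuclideanSpace ℝ (Fin n) | ρ ≤ ‖y - x‖} :=
  measurableSet_le measurable_const (by fun_prop)

theorem setIntegral_translate (u : EuclideanSpace ℝ (Fin n) → ℝ) (x : EuclideanSpace ℝ (Fin n))
    (ρ : ℝ) :
    ∫ y in {y : EuclideanSpace ℝ (Fin n) | ρ ≤ ‖y - x‖},
      (u x - u y) / ‖y - x‖ ^ ((n : ℝ) + 2 * s) =
    ∫ y in {y : EuclideanSpace ℝ (Fin n) | ρ ≤ ‖y‖},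
      (u x - u (x + y)) / ‖y‖ ^ ((n : ℝ) + 2 * s) := by
  have h0 : MeasurableSet {y : EuclideanSpace ℝ (Fin n) | ρ ≤ ‖y‖} :=
    measurableSet_le measurable_const (by fun_prop)
  rw [← integral_indicator (measurableSet_le_norm_sub x ρ), ← integral_indicator h0,
    ← integral_add_left_eq_self _ x]
  congr 1
  ext y
  simp [indicator]

theorem integrableOn_kernel (hn : 1 ≤ n) (hs : 0 < s) (x : EuclideanSpace ℝ (Fin n)) {ρ : ℝ}
    (hρ : 0 < ρ) :
    IntegrableOn (fun y => 1 / ‖y - x‖ ^ ((n : ℝ) + 2 * s))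
      {y : EuclideanSpace ℝ (Fin n) | ρ ≤ ‖y - x‖} := by
  have : Nonempty (Fin n) := ⟨⟨0, hn⟩⟩
  rw [← integrable_indicator_iff (measurableSet_le_norm_sub x ρ)]
  have key : Integrable (fun y : EuclideanSpace ℝ (Fin n) =>
      (Ici ρ).indicator (fun t : ℝ => 1 / t ^ ((n : ℝ) + 2 * s)) ‖y‖) := by
    rw [integrable_fun_norm_addHaar volume
      (f := (Ici ρ).indicator (fun t : ℝ => 1 / t ^ ((n : ℝ) + 2 * s)))]
    have h1 : IntegrableOn (fun t : ℝ => t ^ (-1 - 2 * s)) (Ici ρ) := by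
      rw [integrableOn_Ici_iff_integrableOn_Ioi]
      exact integrableOn_Ioi_rpow_of_lt (by linarith) hρ
    have h2 := (integrable_indicator_iff measurableSet_Ici).2 h1
    refine (h2.integrableOn (s := Ioi 0)).congr_fun (fun t ht => ?_) measurableSet_Ioi
    have ht : 0 < t := ht
    by_cases h : ρ ≤ t
    · simp only [indicator, mem_Ici, h, if_true, finrank_euclideanSpace_fin, smul_eq_mul]
      rw [← Real.rpow_natCast, one_div, ← Real.rpow_neg ht.le, ← Real.rpow_add ht,
        Nat.cast_sub hn]
      congr 1
      push_cast
      ring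
    · simp [indicator, h]
  refine (key.comp_sub_right x).congr (Eventually.of_forall fun y => ?_)
  simp [indicator]

theorem integrableOn_quotient (hn : 1 ≤ n) (hs : 0 < s) {u : EuclideanSpace ℝ (Fin n) → ℝ}
    (hu : Measurable u) {M : ℝ} (hM : ∀ y, |u y| ≤ M) (x : EuclideanSpace ℝ (Fin n)) {ρ : ℝ}
    (hρ : 0 < ρ) :
    IntegrableOn (fun y => (u x - u y) / ‖y - x‖ ^ ((n : ℝ) + 2 * s))
      {y : EuclideanSpace ℝ (Fin n) | ρ ≤ ‖y - x‖} := by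
  have h := (integrableOn_kernel hn hs x hρ).const_mul (2 * M)
  refine Integrable.mono' h
    (Measurable.div (by fun_prop) (by fun_prop)).aestronglyMeasurable
    (Eventually.of_forall fun y => ?_)
  rw [Real.norm_eq_abs, abs_div, abs_of_nonneg (by positivity : 0 ≤ ‖y - x‖ ^ ((n : ℝ) + 2 * s)),
    mul_one_div]
  gcongr
  have := abs_sub (u x) (u y)
  linarith [hM x, hM y]

/-- In a principal value integral, removing `{‖y - x‖ < ρ}` may be replaced by removing a set that
differs from it only in a shell of width `O(ρ²)`. -/
theorem tendsto_setIntegral_sub_setIntegral (hn : 1 ≤ n) (hs : s ∈ Ioo (0 : ℝ) 1)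
    {u : EuclideanSpace ℝ (Fin n) → ℝ} {x : EuclideanSpace ℝ (Fin n)} {M r : ℝ} (hr : 0 < r)
    (hLip : ∀ y, ‖y - x‖ ≤ r → |u x - u y| ≤ M * ‖y - x‖)
    (hquot : ∀ ρ : ℝ, 0 < ρ → IntegrableOn (fun y => (u x - u y) / ‖y - x‖ ^ ((n : ℝ) + 2 * s))
      {y : EuclideanSpace ℝ (Fin n) | ρ ≤ ‖y - x‖})
    {D : ℝ → Set (EuclideanSpace ℝ (Fin n))} (hD : ∀ ρ, MeasurableSet (D ρ)) {C : ℝ}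
    (hshell : ∀ᶠ ρ in nhdsWithin (0 : ℝ) (Ioi 0), ∀ y, ¬ (y ∈ D ρ ↔ ρ ≤ ‖y - x‖) →
      |‖y - x‖ - ρ| ≤ C * ρ ^ 2) :
    Tendsto (fun ρ : ℝ => (∫ y in D ρ, (u x - u y) / ‖y - x‖ ^ ((n : ℝ) + 2 * s)) -
      ∫ y in {y : EuclideanSpace ℝ (Fin n) | ρ ≤ ‖y - x‖},
        (u x - u y) / ‖y - x‖ ^ ((n : ℝ) + 2 * s)) (nhdsWithin 0 (Ioi 0)) (nhds 0) := by
  have : Nonempty (Fin n) := ⟨⟨0, hn⟩⟩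
  obtain ⟨hs0, hs1⟩ := hs
  set F := fun y => (u x - u y) / ‖y - x‖ ^ ((n : ℝ) + 2 * s) with hF
  set C' := max C 0 with hC'
  have hC'0 : 0 ≤ C' := le_max_right _ _
  have hM : 0 ≤ M := by
    obtain ⟨v, hv⟩ := exists_norm_eq (EuclideanSpace ℝ (Fin n)) hr.le
    have h := hLip (x + v) (by simp [hv])
    simp only [add_sub_cancel_left, hv] at h
    by_contra hneg
    have := abs_nonneg (u x - u (x + v))
    nlinarith
  set V := volume.real (ball (0 : EuclideanSpace ℝ (Fin n)) 1) with hV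
  have hV0 : 0 ≤ V := measureReal_nonneg
  set K := M * 2 * 2 ^ ((n : ℝ) + 2 * s) * (V * (2 * C' * n * 2 ^ (n - 1))) with hK
  have hsmall : ∀ᶠ ρ in nhdsWithin (0 : ℝ) (Ioi 0), C' * ρ ≤ 1 / 2 ∧ 2 * ρ ≤ r := by
    have h1 : Tendsto (fun ρ : ℝ => C' * ρ) (nhdsWithin 0 (Ioi 0)) (nhds 0) :=
      Tendsto.mono_left (by simpa using (continuous_const_mul C').tendsto 0) nhdsWithin_le_nhds
    have h2 : Tendsto (fun ρ : ℝ => 2 * ρ) (nhdsWithin 0 (Ioi 0)) (nhds 0) :=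
      Tendsto.mono_left (by simpa using (continuous_const_mul (2 : ℝ)).tendsto 0)
        nhdsWithin_le_nhds
    exact (h1.eventually_le_const (by norm_num)).and (h2.eventually_le_const hr)
  have hlim : Tendsto (fun ρ : ℝ => K * ρ ^ (2 - 2 * s)) (nhdsWithin 0 (Ioi 0)) (nhds 0) := by
    have h1 : Tendsto (fun ρ : ℝ => ρ ^ (2 - 2 * s)) (nhds 0) (nhds 0) := by
      have := (Real.continuousAt_rpow_const (0 : ℝ) (2 - 2 * s) (Or.inr (by linarith))).tendsto
      rwa [Real.zero_rpow (by linarith)] at this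
    simpa using (h1.mono_left nhdsWithin_le_nhds).const_mul K
  refine squeeze_zero_norm' ?_ hlim
  filter_upwards [hshell, hsmall, self_mem_nhdsWithin] with ρ hρs ⟨hρC, hρr⟩ hρ
  have hρ : 0 < ρ := hρ
  have hCC : C ≤ C' := le_max_left _ _
  have hlow : ∀ y, |‖y - x‖ - ρ| ≤ C * ρ ^ 2 → ρ - C' * ρ ^ 2 ≤ ‖y - x‖ ∧
      ‖y - x‖ ≤ ρ + C' * ρ ^ 2 := by
    intro y hy
    have := abs_le.1 (hy.trans (mul_le_mul_of_nonneg_right hCC (by positivity)))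
    constructor <;> linarith [this.1, this.2]
  have hw : C' * ρ ^ 2 ≤ ρ / 2 := by nlinarith
  have hDsub : D ρ ⊆ {y | ρ / 2 ≤ ‖y - x‖} := by
    intro y hy
    by_cases h : ρ ≤ ‖y - x‖
    · exact le_trans (by linarith) h
    · have := (hlow y (hρs y (by simp [hy, h]))).1
      exact le_trans (by linarith) this
  have hi1 : IntegrableOn F (D ρ) := (hquot (ρ / 2) (by positivity)).mono_set hDsub
  have hi2 := hquot ρ hρ
  rw [← integral_indicator (hD ρ), ← integral_indicator (measurableSet_le_norm_sub x ρ),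
    ← integral_sub ((integrable_indicator_iff (hD ρ)).2 hi1)
      ((integrable_indicator_iff (measurableSet_le_norm_sub x ρ)).2 hi2)]
  set S := closedBall x (ρ + C' * ρ ^ 2) \ ball x (ρ - C' * ρ ^ 2) with hS
  have hSm : MeasurableSet S := measurableSet_closedBall.diff measurableSet_ball
  set B := M * (2 * ρ) / (ρ / 2) ^ ((n : ℝ) + 2 * s) with hB
  have hB0 : 0 ≤ B := by positivity
  have hbound : ∀ y, ‖(D ρ).indicator F y - {y | ρ ≤ ‖y - x‖}.indicator F y‖ ≤
      S.indicator (fun _ => B) y := by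
    intro y
    by_cases hy : y ∈ D ρ ↔ ρ ≤ ‖y - x‖
    · have : (D ρ).indicator F y = {y | ρ ≤ ‖y - x‖}.indicator F y := by
        by_cases h : y ∈ D ρ
        · rw [indicator_of_mem h, indicator_of_mem (by exact hy.1 h)]
        · rw [indicator_of_notMem h, indicator_of_notMem (by exact fun h' => h (hy.2 h'))]
      rw [this, sub_self, norm_zero]
      exact indicator_nonneg (fun _ _ => hB0) y
    · obtain ⟨hl, hu'⟩ := hlow y (hρs y hy)
      have hyS : y ∈ S := by
        rw [hS]
        refine ⟨?_, ?_⟩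
        · rwa [mem_closedBall, dist_eq_norm]
        · rw [mem_ball, dist_eq_norm]
          exact not_lt.2 hl
      rw [indicator_of_mem hyS]
      have hFb : |F y| ≤ B := by
        simp only [hF, hB]
        rw [abs_div, abs_of_nonneg (by positivity : 0 ≤ ‖y - x‖ ^ ((n : ℝ) + 2 * s))]
        have hle : ‖y - x‖ ≤ 2 * ρ := by linarith
        refine div_le_div₀ (by positivity) ?_ (by positivity) ?_
        · exact (hLip y (hle.trans hρr)).trans (by gcongr)
        · exact Real.rpow_le_rpow (by positivity) (by linarith) (by positivity)
      by_cases h : y ∈ D ρ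
      · have h' : ¬ ρ ≤ ‖y - x‖ := fun h' => hy (by simp [h, h'])
        rw [indicator_of_mem h, indicator_of_notMem (by exact h'), sub_zero]
        exact hFb
      · have h' : ρ ≤ ‖y - x‖ := by
          by_contra h'
          exact hy (by simp [h, h'])
        rw [indicator_of_notMem h, indicator_of_mem (by exact h'), zero_sub, norm_neg]
        exact hFb
  have hSfin : volume S ≠ ⊤ :=
    ((measure_mono sdiff_subset).trans_lt measure_closedBall_lt_top).ne
  refine (norm_integral_le_of_norm_le ((integrable_indicator_iff hSm).2
    (integrableOn_const hSfin)) (Eventually.of_forall hbound)).trans ?_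
  rw [integral_indicator hSm, setIntegral_const, smul_eq_mul]
  have hvol : volume.real S ≤ V * (2 * C' * n * 2 ^ (n - 1)) * ρ ^ (n + 1) := by
    have hv1 : volume.real (closedBall x (ρ + C' * ρ ^ 2)) = (ρ + C' * ρ ^ 2) ^ n * V := by
      rw [measureReal_def, Measure.addHaar_closedBall _ _ (by positivity),
        finrank_euclideanSpace_fin, ENNReal.toReal_mul, ENNReal.toReal_ofReal (by positivity),
        ← measureReal_def]
    have hv2 : volume.real (ball x (ρ - C' * ρ ^ 2)) = (ρ - C' * ρ ^ 2) ^ n * V := by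
      rw [measureReal_def, Measure.addHaar_ball _ _ (by nlinarith),
        finrank_euclideanSpace_fin, ENNReal.toReal_mul,
        ENNReal.toReal_ofReal (pow_nonneg (by nlinarith) _), ← measureReal_def]
    rw [hS, measureReal_sdiff (by
      exact (ball_subset_closedBall).trans (closedBall_subset_closedBall (by nlinarith)))
      measurableSet_ball measure_closedBall_lt_top.ne, hv1, hv2, ← sub_mul]
    have h1 := abs_pow_sub_pow_le (ρ + C' * ρ ^ 2) (ρ - C' * ρ ^ 2) n
    have h2 : max |ρ + C' * ρ ^ 2| |ρ - C' * ρ ^ 2| ≤ 2 * ρ := by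
      refine max_le ?_ ?_ <;> rw [abs_le] <;> constructor <;> nlinarith
    have h3 : |ρ + C' * ρ ^ 2 - (ρ - C' * ρ ^ 2)| = 2 * C' * ρ ^ 2 := by
      rw [abs_of_nonneg] <;> nlinarith
    have h4 : (ρ + C' * ρ ^ 2) ^ n - (ρ - C' * ρ ^ 2) ^ n ≤
        2 * C' * ρ ^ 2 * n * (2 * ρ) ^ (n - 1) := by
      refine (le_abs_self _).trans (h1.trans ?_)
      rw [h3]
      gcongr
    refine (mul_le_mul_of_nonneg_right h4 hV0).trans (le_of_eq ?_)
    obtain ⟨m, rfl⟩ : ∃ m, n = m + 1 := ⟨n - 1, by omega⟩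
    rw [Nat.add_sub_cancel, mul_pow]
    ring
  refine (mul_le_mul_of_nonneg_right hvol hB0).trans (le_of_eq ?_)
  rw [hB, hK, Real.div_rpow hρ.le (by norm_num)]
  have e1 : ρ ^ (2 - 2 * s) = ρ ^ (n + 1) * ρ / ρ ^ ((n : ℝ) + 2 * s) := by
    rw [eq_div_iff (by positivity), ← Real.rpow_add hρ, ← pow_succ, ← Real.rpow_natCast]
    congr 1
    push_cast
    ring
  rw [e1]
  field_simp

end PrincipalValue

section Kelvin

open EuclideanGeometry

variable {n : ℕ} {s : ℝ}

theorem DifferentiableAt.exists_abs_sub_le {E : Type*} [NormedAddCommGroup E] [NormedSpace ℝ E]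
    {u : E → ℝ} {x : E} (hu : DifferentiableAt ℝ u x) :
    ∃ M r : ℝ, 0 < r ∧ ∀ y, ‖y - x‖ ≤ r → |u x - u y| ≤ M * ‖y - x‖ := by
  obtain ⟨M, hM⟩ := hu.isBigO_sub.bound
  obtain ⟨r, hr, h⟩ := Metric.eventually_nhds_iff_ball.1 hM
  refine ⟨M, r / 2, by positivity, fun y hy => ?_⟩
  have := h y (by rw [mem_ball, dist_eq_norm]; linarith)
  rwa [Real.norm_eq_abs, abs_sub_comm] at this

theorem abs_norm_sub_sub_le_of_shell {p x : EuclideanSpace ℝ (Fin n)} (hxp : x ≠ p) :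
    ∀ᶠ ρ in nhdsWithin (0 : ℝ) (Ioi 0), ∀ y : EuclideanSpace ℝ (Fin n),
      ¬ (y ∈ {z | ρ * ‖z - p‖ ≤ ‖x - p‖ * ‖z - x‖} ↔ ρ ≤ ‖y - x‖) →
      |‖y - x‖ - ρ| ≤ 2 / ‖x - p‖ * ρ ^ 2 := by
  have hd : 0 < ‖x - p‖ := norm_pos_iff.2 (sub_ne_zero.2 hxp)
  have h1 : ∀ᶠ ρ in nhdsWithin (0 : ℝ) (Ioi 0), ρ < ‖x - p‖ / 2 :=
    nhdsWithin_le_nhds (eventually_lt_nhds (by positivity))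
  filter_upwards [h1, self_mem_nhdsWithin] with ρ hρd hρ y hy
  have hρ : 0 < ρ := hρ
  set d := ‖x - p‖
  have ht : 0 ≤ ‖y - x‖ := norm_nonneg _
  have htri : |‖y - p‖ - d| ≤ ‖y - x‖ := by
    have := abs_norm_sub_norm_le (y - p) (x - p)
    rwa [sub_sub_sub_cancel_right] at this
  rw [abs_le] at htri
  rw [div_mul_eq_mul_div, le_div_iff₀ hd]
  change ¬ (ρ * ‖y - p‖ ≤ d * ‖y - x‖ ↔ ρ ≤ ‖y - x‖) at hy
  by_cases h : ρ ≤ ‖y - x‖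
  · have h' : d * ‖y - x‖ < ρ * ‖y - p‖ := by
      by_contra h'
      exact hy (by simp [h, not_lt.1 h'])
    rw [abs_of_nonneg (by linarith)]
    have h2 : ‖y - x‖ ≤ 2 * ρ := by nlinarith
    nlinarith
  · have h' : ρ * ‖y - p‖ ≤ d * ‖y - x‖ := by
      by_contra h'
      exact hy (by simp [h, h'])
    rw [abs_of_nonpos (by linarith)]
    nlinarith

theorem integrable_ball_norm_sub_rpow (hn : 1 ≤ n) {α : ℝ} (hα : -(n : ℝ) < α)
    (p : EuclideanSpace ℝ (Fin n)) (R : ℝ) :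
    IntegrableOn (fun y => ‖y - p‖ ^ α) (ball p R) := by
  have : Nonempty (Fin n) := ⟨⟨0, hn⟩⟩
  rw [← integrable_indicator_iff measurableSet_ball]
  have key : Integrable (fun y : EuclideanSpace ℝ (Fin n) =>
      (Iio R).indicator (fun t : ℝ => t ^ α) ‖y‖) := by
    rw [integrable_fun_norm_addHaar volume (f := (Iio R).indicator (fun t : ℝ => t ^ α))]
    have h1 : IntegrableOn (fun t : ℝ => t ^ ((n : ℝ) - 1 + α)) (Ioc 0 |R|) :=
      (intervalIntegrable_iff_integrableOn_Ioc_of_le (abs_nonneg R)).1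
        (intervalIntegral.intervalIntegrable_rpow' (by linarith))
    have h2 : IntegrableOn (fun t : ℝ => t ^ ((n : ℝ) - 1 + α)) (Ioi 0 ∩ Iio R) :=
      h1.mono_set fun t ht => ⟨ht.1, ht.2.le.trans (le_abs_self R)⟩
    have h3 : IntegrableOn ((Iio R).indicator fun t : ℝ => t ^ ((n : ℝ) - 1 + α)) (Ioi 0) := by
      rw [IntegrableOn, integrable_indicator_iff measurableSet_Iio, IntegrableOn,
        Measure.restrict_restrict measurableSet_Iio, inter_comm]
      exact h2
    refine h3.congr_fun (fun t ht => ?_) measurableSet_Ioi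
    have ht : 0 < t := ht
    by_cases h : t < R
    · simp only [indicator, mem_Iio, h, if_true, finrank_euclideanSpace_fin, smul_eq_mul]
      rw [← Real.rpow_natCast, ← Real.rpow_add ht, Nat.cast_sub hn, Nat.cast_one]
    · simp [indicator, h]
  refine (key.comp_sub_right p).congr (Eventually.of_forall fun y => ?_)
  simp [indicator, dist_eq_norm]

theorem integrableOn_riesz_mul_kernel (hn : 1 ≤ n) (hs : 0 < s) {p x : EuclideanSpace ℝ (Fin n)}
    (hxp : x ≠ p) {ρ : ℝ} (hρ : 0 < ρ) :
    IntegrableOn (fun y => ‖y - p‖ ^ (2 * s - n) / ‖y - x‖ ^ ((n : ℝ) + 2 * s))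
      {y : EuclideanSpace ℝ (Fin n) | ρ ≤ ‖y - x‖} := by
  have hd : 0 < ‖x - p‖ := norm_pos_iff.2 (sub_ne_zero.2 hxp)
  have hn0 : (0 : ℝ) < n := by exact_mod_cast hn
  set d := ‖x - p‖
  have hmeas : Measurable fun y : EuclideanSpace ℝ (Fin n) =>
      ‖y - p‖ ^ (2 * s - n) / ‖y - x‖ ^ ((n : ℝ) + 2 * s) :=
    Measurable.div (by fun_prop) (by fun_prop)
  have hnear : IntegrableOn (fun y => ‖y - p‖ ^ (2 * s - n) / ‖y - x‖ ^ ((n : ℝ) + 2 * s))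
      (ball p (d / 2)) := by
    have h := (integrable_ball_norm_sub_rpow hn (α := 2 * s - n) (by linarith) p (d / 2)).div_const
      ((d / 2) ^ ((n : ℝ) + 2 * s))
    refine Integrable.mono' h hmeas.aestronglyMeasurable
      ((ae_restrict_iff' measurableSet_ball).2 (Eventually.of_forall fun y hy => ?_))
    rw [Real.norm_of_nonneg (by positivity)]
    have hy' : ‖y - p‖ < d / 2 := by rwa [mem_ball, dist_eq_norm] at hy
    have h1 : d ≤ ‖y - x‖ + ‖y - p‖ := by
      have := norm_sub_le (y - p) (y - x)
      rw [sub_sub_sub_cancel_left] at this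
      linarith
    gcongr
    linarith
  have hfar : IntegrableOn (fun y => ‖y - p‖ ^ (2 * s - n) / ‖y - x‖ ^ ((n : ℝ) + 2 * s))
      ({y : EuclideanSpace ℝ (Fin n) | ρ ≤ ‖y - x‖} \ ball p (d / 2)) := by
    have h := IntegrableOn.mono_set (Integrable.const_mul
      (integrableOn_kernel hn (s := (n : ℝ) / 2) (by positivity) x hρ)
      (max ((1 + d / ρ) ^ (2 * s - n)) ((1 / 3) ^ (2 * s - n))))
      (sdiff_subset (t := ball p (d / 2)))
    refine Integrable.mono' h hmeas.aestronglyMeasurable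
      ((ae_restrict_iff' ((measurableSet_le_norm_sub x ρ).diff measurableSet_ball)).2
        (Eventually.of_forall fun y hy => ?_))
    rw [Real.norm_of_nonneg (by positivity)]
    have hy1 : ρ ≤ ‖y - x‖ := hy.1
    have hy2 : d / 2 ≤ ‖y - p‖ := by
      have := hy.2
      rwa [mem_ball, dist_eq_norm, not_lt] at this
    have hyx : 0 < ‖y - x‖ := hρ.trans_le hy1
    have hyp : 0 < ‖y - p‖ := lt_of_lt_of_le (by positivity) hy2
    have hle1 : ‖y - p‖ ≤ (1 + d / ρ) * ‖y - x‖ := by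
      have h1 : ‖y - p‖ ≤ ‖y - x‖ + d := by
        have := norm_add_le (y - x) (x - p)
        rwa [sub_add_sub_cancel] at this
      have h2 : d ≤ d / ρ * ‖y - x‖ := by
        rw [div_mul_eq_mul_div, le_div_iff₀ hρ]
        gcongr
      linarith
    have hle2 : 1 / 3 * ‖y - x‖ ≤ ‖y - p‖ := by
      have := norm_sub_le (y - p) (x - p)
      rw [sub_sub_sub_cancel_right] at this
      linarith
    have hpow : ‖y - p‖ ^ (2 * s - n) ≤
        max ((1 + d / ρ) ^ (2 * s - n)) ((1 / 3) ^ (2 * s - n)) * ‖y - x‖ ^ (2 * s - n) := by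
      rcases le_total 0 (2 * s - n) with h0 | h0
      · refine (Real.rpow_le_rpow hyp.le hle1 h0).trans ?_
        rw [Real.mul_rpow (by positivity) hyx.le]
        gcongr
        exact le_max_left _ _
      · refine (Real.rpow_le_rpow_of_nonpos (by positivity) hle2 h0).trans ?_
        rw [Real.mul_rpow (by positivity) hyx.le]
        gcongr
        exact le_max_right _ _
    rw [div_le_iff₀ (by positivity)]
    refine hpow.trans (le_of_eq ?_)
    rw [mul_assoc, one_div (‖y - x‖ ^ _), ← Real.rpow_neg hyx.le, ← Real.rpow_add hyx]
    congr 2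
    ring
  refine (hnear.union hfar).mono_set fun y hy => ?_
  by_cases h : y ∈ ball p (d / 2)
  · exact Or.inl h
  · exact Or.inr ⟨hy, h⟩

theorem setIntegral_comp_inversion (hn : 1 ≤ n) {p : EuclideanSpace ℝ (Fin n)} {a : ℝ}
    (ha : a ≠ 0) {f g : EuclideanSpace ℝ (Fin n) → ℝ} {D D' : Set (EuclideanSpace ℝ (Fin n))}
    (hD : MeasurableSet D) (hD' : MeasurableSet D')
    (hmem : ∀ z, z ≠ p → (inversion p a z ∈ D ↔ z ∈ D'))
    (hfg : ∀ z, z ≠ p → ((a / ‖z - p‖) ^ 2) ^ n * f (inversion p a z) = g z) :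
    ∫ y in D, f y = ∫ z in D', g z := by
  have : Nonempty (Fin n) := ⟨⟨0, hn⟩⟩
  rw [← integral_indicator hD, ← integral_indicator hD', integral_comp_inversion p hn ha]
  have hae : ∀ᵐ z : EuclideanSpace ℝ (Fin n), z ≠ p := Measure.ae_ne volume p
  refine integral_congr_ae (hae.mono fun z hz => ?_)
  by_cases h : z ∈ D'
  · simp only [indicator, (hmem z hz).2 h, h, if_true]
    exact hfg z hz
  · simp [indicator, mt (hmem z hz).1 h, h]

theorem measurable_inversion (p : EuclideanSpace ℝ (Fin n)) (a : ℝ) :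
    Measurable (inversion p a) := by
  unfold inversion
  simp only [vsub_eq_sub, vadd_eq_add]
  have h1 : Measurable fun x : EuclideanSpace ℝ (Fin n) => (a / dist x p) ^ 2 :=
    (measurable_const.div (by fun_prop)).pow_const 2
  have h2 : Measurable fun x : EuclideanSpace ℝ (Fin n) => x - p := by fun_prop
  exact (h1.smul h2).add_const p

theorem measurableSet_mul_norm_le (p x : EuclideanSpace ℝ (Fin n)) (ρ : ℝ) :
    MeasurableSet {z : EuclideanSpace ℝ (Fin n) | ρ * ‖z - p‖ ≤ ‖x - p‖ * ‖z - x‖} :=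
  measurableSet_le (by fun_prop) (by fun_prop)

theorem norm_inversion_sub_inversion {p x z : EuclideanSpace ℝ (Fin n)} (hx : x ≠ p) (hz : z ≠ p)
    (a : ℝ) :
    ‖inversion p a z - inversion p a x‖ = a ^ 2 / (‖z - p‖ * ‖x - p‖) * ‖z - x‖ := by
  simpa only [dist_eq_norm] using dist_inversion_inversion hz hx a

theorem norm_inversion_sub_center (p z : EuclideanSpace ℝ (Fin n)) (a : ℝ) :
    ‖inversion p a z - p‖ = a ^ 2 / ‖z - p‖ := by
  simpa only [dist_eq_norm] using dist_inversion_center p z a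

theorem differentiableAt_norm_sub_rpow {p x : EuclideanSpace ℝ (Fin n)} (hxp : x ≠ p) (α : ℝ) :
    DifferentiableAt ℝ (fun y => ‖y - p‖ ^ α) x := by
  have h0 : ‖x - p‖ ≠ 0 := norm_ne_zero_iff.2 (sub_ne_zero.2 hxp)
  have h1 : DifferentiableAt ℝ (fun y => ‖y - p‖) x :=
    (differentiableAt_id.sub_const p).norm ℝ (sub_ne_zero.2 hxp)
  exact h1.rpow_const (Or.inl h0)

theorem integrableOn_riesz_quotient (hn : 1 ≤ n) (hs : 0 < s) {p x : EuclideanSpace ℝ (Fin n)}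
    (hxp : x ≠ p) {ρ : ℝ} (hρ : 0 < ρ) :
    IntegrableOn (fun y => (‖x - p‖ ^ (2 * s - n) - ‖y - p‖ ^ (2 * s - n)) /
      ‖y - x‖ ^ ((n : ℝ) + 2 * s)) {y : EuclideanSpace ℝ (Fin n) | ρ ≤ ‖y - x‖} := by
  have h := Integrable.sub
    (Integrable.const_mul (integrableOn_kernel hn hs x hρ) (‖x - p‖ ^ (2 * s - n)))
    (integrableOn_riesz_mul_kernel hn hs hxp hρ)
  refine h.congr (Eventually.of_forall fun y => ?_)
  simp only [Pi.sub_apply]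
  ring

/-- The Riesz kernel `‖y - p‖ ^ (2 s - n)` is `s`-harmonic away from `p`. -/
theorem hasPrincipalValue_riesz (hn : 1 ≤ n) (hs : s ∈ Ioo (0 : ℝ) 1)
    {p x : EuclideanSpace ℝ (Fin n)} (hxp : x ≠ p) :
    HasPrincipalValue s (fun y => ‖y - p‖ ^ (2 * s - n)) x 0 := by
  have hd : 0 < ‖x - p‖ := norm_pos_iff.2 (sub_ne_zero.2 hxp)
  obtain ⟨M, r, hr, hLip⟩ := (differentiableAt_norm_sub_rpow hxp (2 * s - n)).exists_abs_sub_le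
  have hlim := tendsto_setIntegral_sub_setIntegral (s := s)
    (u := fun y => ‖y - p‖ ^ (2 * s - n)) hn hs hr hLip
    (fun ρ hρ => integrableOn_riesz_quotient hn hs.1 hxp hρ)
    (fun ρ => measurableSet_mul_norm_le p x ρ) (abs_norm_sub_sub_le_of_shell hxp)
  have hfix : inversion p ‖x - p‖ x = x := by
    rw [← dist_eq_norm]
    exact inversion_dist_center p x
  have hanti : ∀ ρ : ℝ, ∫ y in {y : EuclideanSpace ℝ (Fin n) | ρ ≤ ‖y - x‖},
      (‖x - p‖ ^ (2 * s - n) - ‖y - p‖ ^ (2 * s - n)) / ‖y - x‖ ^ ((n : ℝ) + 2 * s) =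
      -∫ y in {z | ρ * ‖z - p‖ ≤ ‖x - p‖ * ‖z - x‖},
      (‖x - p‖ ^ (2 * s - n) - ‖y - p‖ ^ (2 * s - n)) / ‖y - x‖ ^ ((n : ℝ) + 2 * s) := by
    intro ρ
    rw [← integral_neg]
    have hdist : ∀ z, z ≠ p → ‖inversion p ‖x - p‖ z - x‖ = ‖x - p‖ / ‖z - p‖ * ‖z - x‖ := by
      intro z hz
      have hr0 : ‖z - p‖ ≠ 0 := norm_ne_zero_iff.2 (sub_ne_zero.2 hz)
      have := norm_inversion_sub_inversion hxp hz ‖x - p‖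
      rw [hfix] at this
      rw [this]
      field_simp
    refine setIntegral_comp_inversion (p := p) hn hd.ne' (measurableSet_le_norm_sub x ρ)
      (measurableSet_mul_norm_le p x ρ) (fun z hz => ?_) (fun z hz => ?_)
    · have hr0 : 0 < ‖z - p‖ := norm_pos_iff.2 (sub_ne_zero.2 hz)
      change ρ ≤ ‖inversion p ‖x - p‖ z - x‖ ↔ ρ * ‖z - p‖ ≤ ‖x - p‖ * ‖z - x‖
      rw [hdist z hz, div_mul_eq_mul_div, le_div_iff₀ hr0]
    · have hr0 : 0 < ‖z - p‖ := norm_pos_iff.2 (sub_ne_zero.2 hz)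
      rw [hdist z hz, norm_inversion_sub_center, ← neg_div]
      set d := ‖x - p‖
      set r := ‖z - p‖
      rw [Real.mul_rpow (by positivity) (by positivity), ← div_div, ← mul_div_assoc]
      congr 1
      rw [Real.div_rpow hd.le hr0.le, Real.div_rpow (by positivity) hr0.le, ← Real.rpow_natCast d 2,
        ← Real.rpow_mul hd.le, ← pow_mul, ← Real.rpow_natCast, Real.div_rpow hd.le hr0.le]
      push_cast
      have e1 : d ^ ((2 : ℝ) * n) = d ^ ((n : ℝ) + 2 * s) / d ^ (2 * s - n) := by
        rw [← Real.rpow_sub hd]; congr 1; ring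
      have e2 : r ^ ((2 : ℝ) * n) = r ^ ((n : ℝ) + 2 * s) / r ^ (2 * s - n) := by
        rw [← Real.rpow_sub hr0]; congr 1; ring
      have e3 : d ^ (2 * (2 * s - n)) = d ^ (2 * s - n) * d ^ (2 * s - n) := by
        rw [← Real.rpow_add hd]; congr 1; ring
      rw [e1, e2, e3]
      field_simp
      ring
  have h2 := hlim.const_mul (-1 / 2)
  rw [mul_zero] at h2
  refine h2.congr fun ρ => ?_
  have := hanti ρ
  linarith

/-- Behavior of the principal value under the Kelvin transform. -/
theorem HasPrincipalValue.kelvin (hn : 1 ≤ n) (hs : s ∈ Ioo (0 : ℝ) 1)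
    {p x : EuclideanSpace ℝ (Fin n)} (hxp : x ≠ p) {a : ℝ} (ha : 0 < a)
    {u : EuclideanSpace ℝ (Fin n) → ℝ} (hum : Measurable u) {M : ℝ} (huM : ∀ y, |u y| ≤ M)
    (hud : DifferentiableAt ℝ u (inversion p a x)) {L : ℝ}
    (hu : HasPrincipalValue s u (inversion p a x) L) :
    HasPrincipalValue s (fun y => ‖y - p‖ ^ (2 * s - n) * u (inversion p a y)) x
      (a ^ (4 * s) * ‖x - p‖ ^ (-(n : ℝ) - 2 * s) * L) := by
  have hd : 0 < ‖x - p‖ := norm_pos_iff.2 (sub_ne_zero.2 hxp)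
  have hxp' : inversion p a x ≠ p := by
    rwa [Ne, inversion_eq_center ha.ne']
  have hinv : inversion p a (inversion p a x) = x := inversion_inversion p ha.ne' x
  have hd' : ‖inversion p a x - p‖ = a ^ 2 / ‖x - p‖ := norm_inversion_sub_center p x a
  have hd'0 : 0 < ‖inversion p a x - p‖ := norm_pos_iff.2 (sub_ne_zero.2 hxp')
  obtain ⟨M', r, hr, hLip⟩ := hud.exists_abs_sub_le
  have hlim := tendsto_setIntegral_sub_setIntegral (s := s) hn hs hr hLip
    (fun ρ hρ => integrableOn_quotient hn hs.1 hum huM _ hρ)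
    (fun ρ => measurableSet_mul_norm_le p (inversion p a x) ρ) (abs_norm_sub_sub_le_of_shell hxp')
  have hlim2 := hlim.add hu
  simp only [sub_add_cancel, zero_add] at hlim2
  have hk : Tendsto (fun ρ : ℝ => a ^ 2 / ‖x - p‖ ^ 2 * ρ) (nhdsWithin 0 (Ioi 0))
      (nhdsWithin 0 (Ioi 0)) := by
    refine tendsto_nhdsWithin_iff.2 ⟨?_, ?_⟩
    · exact Tendsto.mono_left (by
        simpa using (continuous_const_mul (a ^ 2 / ‖x - p‖ ^ 2)).tendsto 0) nhdsWithin_le_nhds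
    · filter_upwards [self_mem_nhdsWithin] with ρ hρ
      have hρ : 0 < ρ := hρ
      exact mul_pos (by positivity) hρ
  have hmain := ((hasPrincipalValue_riesz hn hs hxp).const_mul (u (inversion p a x))).add
    ((hlim2.comp hk).const_mul (a ^ (4 * s) * ‖x - p‖ ^ (-(n : ℝ) - 2 * s)))
  rw [mul_zero, zero_add] at hmain
  refine hmain.congr' ?_
  filter_upwards [self_mem_nhdsWithin] with ρ hρ
  have hρ : 0 < ρ := hρ
  have hcv : ∫ y in {y : EuclideanSpace ℝ (Fin n) | ρ ≤ ‖y - x‖},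
      ‖y - p‖ ^ (2 * s - n) * (u (inversion p a x) - u (inversion p a y)) /
        ‖y - x‖ ^ ((n : ℝ) + 2 * s) =
      ∫ z in {z | a ^ 2 / ‖x - p‖ ^ 2 * ρ * ‖z - p‖ ≤
          ‖inversion p a x - p‖ * ‖z - inversion p a x‖},
        a ^ (4 * s) * ‖x - p‖ ^ (-(n : ℝ) - 2 * s) * ((u (inversion p a x) - u z) /
          ‖z - inversion p a x‖ ^ ((n : ℝ) + 2 * s)) := by
    have hdist : ∀ z, z ≠ p → ‖inversion p a z - x‖ =
        ‖x - p‖ / ‖z - p‖ * ‖z - inversion p a x‖ := by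
      intro z hz
      have hr0 : ‖z - p‖ ≠ 0 := norm_ne_zero_iff.2 (sub_ne_zero.2 hz)
      have := norm_inversion_sub_inversion hxp' hz a
      rw [hinv] at this
      rw [this, hd']
      field_simp
    refine setIntegral_comp_inversion (p := p) hn ha.ne' (measurableSet_le_norm_sub x ρ)
      (measurableSet_mul_norm_le p _ _) (fun z hz => ?_) (fun z hz => ?_)
    · have hr0 : 0 < ‖z - p‖ := norm_pos_iff.2 (sub_ne_zero.2 hz)
      change ρ ≤ ‖inversion p a z - x‖ ↔ a ^ 2 / ‖x - p‖ ^ 2 * ρ * ‖z - p‖ ≤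
          ‖inversion p a x - p‖ * ‖z - inversion p a x‖
      rw [hdist z hz, div_mul_eq_mul_div, le_div_iff₀ hr0, hd']
      have : a ^ 2 / ‖x - p‖ * ‖z - inversion p a x‖ =
        a ^ 2 / ‖x - p‖ ^ 2 * (‖x - p‖ * ‖z - inversion p a x‖) := by field_simp
      rw [this, mul_assoc]
      exact (mul_le_mul_iff_right₀ (by positivity)).symm
    · have hr0 : 0 < ‖z - p‖ := norm_pos_iff.2 (sub_ne_zero.2 hz)
      rw [hdist z hz, norm_inversion_sub_center, inversion_inversion p ha.ne']
      set d := ‖x - p‖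
      set r := ‖z - p‖
      rw [Real.mul_rpow (by positivity) (by positivity), ← div_div, ← mul_div_assoc,
        ← mul_div_assoc]
      rw [Real.div_rpow hd.le hr0.le, Real.div_rpow (by positivity) hr0.le, ← Real.rpow_natCast a 2,
        ← Real.rpow_mul ha.le, ← pow_mul, ← Real.rpow_natCast, Real.div_rpow ha.le hr0.le]
      push_cast
      have e1 : d ^ (-(n : ℝ) - 2 * s) = (d ^ ((n : ℝ) + 2 * s))⁻¹ := by
        rw [← Real.rpow_neg hd.le]; congr 1; ring
      have e2 : r ^ ((2 : ℝ) * n) = r ^ ((n : ℝ) + 2 * s) / r ^ (2 * s - n) := by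
        rw [← Real.rpow_sub hr0]; congr 1; ring
      have e3 : a ^ (4 * s) = a ^ ((2 : ℝ) * n) * a ^ (2 * (2 * s - n)) := by
        rw [← Real.rpow_add ha]; congr 1; ring
      rw [e1, e2, e3]
      field_simp
  have hint2 : IntegrableOn (fun y => ‖y - p‖ ^ (2 * s - n) *
      (u (inversion p a x) - u (inversion p a y)) / ‖y - x‖ ^ ((n : ℝ) + 2 * s))
      {y : EuclideanSpace ℝ (Fin n) | ρ ≤ ‖y - x‖} := by
    refine Integrable.mono' (Integrable.const_mul
      (integrableOn_riesz_mul_kernel hn hs.1 hxp hρ) (2 * M)) (Measurable.aestronglyMeasurable ?_)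
      (Eventually.of_forall fun y => ?_)
    · have := hum.comp (measurable_inversion p a)
      exact Measurable.div (Measurable.mul (by fun_prop) (measurable_const.sub this)) (by fun_prop)
    · rw [Real.norm_eq_abs, abs_div, abs_mul,
        abs_of_nonneg (by positivity : 0 ≤ ‖y - x‖ ^ ((n : ℝ) + 2 * s)),
        abs_of_nonneg (by positivity : 0 ≤ ‖y - p‖ ^ (2 * s - n)), mul_comm, ← mul_div_assoc]
      gcongr
      have := abs_sub (u (inversion p a x)) (u (inversion p a y))
      linarith [huM (inversion p a x), huM (inversion p a y)]
  simp only [Function.comp_apply]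
  rw [← integral_const_mul, ← integral_const_mul, ← hcv, ← integral_add
    (Integrable.const_mul (integrableOn_riesz_quotient hn hs.1 hxp hρ) _) hint2]
  congr 1
  ext y
  ring

end Kelvin

section Radial

variable {s γ b : ℝ}

theorem sqrt_add_pos (hγ : 0 < γ) (b : ℝ) {v : ℝ} (hv : 0 ≤ v) :
    0 < √(γ * (1 + v) + b ^ 2) + b := by
  have h : |b| < √(γ * (1 + v) + b ^ 2) := by
    rw [← Real.sqrt_sq_eq_abs]
    exact Real.sqrt_lt_sqrt (sq_nonneg b) (by nlinarith)
  linarith [neg_abs_le b]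

theorem le_iff_root_le (hγ : 0 < γ) (b : ℝ) {v t : ℝ} (hv : 0 ≤ v) (ht : 0 < t) :
    γ - 2 * b * t - t ^ 2 ≤ v * t ^ 2 ↔ γ / (√(γ * (1 + v) + b ^ 2) + b) ≤ t := by
  have h1 := sqrt_add_pos hγ b hv
  have h2 := sqrt_add_pos hγ (-b) hv
  rw [neg_sq] at h2
  have h3 : √(γ * (1 + v) + b ^ 2) ^ 2 = γ * (1 + v) + b ^ 2 :=
    Real.sq_sqrt (by positivity)
  rw [div_le_iff₀ h1]
  set N := √(γ * (1 + v) + b ^ 2)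
  have h4 : 0 < (N + -b) * t + γ := by positivity
  have h5 : γ * (v * t ^ 2 - (γ - 2 * b * t - t ^ 2)) =
      (t * (N + b) - γ) * ((N + -b) * t + γ) := by
    linear_combination -t ^ 2 * h3
  constructor
  · intro h
    by_contra hc
    have : (t * (N + b) - γ) * ((N + -b) * t + γ) < 0 :=
      mul_neg_of_neg_of_pos (by linarith) h4
    nlinarith
  · intro h
    have : 0 ≤ (t * (N + b) - γ) * ((N + -b) * t + γ) :=
      mul_nonneg (by linarith) h4.le
    nlinarith

theorem root_eq (hγ : 0 < γ) (b : ℝ) {v : ℝ} (hv : 0 ≤ v) :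
    γ - 2 * b * (γ / (√(γ * (1 + v) + b ^ 2) + b)) - (γ / (√(γ * (1 + v) + b ^ 2) + b)) ^ 2 =
      v * (γ / (√(γ * (1 + v) + b ^ 2) + b)) ^ 2 := by
  have h1 := sqrt_add_pos hγ b hv
  have h3 : √(γ * (1 + v) + b ^ 2) ^ 2 = γ * (1 + v) + b ^ 2 :=
    Real.sq_sqrt (by positivity)
  set N := √(γ * (1 + v) + b ^ 2)
  field_simp
  linear_combination h3

theorem continuousOn_radial (hs : 0 < s) (γ b : ℝ) :
    ContinuousOn (fun t : ℝ => max (γ - 2 * b * t - t ^ 2) 0 ^ s * t ^ (-1 - 2 * s)) (Ioi 0) := by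
  refine ContinuousOn.mul (Continuous.continuousOn ?_) ?_
  · exact Continuous.rpow_const (by fun_prop) fun _ => Or.inr hs.le
  · exact continuousOn_id.rpow_const fun t ht => Or.inl (ne_of_gt ht)

theorem intervalIntegral_radial (hs : 0 < s) (hγ : 0 < γ) (b : ℝ) {Y : ℝ} (hY : 0 ≤ Y) :
    ∫ t in (γ / (√(γ * (1 + Y) + b ^ 2) + b))..(γ / (√(γ * (1 + 0) + b ^ 2) + b)),
      max (γ - 2 * b * t - t ^ 2) 0 ^ s * t ^ (-1 - 2 * s) =
    ∫ v in (0 : ℝ)..Y, v ^ s * (γ / (2 * √(γ * (1 + v) + b ^ 2) *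
      (√(γ * (1 + v) + b ^ 2) + b))) := by
  set τ : ℝ → ℝ := fun v => γ / (√(γ * (1 + v) + b ^ 2) + b) with hτ
  set τ' : ℝ → ℝ := fun v => -(γ * (γ / (2 * √(γ * (1 + v) + b ^ 2)))) /
    (√(γ * (1 + v) + b ^ 2) + b) ^ 2 with hτ'
  have huI : uIcc 0 Y = Icc 0 Y := uIcc_of_le hY
  have hpos : ∀ v ∈ Icc 0 Y, 0 < √(γ * (1 + v) + b ^ 2) + b := fun v hv => sqrt_add_pos hγ b hv.1
  have hNpos : ∀ v ∈ Icc 0 Y, 0 < γ * (1 + v) + b ^ 2 := fun v hv => by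
    have := hv.1
    positivity
  have hderiv : ∀ v ∈ Icc 0 Y, HasDerivAt τ (τ' v) v := by
    intro v hv
    have h1 : HasDerivAt (fun v => γ * (1 + v) + b ^ 2) γ v := by
      simpa using (((hasDerivAt_id v).const_add 1).const_mul γ).add_const (b ^ 2)
    have h2 := (h1.sqrt (hNpos v hv).ne').add_const b
    have h3 := (hasDerivAt_const v γ).div h2 (hpos v hv).ne'
    rw [zero_mul, zero_sub] at h3
    exact h3
  have hNc : Continuous fun v : ℝ => √(γ * (1 + v) + b ^ 2) := by fun_prop
  have hτ'c : ContinuousOn τ' (Icc 0 Y) := by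
    refine ContinuousOn.div (ContinuousOn.neg (ContinuousOn.mul continuousOn_const
      (ContinuousOn.div continuousOn_const (by fun_prop) ?_))) (by fun_prop) ?_
    · intro v hv
      have := Real.sqrt_pos.2 (hNpos v hv)
      positivity
    · intro v hv
      have := hpos v hv
      positivity
  have hcv := intervalIntegral.integral_comp_mul_deriv'' (a := 0) (b := Y) (f := τ) (f' := τ')
    (g := fun t : ℝ => max (γ - 2 * b * t - t ^ 2) 0 ^ s * t ^ (-1 - 2 * s))
    (by rw [huI]; exact fun v hv => (hderiv v hv).continuousAt.continuousWithinAt)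
    (fun v hv => (hderiv v (by
      rw [min_eq_left hY, max_eq_right hY] at hv; exact ⟨hv.1.le, hv.2.le⟩)).hasDerivWithinAt)
    (by rwa [huI])
    ((continuousOn_radial hs γ b).mono (by
      rw [huI]
      rintro _ ⟨v, hv, rfl⟩
      exact div_pos hγ (hpos v hv)))
  rw [intervalIntegral.integral_symm, ← hcv, ← intervalIntegral.integral_neg]
  refine intervalIntegral.integral_congr fun v hv => ?_
  rw [huI] at hv
  have hroot := root_eq hγ b hv.1
  have hτpos : 0 < τ v := div_pos hγ (hpos v hv)
  have hN := Real.sqrt_pos.2 (hNpos v hv)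
  have hp := hpos v hv
  have e1 : max (γ - 2 * b * τ v - τ v ^ 2) 0 ^ s * τ v ^ (-1 - 2 * s) = v ^ s / τ v := by
    have hr : γ - 2 * b * τ v - τ v ^ 2 = v * τ v ^ 2 := hroot
    rw [hr, max_eq_left (mul_nonneg hv.1 (by positivity)), Real.mul_rpow hv.1 (by positivity),
      ← Real.rpow_natCast (τ v) 2, ← Real.rpow_mul hτpos.le, mul_assoc, ← Real.rpow_add hτpos,
      show ((2 : ℕ) : ℝ) * s + (-1 - 2 * s) = -1 by push_cast; ring, Real.rpow_neg_one]
    rfl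
  simp only [Function.comp_apply]
  rw [e1]
  simp only [hτ, hτ']
  field_simp

theorem integrableOn_radial (hs : 0 < s) (hγ : 0 < γ) (b : ℝ) {Y : ℝ} (hY : 0 ≤ Y) :
    IntegrableOn (fun t : ℝ => max (γ - 2 * b * t - t ^ 2) 0 ^ s * t ^ (-1 - 2 * s))
      (Ioi (γ / (√(γ * (1 + Y) + b ^ 2) + b))) ∧
    ∫ t in Ioi (γ / (√(γ * (1 + Y) + b ^ 2) + b)),
      max (γ - 2 * b * t - t ^ 2) 0 ^ s * t ^ (-1 - 2 * s) =
    ∫ v in (0 : ℝ)..Y, v ^ s * (γ / (2 * √(γ * (1 + v) + b ^ 2) *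
      (√(γ * (1 + v) + b ^ 2) + b))) := by
  rw [← intervalIntegral_radial hs hγ b hY]
  have hp0 := sqrt_add_pos hγ b le_rfl
  have hle : γ / (√(γ * (1 + Y) + b ^ 2) + b) ≤ γ / (√(γ * (1 + 0) + b ^ 2) + b) := by
    gcongr
  have hτ : 0 < γ / (√(γ * (1 + Y) + b ^ 2) + b) := div_pos hγ (sqrt_add_pos hγ b hY)
  have hzero : ∀ t ∈ Ioi (γ / (√(γ * (1 + Y) + b ^ 2) + b)) \
      Ioc (γ / (√(γ * (1 + Y) + b ^ 2) + b)) (γ / (√(γ * (1 + 0) + b ^ 2) + b)),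
      max (γ - 2 * b * t - t ^ 2) 0 ^ s * t ^ (-1 - 2 * s) = 0 := by
    rintro t ⟨ht1, ht2⟩
    have ht : γ / (√(γ * (1 + 0) + b ^ 2) + b) ≤ t := by
      by_contra h
      exact ht2 ⟨ht1, (not_le.1 h).le⟩
    have := (le_iff_root_le hγ b le_rfl (hτ.trans ht1)).2 ht
    rw [zero_mul] at this
    rw [max_eq_right this, Real.zero_rpow hs.ne', zero_mul]
  have hi : IntegrableOn (fun t : ℝ => max (γ - 2 * b * t - t ^ 2) 0 ^ s * t ^ (-1 - 2 * s))
      (Ioc (γ / (√(γ * (1 + Y) + b ^ 2) + b)) (γ / (√(γ * (1 + 0) + b ^ 2) + b))) := by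
    refine IntegrableOn.mono_set (ContinuousOn.integrableOn_Icc
      ((continuousOn_radial hs γ b).mono fun t ht => hτ.trans_le ht.1)) Ioc_subset_Icc_self
  constructor
  · exact hi.of_forall_sdiff_eq_zero measurableSet_Ioi hzero
  · rw [intervalIntegral.integral_of_le hle]
    exact (setIntegral_eq_of_subset_of_forall_sdiff_eq_zero measurableSet_Ioi
      (fun t ht => ht.1) hzero)

theorem integral_radial (hs : 0 < s) (hγ : 0 < γ) (b : ℝ) {Y : ℝ} (hY : 0 ≤ Y) :
    IntegrableOn (fun t : ℝ => (γ ^ s - max (γ - 2 * b * t - t ^ 2) 0 ^ s) * t ^ (-1 - 2 * s))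
      (Ioi (γ / (√(γ * (1 + Y) + b ^ 2) + b))) ∧
    ∫ t in Ioi (γ / (√(γ * (1 + Y) + b ^ 2) + b)),
      (γ ^ s - max (γ - 2 * b * t - t ^ 2) 0 ^ s) * t ^ (-1 - 2 * s) =
    ((√(γ * (1 + Y) + b ^ 2) + b) ^ 2 / γ) ^ s / (2 * s) -
    ∫ v in (0 : ℝ)..Y, v ^ s * (γ / (2 * √(γ * (1 + v) + b ^ 2) *
      (√(γ * (1 + v) + b ^ 2) + b))) := by
  obtain ⟨h1, h2⟩ := integrableOn_radial hs hγ b hY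
  have hp := sqrt_add_pos hγ b hY
  have hτ : 0 < γ / (√(γ * (1 + Y) + b ^ 2) + b) := div_pos hγ hp
  have h3 := (integrableOn_Ioi_rpow_of_lt (a := -1 - 2 * s) (by linarith) hτ).const_mul (γ ^ s)
  simp only [sub_mul]
  refine ⟨h3.sub h1, ?_⟩
  rw [integral_sub h3 h1, h2, integral_const_mul,
    integral_Ioi_rpow_of_lt (a := -1 - 2 * s) (by linarith) hτ]
  congr 1
  rw [show -1 - 2 * s + 1 = -(2 * s) by ring, Real.rpow_neg hτ.le, Real.rpow_mul hτ.le,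
    Real.div_rpow (by positivity) hγ.le, Real.rpow_two, div_pow, Real.div_rpow (by positivity)
    (by positivity), sq γ, Real.mul_rpow hγ.le hγ.le]
  field_simp

theorem intervalIntegral_radial_add (hs : 0 < s) (hγ : 0 < γ) (b : ℝ) {Y : ℝ} (hY : 0 ≤ Y) :
    (∫ v in (0 : ℝ)..Y, v ^ s * (γ / (2 * √(γ * (1 + v) + b ^ 2) *
      (√(γ * (1 + v) + b ^ 2) + b)))) +
    (∫ v in (0 : ℝ)..Y, v ^ s * (γ / (2 * √(γ * (1 + v) + (-b) ^ 2) *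
      (√(γ * (1 + v) + (-b) ^ 2) + -b)))) = ∫ v in (0 : ℝ)..Y, v ^ s / (1 + v) := by
  have huI : uIcc 0 Y = Icc 0 Y := uIcc_of_le hY
  have hquot : ∀ b : ℝ, IntervalIntegrable (fun v => v ^ s * (γ / (2 * √(γ * (1 + v) + b ^ 2) *
      (√(γ * (1 + v) + b ^ 2) + b)))) volume 0 Y := by
    intro b
    refine ContinuousOn.intervalIntegrable ?_
    rw [huI]
    refine ContinuousOn.mul ?_ (ContinuousOn.div continuousOn_const (by fun_prop) fun v hv => ?_)
    · exact (continuous_id.rpow_const fun _ => Or.inr hs.le).continuousOn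
    · have h1 := sqrt_add_pos hγ b hv.1
      have h0 := hv.1
      have h2 : 0 < √(γ * (1 + v) + b ^ 2) := Real.sqrt_pos.2 (by positivity)
      positivity
  rw [← intervalIntegral.integral_add (hquot b) (hquot (-b))]
  refine intervalIntegral.integral_congr fun v hv => ?_
  rw [huI] at hv
  have h1 := sqrt_add_pos hγ b hv.1
  have h1' := sqrt_add_pos hγ (-b) hv.1
  have h0 := hv.1
  have h2 : 0 < √(γ * (1 + v) + b ^ 2) := Real.sqrt_pos.2 (by positivity)
  have h3 : √(γ * (1 + v) + b ^ 2) ^ 2 = γ * (1 + v) + b ^ 2 :=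
    Real.sq_sqrt (by positivity)
  rw [neg_sq] at h1'
  simp only [neg_sq]
  set N := √(γ * (1 + v) + b ^ 2)
  have h4 : 0 < 1 + v := by linarith
  field_simp
  linear_combination (-2 : ℝ) * v ^ s * N * h3

end Radial

section Asymptotics

variable {s γ b : ℝ}

theorem integrableOn_rpow_div_one_add (hs : s ∈ Ioo (0 : ℝ) 1) :
    IntegrableOn (fun v : ℝ => v ^ (s - 1) / (1 + v)) (Ioi 0) := by
  have hm : Measurable fun v : ℝ => v ^ (s - 1) / (1 + v) :=
    Measurable.div (by fun_prop) (by fun_prop)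
  rw [← Ioc_union_Ioi_eq_Ioi (zero_le_one (α := ℝ))]
  refine IntegrableOn.union ?_ ?_
  · have h1 : IntegrableOn (fun v : ℝ => v ^ (s - 1)) (Ioc 0 1) :=
      (intervalIntegrable_iff_integrableOn_Ioc_of_le zero_le_one).1
        (intervalIntegral.intervalIntegrable_rpow' (by linarith [hs.1]))
    refine Integrable.mono' h1 hm.aestronglyMeasurable
      ((ae_restrict_iff' measurableSet_Ioc).2 (Eventually.of_forall fun v hv => ?_))
    have hv0 := hv.1
    rw [Real.norm_of_nonneg (by positivity)]
    exact div_le_self (by positivity) (by linarith)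
  · have h1 : IntegrableOn (fun v : ℝ => v ^ (s - 2)) (Ioi 1) :=
      integrableOn_Ioi_rpow_of_lt (by linarith [hs.2]) one_pos
    refine Integrable.mono' h1 hm.aestronglyMeasurable
      ((ae_restrict_iff' measurableSet_Ioi).2 (Eventually.of_forall fun v hv => ?_))
    have hv0 : 0 < v := one_pos.trans hv
    rw [Real.norm_of_nonneg (by positivity), show s - 2 = s - 1 - 1 by ring,
      Real.rpow_sub_one hv0.ne' (s - 1)]
    gcongr
    linarith

theorem integral_rpow_div_one_add (hs : s ∈ Ioo (0 : ℝ) 1) :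
    ∫ v in Ioi (0 : ℝ), v ^ (s - 1) / (1 + v) = Real.Gamma s * Real.Gamma (1 - s) := by
  have hinner : ∀ v ∈ Ioi (0 : ℝ), IntegrableOn
      (fun u : ℝ => v ^ (s - 1) * Real.exp (-((1 + v) * u))) (Ioi 0) ∧
      ∫ u in Ioi (0 : ℝ), v ^ (s - 1) * Real.exp (-((1 + v) * u)) = v ^ (s - 1) / (1 + v) := by
    intro v hv
    have hv : 0 < v := hv
    have h1 := integrableOn_exp_mul_Ioi (a := -(1 + v)) (by linarith) 0
    have h2 := integral_exp_mul_Ioi (a := -(1 + v)) (by linarith) 0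
    simp only [neg_mul] at h1 h2
    refine ⟨h1.const_mul _, ?_⟩
    rw [integral_const_mul, h2, neg_div_neg_eq, mul_zero, neg_zero, Real.exp_zero, mul_one_div]
  have hquot : Integrable (fun q : ℝ × ℝ => q.1 ^ (s - 1) * Real.exp (-((1 + q.1) * q.2)))
      ((volume.restrict (Ioi 0)).prod (volume.restrict (Ioi 0))) := by
    rw [integrable_prod_iff (Measurable.aestronglyMeasurable (by fun_prop))]
    constructor
    · exact (ae_restrict_iff' measurableSet_Ioi).2
        (Eventually.of_forall fun v hv => (hinner v hv).1)
    · refine (integrableOn_rpow_div_one_add hs).congr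
        ((ae_restrict_iff' measurableSet_Ioi).2 (Eventually.of_forall fun v hv => ?_))
      have hv0 : 0 < v := hv
      simp only
      rw [← (hinner v hv).2]
      congr 1
      ext u
      rw [Real.norm_of_nonneg (by positivity)]
  have hswap := integral_integral_swap
    (f := fun v u : ℝ => v ^ (s - 1) * Real.exp (-((1 + v) * u))) hquot
  rw [setIntegral_congr_fun measurableSet_Ioi fun v hv => (hinner v hv).2] at hswap
  rw [hswap]
  have hu : ∀ u ∈ Ioi (0 : ℝ), ∫ v in Ioi (0 : ℝ), v ^ (s - 1) * Real.exp (-((1 + v) * u)) =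
      Real.Gamma s * (Real.exp (-u) * u ^ (1 - s - 1)) := by
    intro u hu
    have hu0 : 0 < u := hu
    have h := Real.integral_rpow_mul_exp_neg_mul_Ioi hs.1 hu0
    have e : ∀ v : ℝ, v ^ (s - 1) * Real.exp (-((1 + v) * u)) =
        Real.exp (-u) * (v ^ (s - 1) * Real.exp (-(u * v))) := by
      intro v
      rw [mul_left_comm, ← Real.exp_add]
      ring_nf
    simp_rw [e]
    rw [integral_const_mul, h, one_div, Real.inv_rpow hu0.le, ← Real.rpow_neg hu0.le,
      show 1 - s - 1 = -s by ring]
    ring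
  rw [setIntegral_congr_fun measurableSet_Ioi hu, integral_const_mul,
    ← Real.Gamma_eq_integral (by linarith [hs.2])]

theorem rpow_div_sub_integral (hs : s ∈ Ioo (0 : ℝ) 1) {Y : ℝ} (hY : 0 ≤ Y) :
    Y ^ s / s - ∫ v in (0 : ℝ)..Y, v ^ s / (1 + v) =
      ∫ v in (0 : ℝ)..Y, v ^ (s - 1) / (1 + v) := by
  have h1 : ∫ v in (0 : ℝ)..Y, v ^ (s - 1) = Y ^ s / s := by
    rw [integral_rpow (Or.inl (by linarith [hs.1]))]
    simp [Real.zero_rpow hs.1.ne']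
  have hi : IntervalIntegrable (fun v : ℝ => v ^ s / (1 + v)) volume 0 Y := by
    refine ContinuousOn.intervalIntegrable ?_
    rw [uIcc_of_le hY]
    refine ContinuousOn.div ?_ (by fun_prop) fun v hv => by linarith [hv.1]
    exact (continuous_id.rpow_const fun _ => Or.inr hs.1.le).continuousOn
  rw [← h1, ← intervalIntegral.integral_sub
    (intervalIntegral.intervalIntegrable_rpow' (by linarith [hs.1])) hi,
    intervalIntegral.integral_of_le hY, intervalIntegral.integral_of_le hY]
  refine setIntegral_congr_fun measurableSet_Ioc fun v hv => ?_
  have hv0 := hv.1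
  have : v ^ s = v ^ (s - 1) * v := by
    rw [Real.rpow_sub_one hv0.ne']
    field_simp
  rw [this]
  field_simp
  ring

theorem tendsto_rpow_div_sub_integral (hs : s ∈ Ioo (0 : ℝ) 1) :
    Tendsto (fun Y : ℝ => Y ^ s / s - ∫ v in (0 : ℝ)..Y, v ^ s / (1 + v)) atTop
      (nhds (Real.Gamma s * Real.Gamma (1 - s))) := by
  rw [← integral_rpow_div_one_add hs]
  refine (intervalIntegral_tendsto_integral_Ioi 0 (integrableOn_rpow_div_one_add hs)
    tendsto_id).congr' ?_
  filter_upwards [eventually_ge_atTop 0] with Y hY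
  exact (rpow_div_sub_integral hs hY).symm

theorem abs_rpow_sub_le (hs : s ∈ Ioo (0 : ℝ) 1) {y : ℝ} (hy : 0 ≤ y) :
    |y ^ s - (1 + s * (y - 1))| ≤ (y - 1) ^ 2 := by
  obtain ⟨hs0, hs1⟩ := hs
  have h1 : y ^ s ≤ 1 + s * (y - 1) := by
    have := rpow_one_add_le_one_add_mul_self (s := y - 1) (by linarith) hs0.le hs1.le
    rwa [add_sub_cancel] at this
  have h2 : y * (1 - (1 - s) * (y - 1)) ≤ y ^ s := by
    rcases hy.eq_or_lt with rfl | hy0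
    · simp [Real.zero_rpow hs0.ne']
    · have h := rpow_one_add_le_one_add_mul_self (s := y - 1) (p := 1 - s) (by linarith)
        (by linarith) (by linarith)
      rw [add_sub_cancel] at h
      have hD : 0 < 1 + (1 - s) * (y - 1) := by nlinarith
      have h3 : y / (1 + (1 - s) * (y - 1)) ≤ y ^ s := by
        have : y ^ s = y / y ^ (1 - s) := by
          rw [eq_div_iff (by positivity), ← Real.rpow_add hy0]
          simp
        rw [this]
        gcongr
      refine le_trans ?_ h3
      rw [le_div_iff₀ hD]
      have : 0 ≤ y * ((1 - s) * (y - 1)) ^ 2 := by positivity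
      nlinarith
  rw [abs_le]
  constructor <;> nlinarith [sq_nonneg (y - 1), mul_nonneg hs0.le (sq_nonneg (y - 1))]

theorem abs_sum_rpow_sub_le (hs : s ∈ Ioo (0 : ℝ) 1) (hγ : 0 < γ) (hγ1 : γ ≤ 1) (hb : |b| ≤ 1)
    {Y : ℝ} (hY : 1 ≤ Y) :
    |((√(γ * (1 + Y) + b ^ 2) + b) ^ 2 / γ) ^ s + ((√(γ * (1 + Y) + b ^ 2) + -b) ^ 2 / γ) ^ s -
      2 * Y ^ s| ≤ 104 / γ ^ 2 * Y ^ (s - 1) := by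
  have hY0 : 0 < Y := by linarith
  have h3 : √(γ * (1 + Y) + b ^ 2) ^ 2 = γ * (1 + Y) + b ^ 2 := Real.sq_sqrt (by positivity)
  have hN0 : 0 ≤ √(γ * (1 + Y) + b ^ 2) := Real.sqrt_nonneg _
  set N := √(γ * (1 + Y) + b ^ 2)
  have hb2 : b ^ 2 ≤ 1 := by
    rw [← sq_abs]
    nlinarith [abs_nonneg b]
  have hscale : ∀ c : ℝ, ((N + c) ^ 2 / γ) ^ s = Y ^ s * ((N + c) ^ 2 / (γ * Y)) ^ s := by
    intro c
    rw [← Real.mul_rpow hY0.le (by positivity)]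
    congr 1
    field_simp
  have hsq : ∀ c : ℝ, c ^ 2 = b ^ 2 → ((N + c) ^ 2 / (γ * Y) - 1) ^ 2 ≤ 49 / (γ ^ 2 * Y) := by
    intro c hc
    have e : (N + c) ^ 2 / (γ * Y) - 1 = (γ + 2 * b ^ 2 + 2 * N * c) / (γ * Y) := by
      field_simp
      linear_combination h3 + hc
    rw [e, div_pow, div_le_div_iff₀ (by positivity) (by positivity)]
    have hN3 : N ^ 2 ≤ 3 * Y := by nlinarith
    have hc2 : (N * c) ^ 2 ≤ 3 * Y := by
      rw [mul_pow, hc]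
      nlinarith [sq_nonneg N, sq_nonneg b]
    have hbd : (γ + 2 * b ^ 2 + 2 * N * c) ^ 2 ≤ 49 * Y := by
      have hg : (γ + 2 * b ^ 2) ^ 2 ≤ 9 := by nlinarith [sq_nonneg b]
      nlinarith [sq_nonneg ((γ + 2 * b ^ 2) - 2 * (N * c))]
    have : 0 ≤ γ ^ 2 * Y := by positivity
    nlinarith
  have h1 := abs_rpow_sub_le hs (y := (N + b) ^ 2 / (γ * Y)) (by positivity)
  have h2 := abs_rpow_sub_le hs (y := (N + -b) ^ 2 / (γ * Y)) (by positivity)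
  have hs1 := hsq b rfl
  have hs2 := hsq (-b) (neg_sq b)
  have hsum : (N + b) ^ 2 / (γ * Y) + (N + -b) ^ 2 / (γ * Y) - 2 =
      (2 * γ + 4 * b ^ 2) / (γ * Y) := by
    field_simp
    linear_combination 2 * h3
  have hsum' : |s * ((N + b) ^ 2 / (γ * Y) + (N + -b) ^ 2 / (γ * Y) - 2)| ≤ 6 / (γ ^ 2 * Y) := by
    rw [hsum, abs_of_nonneg (by have := hs.1; positivity)]
    have e : 6 / (γ ^ 2 * Y) = 1 * (6 / γ / (γ * Y)) := by field_simp
    rw [e]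
    gcongr
    · exact hs.2.le
    · rw [le_div_iff₀ hγ]
      nlinarith [sq_nonneg b]
  have htot : |((N + b) ^ 2 / (γ * Y)) ^ s + ((N + -b) ^ 2 / (γ * Y)) ^ s - 2| ≤
      104 / (γ ^ 2 * Y) := by
    have e : 104 / (γ ^ 2 * Y) = 49 / (γ ^ 2 * Y) + 49 / (γ ^ 2 * Y) + 6 / (γ ^ 2 * Y) := by ring
    rw [e]
    rw [abs_le] at *
    constructor <;> linarith [h1.1, h1.2, h2.1, h2.2, hsum'.1, hsum'.2]
  rw [hscale, hscale, ← mul_add, mul_comm 2, ← mul_sub, abs_mul, abs_of_nonneg (by positivity),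
    Real.rpow_sub_one hY0.ne']
  refine (mul_le_mul_of_nonneg_left htot (by positivity)).trans (le_of_eq ?_)
  field_simp

end Asymptotics

section Getoor

variable {n : ℕ} {s : ℝ}

/-- The function `(1 - ‖x‖²)₊ ^ s`. -/
noncomputable def ballWeight (s : ℝ) (x : EuclideanSpace ℝ (Fin n)) : ℝ :=
  max (1 - ‖x‖ ^ 2) 0 ^ s

theorem ballWeight_of_norm_lt {x : EuclideanSpace ℝ (Fin n)} (hx : ‖x‖ < 1) :
    ballWeight s x = (1 - ‖x‖ ^ 2) ^ s := by
  rw [ballWeight, max_eq_left (by nlinarith [norm_nonneg x])]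

theorem ballWeight_of_le_norm (hs : 0 < s) {x : EuclideanSpace ℝ (Fin n)} (hx : 1 ≤ ‖x‖) :
    ballWeight s x = 0 := by
  rw [ballWeight, max_eq_right (by nlinarith), Real.zero_rpow hs.ne']

theorem ballWeight_nonneg (x : EuclideanSpace ℝ (Fin n)) : 0 ≤ ballWeight s x :=
  Real.rpow_nonneg (le_max_right _ _) _

theorem ballWeight_le_one (hs : 0 < s) (x : EuclideanSpace ℝ (Fin n)) : ballWeight s x ≤ 1 :=
  Real.rpow_le_one (le_max_right _ _) (max_le (by nlinarith [norm_nonneg x]) zero_le_one) hs.le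

theorem abs_ballWeight_le_one (hs : 0 < s) (x : EuclideanSpace ℝ (Fin n)) :
    |ballWeight s x| ≤ 1 := by
  rw [abs_of_nonneg (ballWeight_nonneg x)]
  exact ballWeight_le_one hs x

theorem continuous_ballWeight (hs : 0 < s) :
    Continuous (ballWeight s : EuclideanSpace ℝ (Fin n) → ℝ) := by
  unfold ballWeight
  exact Continuous.rpow_const (by fun_prop) fun _ => Or.inr hs.le

theorem differentiableAt_ballWeight {x : EuclideanSpace ℝ (Fin n)} (hx : ‖x‖ < 1) :
    DifferentiableAt ℝ (ballWeight s) x := by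
  have h1 : DifferentiableAt ℝ (fun y : EuclideanSpace ℝ (Fin n) => (1 - ‖y‖ ^ 2) ^ s) x := by
    refine DifferentiableAt.rpow_const ?_ (Or.inl ?_)
    · exact ((differentiableAt_id).norm_sq ℝ).const_sub 1
    · nlinarith [norm_nonneg x]
  refine h1.congr_of_eventuallyEq ?_
  filter_upwards [isOpen_ball.mem_nhds (mem_ball_zero_iff.2 hx)] with y hy
  exact ballWeight_of_norm_lt (mem_ball_zero_iff.1 hy)

theorem ballWeight_add_smul (x θ : EuclideanSpace ℝ (Fin n)) (hθ : ‖θ‖ = 1) (t : ℝ) :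
    ballWeight s (x + t • θ) = max ((1 - ‖x‖ ^ 2) - 2 * ⟪x, θ⟫ * t - t ^ 2) 0 ^ s := by
  rw [ballWeight, norm_add_sq_real, inner_smul_right, norm_smul, hθ, mul_one, Real.norm_eq_abs,
    sq_abs]
  congr 2
  ring

/-- The truncation of the difference quotient of `ballWeight s` to a region whose rays are
half-lines with explicit end points. -/
noncomputable def truncatedQuotient (s : ℝ) (x : EuclideanSpace ℝ (Fin n)) (Y : ℝ) :
    EuclideanSpace ℝ (Fin n) → ℝ :=
  {y | (1 - ‖x‖ ^ 2) - 2 * ⟪x, y⟫ - ‖y‖ ^ 2 ≤ Y * ‖y‖ ^ 2}.indicator fun y =>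
    (ballWeight s x - ballWeight s (x + y)) / ‖y‖ ^ ((n : ℝ) + 2 * s)

theorem measurableSet_truncation (x : EuclideanSpace ℝ (Fin n)) (Y : ℝ) :
    MeasurableSet {y : EuclideanSpace ℝ (Fin n) |
      (1 - ‖x‖ ^ 2) - 2 * ⟪x, y⟫ - ‖y‖ ^ 2 ≤ Y * ‖y‖ ^ 2} :=
  measurableSet_le (by fun_prop) (by fun_prop)

theorem integrable_truncatedQuotient (hn : 1 ≤ n) (hs : 0 < s) {x : EuclideanSpace ℝ (Fin n)}
    (hx : ‖x‖ < 1) {Y : ℝ} (hY : 0 ≤ Y) : Integrable (truncatedQuotient s x Y) := by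
  have hγ : 0 < 1 - ‖x‖ ^ 2 := by nlinarith [norm_nonneg x]
  rw [truncatedQuotient, integrable_indicator_iff (measurableSet_truncation x Y)]
  have hc : 0 < (1 - ‖x‖ ^ 2) / (3 + Y) := by positivity
  have h := integrableOn_quotient hn hs (continuous_ballWeight (n := n) hs).measurable
    (abs_ballWeight_le_one hs) x hc
  have h2 : IntegrableOn (fun y => (ballWeight s x - ballWeight s (x + y)) /
      ‖y‖ ^ ((n : ℝ) + 2 * s))
      {y : EuclideanSpace ℝ (Fin n) | (1 - ‖x‖ ^ 2) / (3 + Y) ≤ ‖y‖} := by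
    rw [← integrable_indicator_iff (measurableSet_le_norm_sub x _)] at h
    rw [← integrable_indicator_iff (measurableSet_le measurable_const (by fun_prop))]
    refine (h.comp_add_left x).congr (Eventually.of_forall fun y => ?_)
    simp [indicator]
  refine h2.mono_set fun y hy => ?_
  change (1 - ‖x‖ ^ 2) / (3 + Y) ≤ ‖y‖
  have hy : (1 - ‖x‖ ^ 2) - 2 * ⟪x, y⟫ - ‖y‖ ^ 2 ≤ Y * ‖y‖ ^ 2 := hy
  have hin : ⟪x, y⟫ ≤ ‖y‖ := (real_inner_le_norm x y).trans (by nlinarith [norm_nonneg y])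
  rw [div_le_iff₀ (by positivity)]
  by_contra hcon
  have h1 : ‖y‖ < 1 := by
    by_contra h1
    nlinarith [sq_nonneg ‖x‖]
  nlinarith [norm_nonneg y, mul_nonneg (norm_nonneg y) (sub_nonneg.2 h1.le),
    mul_nonneg hY (mul_nonneg (norm_nonneg y) (sub_nonneg.2 h1.le))]

theorem pow_mul_truncatedQuotient_smul (hn : 1 ≤ n) {x : EuclideanSpace ℝ (Fin n)}
    (hx : ‖x‖ < 1) {Y : ℝ} (hY : 0 ≤ Y) {θ : EuclideanSpace ℝ (Fin n)} (hθ : ‖θ‖ = 1) {t : ℝ}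
    (ht : 0 < t) :
    t ^ (n - 1) * truncatedQuotient s x Y (t • θ) =
      (Ici ((1 - ‖x‖ ^ 2) / (√((1 - ‖x‖ ^ 2) * (1 + Y) + ⟪x, θ⟫ ^ 2) + ⟪x, θ⟫))).indicator
      (fun t => ((1 - ‖x‖ ^ 2) ^ s - max ((1 - ‖x‖ ^ 2) - 2 * ⟪x, θ⟫ * t - t ^ 2) 0 ^ s) *
        t ^ (-1 - 2 * s)) t := by
  have hγ : 0 < 1 - ‖x‖ ^ 2 := by nlinarith [norm_nonneg x]
  have hroot := le_iff_root_le hγ ⟪x, θ⟫ hY ht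
  have hnorm : ‖t • θ‖ = t := by rw [norm_smul, hθ, mul_one, Real.norm_of_nonneg ht.le]
  have hmem : t • θ ∈ {y : EuclideanSpace ℝ (Fin n) |
      (1 - ‖x‖ ^ 2) - 2 * ⟪x, y⟫ - ‖y‖ ^ 2 ≤ Y * ‖y‖ ^ 2} ↔
      t ∈ Ici ((1 - ‖x‖ ^ 2) / (√((1 - ‖x‖ ^ 2) * (1 + Y) + ⟪x, θ⟫ ^ 2) + ⟪x, θ⟫)) := by
    rw [mem_Ici, ← hroot]
    change (1 - ‖x‖ ^ 2) - 2 * ⟪x, t • θ⟫ - ‖t • θ‖ ^ 2 ≤ Y * ‖t • θ‖ ^ 2 ↔ _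
    rw [hnorm, inner_smul_right, mul_comm t, mul_assoc]
  rw [truncatedQuotient]
  by_cases h : t ∈ Ici ((1 - ‖x‖ ^ 2) / (√((1 - ‖x‖ ^ 2) * (1 + Y) + ⟪x, θ⟫ ^ 2) + ⟪x, θ⟫))
  · rw [indicator_of_mem h, indicator_of_mem (hmem.2 h), hnorm, ballWeight_of_norm_lt hx,
      ballWeight_add_smul x θ hθ]
    have : t ^ (-1 - 2 * s) = t ^ (n - 1) / t ^ ((n : ℝ) + 2 * s) := by
      rw [← Real.rpow_natCast, ← Real.rpow_sub ht, Nat.cast_sub hn]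
      congr 1
      push_cast
      ring
    rw [this]
    ring
  · rw [indicator_of_notMem h, indicator_of_notMem (mt hmem.1 h), mul_zero]

theorem integral_ray_truncatedQuotient (hn : 1 ≤ n) (hs : 0 < s) {x : EuclideanSpace ℝ (Fin n)}
    (hx : ‖x‖ < 1) {Y : ℝ} (hY : 0 ≤ Y) {θ : EuclideanSpace ℝ (Fin n)} (hθ : ‖θ‖ = 1) :
    IntegrableOn (fun t : ℝ => t ^ (n - 1) * truncatedQuotient s x Y (t • θ)) (Ioi 0) ∧
    ∫ t in Ioi (0 : ℝ), t ^ (n - 1) * truncatedQuotient s x Y (t • θ) =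
      ((√((1 - ‖x‖ ^ 2) * (1 + Y) + ⟪x, θ⟫ ^ 2) + ⟪x, θ⟫) ^ 2 / (1 - ‖x‖ ^ 2)) ^ s / (2 * s) -
      ∫ v in (0 : ℝ)..Y, v ^ s * ((1 - ‖x‖ ^ 2) /
        (2 * √((1 - ‖x‖ ^ 2) * (1 + v) + ⟪x, θ⟫ ^ 2) *
        (√((1 - ‖x‖ ^ 2) * (1 + v) + ⟪x, θ⟫ ^ 2) + ⟪x, θ⟫))) := by
  have hγ : 0 < 1 - ‖x‖ ^ 2 := by nlinarith [norm_nonneg x]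
  have hp := sqrt_add_pos hγ ⟪x, θ⟫ hY
  obtain ⟨h1, h2⟩ := integral_radial hs hγ ⟪x, θ⟫ hY
  have hcongr : EqOn (fun t : ℝ => t ^ (n - 1) * truncatedQuotient s x Y (t • θ)) _ (Ioi 0) :=
    fun t ht => pow_mul_truncatedQuotient_smul (s := s) hn hx hY hθ ht
  have hsub : Ici ((1 - ‖x‖ ^ 2) / (√((1 - ‖x‖ ^ 2) * (1 + Y) + ⟪x, θ⟫ ^ 2) + ⟪x, θ⟫)) ∩ Ioi 0 =
      Ici ((1 - ‖x‖ ^ 2) / (√((1 - ‖x‖ ^ 2) * (1 + Y) + ⟪x, θ⟫ ^ 2) + ⟪x, θ⟫)) :=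
    inter_eq_left.2 fun t ht => lt_of_lt_of_le (div_pos hγ hp) ht
  constructor
  · rw [integrableOn_congr_fun hcongr measurableSet_Ioi, IntegrableOn,
      integrable_indicator_iff measurableSet_Ici, IntegrableOn,
      Measure.restrict_restrict measurableSet_Ici, hsub]
    rwa [← IntegrableOn, integrableOn_Ici_iff_integrableOn_Ioi]
  · rw [setIntegral_congr_fun measurableSet_Ioi hcongr, integral_indicator measurableSet_Ici,
      Measure.restrict_restrict measurableSet_Ici, hsub, integral_Ici_eq_integral_Ioi, h2]

theorem integral_truncatedQuotient (hn : 1 ≤ n) (hs : 0 < s) {x : EuclideanSpace ℝ (Fin n)}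
    (hx : ‖x‖ < 1) {Y : ℝ} (hY : 0 ≤ Y) :
    ∫ y, truncatedQuotient s x Y y = 1 / 2 * ∫ θ : sphere (0 : EuclideanSpace ℝ (Fin n)) 1,
      ((((√((1 - ‖x‖ ^ 2) * (1 + Y) + ⟪x, (θ : EuclideanSpace ℝ (Fin n))⟫ ^ 2) +
        ⟪x, (θ : EuclideanSpace ℝ (Fin n))⟫) ^ 2 / (1 - ‖x‖ ^ 2)) ^ s +
      ((√((1 - ‖x‖ ^ 2) * (1 + Y) + ⟪x, (θ : EuclideanSpace ℝ (Fin n))⟫ ^ 2) +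
        -⟪x, (θ : EuclideanSpace ℝ (Fin n))⟫) ^ 2 / (1 - ‖x‖ ^ 2)) ^ s) / (2 * s) -
      ∫ v in (0 : ℝ)..Y, v ^ s / (1 + v)) ∂(volume.toSphere) := by
  have : Nonempty (Fin n) := ⟨⟨0, hn⟩⟩
  have hγ : 0 < 1 - ‖x‖ ^ 2 := by nlinarith [norm_nonneg x]
  have hi := integrable_truncatedQuotient hn hs hx hY
  have hadd : ∫ y, (truncatedQuotient s x Y y + truncatedQuotient s x Y (-y)) =
      2 * ∫ y, truncatedQuotient s x Y y := by
    rw [integral_add hi hi.comp_neg, integral_neg_eq_self (truncatedQuotient s x Y)]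
    ring
  have hpolar := integral_eq_integral_toSphere volume (hi.add hi.comp_neg)
  simp only [Pi.add_apply] at hpolar
  rw [hadd] at hpolar
  have hhalf : ∀ I J : ℝ, 2 * I = J → I = 1 / 2 * J := fun I J h => by linarith
  refine hhalf _ _ (hpolar.trans ?_)
  congr 1
  ext θ
  have hθ : ‖(θ : EuclideanSpace ℝ (Fin n))‖ = 1 := norm_eq_of_mem_sphere θ
  obtain ⟨i1, v1⟩ := integral_ray_truncatedQuotient hn hs hx hY hθ
  obtain ⟨i2, v2⟩ := integral_ray_truncatedQuotient hn hs hx hY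
    (θ := -(θ : EuclideanSpace ℝ (Fin n))) (by rwa [norm_neg])
  have hr := intervalIntegral_radial_add hs hγ ⟪x, (θ : EuclideanSpace ℝ (Fin n))⟫ hY
  rw [← hr]
  rw [finrank_euclideanSpace_fin]
  simp only [mul_add, ← smul_neg]
  rw [integral_add i1 i2, v1, v2]
  simp only [inner_neg_right, neg_sq]
  ring_nf

/-- Getoor's formula: `(1 - ‖x‖²)₊ ^ s` has constant fractional Laplacian in the unit ball. -/
theorem hasPrincipalValue_ballWeight (hn : 1 ≤ n) (hs : s ∈ Ioo (0 : ℝ) 1)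
    {x : EuclideanSpace ℝ (Fin n)} (hx : ‖x‖ < 1) :
    HasPrincipalValue s (ballWeight s) x (1 / 2 * (Real.Gamma s * Real.Gamma (1 - s) *
      (volume : Measure (EuclideanSpace ℝ (Fin n))).toSphere.real univ)) := by
  have : Nonempty (Fin n) := ⟨⟨0, hn⟩⟩
  have hγ : 0 < 1 - ‖x‖ ^ 2 := by nlinarith [norm_nonneg x]
  have hγ1 : 1 - ‖x‖ ^ 2 ≤ 1 := by nlinarith [sq_nonneg ‖x‖]
  set γ := 1 - ‖x‖ ^ 2 with hγdef
  obtain ⟨M, r, hr, hLip⟩ := (differentiableAt_ballWeight (s := s) hx).exists_abs_sub_le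
  have hshell : ∀ᶠ ρ in nhdsWithin (0 : ℝ) (Ioi 0), ∀ y : EuclideanSpace ℝ (Fin n),
      ¬ (y ∈ {z | γ - 2 * ⟪x, z - x⟫ - ‖z - x‖ ^ 2 ≤ (γ / ρ ^ 2 - 1) * ‖z - x‖ ^ 2} ↔
        ρ ≤ ‖y - x‖) → |‖y - x‖ - ρ| ≤ 2 / γ * ρ ^ 2 := by
    filter_upwards [self_mem_nhdsWithin] with ρ hρ y hy
    have hρ : 0 < ρ := hρ
    have e1 : γ - 2 * ⟪x, y - x⟫ - ‖y - x‖ ^ 2 ≤ (γ / ρ ^ 2 - 1) * ‖y - x‖ ^ 2 ↔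
        γ * ρ ^ 2 - 2 * ⟪x, y - x⟫ * ρ ^ 2 ≤ γ * ‖y - x‖ ^ 2 := by
      rw [← mul_le_mul_iff_left₀ (by positivity : 0 < ρ ^ 2)]
      have : (γ / ρ ^ 2 - 1) * ‖y - x‖ ^ 2 * ρ ^ 2 = γ * ‖y - x‖ ^ 2 - ‖y - x‖ ^ 2 * ρ ^ 2 := by
        field_simp
      rw [this]
      constructor <;> intro h <;> linarith
    change ¬ (γ - 2 * ⟪x, y - x⟫ - ‖y - x‖ ^ 2 ≤ (γ / ρ ^ 2 - 1) * ‖y - x‖ ^ 2 ↔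
      ρ ≤ ‖y - x‖) at hy
    rw [e1] at hy
    have hin := abs_le.1 ((abs_real_inner_le_norm x (y - x)).trans
      (mul_le_of_le_one_left (norm_nonneg _) hx.le))
    have ht : 0 ≤ ‖y - x‖ := norm_nonneg _
    set t := ‖y - x‖
    rw [div_mul_eq_mul_div, le_div_iff₀ hγ]
    have hρ2 : 0 < ρ ^ 2 := by positivity
    by_cases h : ρ ≤ t
    · have h' : γ * t ^ 2 < γ * ρ ^ 2 - 2 * ⟪x, y - x⟫ * ρ ^ 2 := by
        by_contra h'
        exact hy (by simp [h, not_lt.1 h'])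
      rw [abs_of_nonneg (by linarith)]
      have h5 : (t - ρ) * γ * (t + ρ) ≤ 2 * ρ ^ 2 * (t + ρ) := by nlinarith
      exact le_of_mul_le_mul_right h5 (by linarith)
    · have h' : γ * ρ ^ 2 - 2 * ⟪x, y - x⟫ * ρ ^ 2 ≤ γ * t ^ 2 := by
        by_contra h'
        exact hy (by simp [h, h'])
      rw [abs_of_nonpos (by linarith)]
      have h5 : -(t - ρ) * γ * (t + ρ) ≤ 2 * ρ ^ 2 * (t + ρ) := by nlinarith
      exact le_of_mul_le_mul_right h5 (by linarith)
  have hDm : ∀ ρ : ℝ, MeasurableSet {z : EuclideanSpace ℝ (Fin n) |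
      γ - 2 * ⟪x, z - x⟫ - ‖z - x‖ ^ 2 ≤ (γ / ρ ^ 2 - 1) * ‖z - x‖ ^ 2} := fun ρ =>
    measurableSet_le (by fun_prop) (by fun_prop)
  have hlim := tendsto_setIntegral_sub_setIntegral (s := s) (u := ballWeight s) hn hs hr hLip
    (fun ρ hρ => integrableOn_quotient hn hs.1 (continuous_ballWeight hs.1).measurable
      (abs_ballWeight_le_one hs.1) x hρ) hDm hshell
  have htrans : ∀ ρ : ℝ, ∫ z in {z : EuclideanSpace ℝ (Fin n) |
      γ - 2 * ⟪x, z - x⟫ - ‖z - x‖ ^ 2 ≤ (γ / ρ ^ 2 - 1) * ‖z - x‖ ^ 2},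
      (ballWeight s x - ballWeight s z) / ‖z - x‖ ^ ((n : ℝ) + 2 * s) =
      ∫ y, truncatedQuotient s x (γ / ρ ^ 2 - 1) y := by
    intro ρ
    rw [← integral_indicator (hDm ρ), ← integral_add_left_eq_self _ x]
    congr 1
    ext y
    simp [truncatedQuotient, indicator, ← hγdef]
  set A : ℝ → ℝ := fun Y => Y ^ s / s - ∫ v in (0 : ℝ)..Y, v ^ s / (1 + v) with hA
  have hbound : ∀ Y : ℝ, 1 ≤ Y → ‖(∫ y, truncatedQuotient s x Y y) - 1 / 2 * (A Y *
      (volume : Measure (EuclideanSpace ℝ (Fin n))).toSphere.real univ)‖ ≤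
      1 / 2 * (104 / γ ^ 2 * Y ^ (s - 1) / (2 * s) *
        (volume : Measure (EuclideanSpace ℝ (Fin n))).toSphere.real univ) := by
    intro Y hY
    have hY0 : 0 ≤ Y := by linarith
    rw [integral_truncatedQuotient hn hs.1 hx hY0, ← mul_sub, norm_mul,
      Real.norm_of_nonneg (by norm_num : (0 : ℝ) ≤ 1 / 2)]
    gcongr
    have hc : A Y * (volume : Measure (EuclideanSpace ℝ (Fin n))).toSphere.real univ =
        ∫ θ : sphere (0 : EuclideanSpace ℝ (Fin n)) 1, A Y ∂(volume.toSphere) := by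
      rw [integral_const, smul_eq_mul, mul_comm]
    rw [hc, ← integral_sub]
    · refine norm_integral_le_of_norm_le_const (Eventually.of_forall fun θ => ?_)
      have hθ : ‖(θ : EuclideanSpace ℝ (Fin n))‖ = 1 := norm_eq_of_mem_sphere θ
      have hb : |⟪x, (θ : EuclideanSpace ℝ (Fin n))⟫| ≤ 1 := by
        have := abs_real_inner_le_norm x (θ : EuclideanSpace ℝ (Fin n))
        rw [hθ, mul_one] at this
        linarith
      have h := abs_sum_rpow_sub_le hs hγ hγ1 hb hY
      have hs2 : 0 < 2 * s := by linarith [hs.1]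
      rw [Real.norm_eq_abs]
      have e : ∀ a b c : ℝ, (a + b) / (2 * s) - c - (Y ^ s / s - c) =
          (a + b - 2 * Y ^ s) / (2 * s) := by
        intro a b c
        have := hs.1
        field_simp
        ring
      rw [hA, e, abs_div, abs_of_pos hs2]
      gcongr
    · refine Continuous.integrable_of_hasCompactSupport ?_ (HasCompactSupport.of_compactSpace _)
      refine Continuous.sub (Continuous.div_const (Continuous.add ?_ ?_) _) continuous_const <;>
      · exact Continuous.rpow_const (by fun_prop) fun _ => Or.inr hs.1.le
    · exact integrable_const _
  have hYlim : Tendsto (fun ρ : ℝ => γ / ρ ^ 2 - 1) (nhdsWithin 0 (Ioi 0)) atTop := by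
    refine tendsto_atTop_add_const_right _ _ ?_
    have h1 : Tendsto (fun ρ : ℝ => ρ ^ 2) (nhdsWithin 0 (Ioi 0)) (nhdsWithin 0 (Ioi 0)) := by
      refine tendsto_nhdsWithin_iff.2 ⟨?_, ?_⟩
      · exact Tendsto.mono_left (by simpa using (continuous_pow (M := ℝ) 2).tendsto 0)
          nhdsWithin_le_nhds
      · filter_upwards [self_mem_nhdsWithin] with ρ hρ
        have hρ : 0 < ρ := hρ
        exact pow_pos hρ 2
    simpa [div_eq_mul_inv] using (h1.inv_tendsto_nhdsGT_zero).const_mul_atTop hγ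
  have hYpow : Tendsto (fun Y : ℝ => 1 / 2 * (104 / γ ^ 2 * Y ^ (s - 1) / (2 * s) *
      (volume : Measure (EuclideanSpace ℝ (Fin n))).toSphere.real univ)) atTop (nhds 0) := by
    have h1 : Tendsto (fun Y : ℝ => Y ^ (s - 1)) atTop (nhds 0) := by
      rw [show s - 1 = -(1 - s) by ring]
      exact tendsto_rpow_neg_atTop (by linarith [hs.2])
    have h2 := (((h1.const_mul (104 / γ ^ 2)).div_const (2 * s)).mul_const
      ((volume : Measure (EuclideanSpace ℝ (Fin n))).toSphere.real univ)).const_mul (1 / 2)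
    rwa [mul_zero, zero_div, zero_mul, mul_zero] at h2
  have hmain : Tendsto (fun Y : ℝ => ∫ y, truncatedQuotient s x Y y) atTop
      (nhds (1 / 2 * (Real.Gamma s * Real.Gamma (1 - s) *
      (volume : Measure (EuclideanSpace ℝ (Fin n))).toSphere.real univ))) := by
    have h1 := squeeze_zero_norm' ((eventually_ge_atTop 1).mono hbound) hYpow
    have h2 := ((tendsto_rpow_div_sub_integral hs).mul_const
      ((volume : Measure (EuclideanSpace ℝ (Fin n))).toSphere.real univ)).const_mul (1 / 2)
    have h3 := h1.add h2
    rw [zero_add] at h3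
    refine h3.congr fun Y => ?_
    simp [hA]
  have hfin := (hmain.comp hYlim).sub hlim
  rw [sub_zero] at hfin
  refine hfin.congr fun ρ => ?_
  simp only [Function.comp_apply]
  rw [htrans]
  ring

end Getoor

section MaximumPrinciple

variable {n : ℕ} {s : ℝ}

theorem fracC_pos (hs : s ∈ Ioo (0 : ℝ) 1) : 0 < fracC n s := by
  unfold fracC
  have h1 := Real.Gamma_pos_of_pos (show 0 < (n : ℝ) / 2 + s by have := hs.1; positivity)
  have h2 := Real.Gamma_pos_of_pos (show 0 < 1 - s by linarith [hs.2])
  have := hs.1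
  positivity

theorem HasFracLap.hasPrincipalValue (hs : s ∈ Ioo (0 : ℝ) 1)
    {u : EuclideanSpace ℝ (Fin n) → ℝ} {x : EuclideanSpace ℝ (Fin n)} {L : ℝ}
    (h : HasFracLap n s u x L) : HasPrincipalValue s u x (L / fracC n s) := by
  unfold HasFracLap at h
  simp_rw [← setIntegral_translate] at h
  have hc := (fracC_pos (n := n) hs).ne'
  refine (h.div_const (fracC n s)).congr fun ρ => ?_
  field_simp

theorem HasPrincipalValue.const_mul {u : EuclideanSpace ℝ (Fin n) → ℝ}
    {x : EuclideanSpace ℝ (Fin n)} {L : ℝ} (h : HasPrincipalValue s u x L) (c : ℝ) :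
    HasPrincipalValue s (fun y => c * u y) x (c * L) := by
  refine (Tendsto.const_mul c h).congr fun ρ => ?_
  rw [← integral_const_mul]
  refine integral_congr_ae (Eventually.of_forall fun y => ?_)
  simp only
  ring

theorem HasPrincipalValue.sub (hn : 1 ≤ n) (hs : 0 < s) {u v : EuclideanSpace ℝ (Fin n) → ℝ}
    {x : EuclideanSpace ℝ (Fin n)} {L L' : ℝ} (hu : HasPrincipalValue s u x L)
    (hv : HasPrincipalValue s v x L') (hum : Measurable u) (hvm : Measurable v)
    {M M' : ℝ} (huM : ∀ y, |u y| ≤ M) (hvM : ∀ y, |v y| ≤ M') :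
    HasPrincipalValue s (fun y => u y - v y) x (L - L') := by
  refine (Tendsto.sub hu hv).congr' ?_
  filter_upwards [self_mem_nhdsWithin] with ρ hρ
  rw [← integral_sub (integrableOn_quotient hn hs hum huM x hρ)
    (integrableOn_quotient hn hs hvm hvM x hρ)]
  refine integral_congr_ae (Eventually.of_forall fun y => ?_)
  simp only
  ring

theorem HasPrincipalValue.add (hn : 1 ≤ n) (hs : 0 < s) {u v : EuclideanSpace ℝ (Fin n) → ℝ}
    {x : EuclideanSpace ℝ (Fin n)} {L L' : ℝ} (hu : HasPrincipalValue s u x L)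
    (hv : HasPrincipalValue s v x L') (hum : Measurable u) (hvm : Measurable v)
    {M M' : ℝ} (huM : ∀ y, |u y| ≤ M) (hvM : ∀ y, |v y| ≤ M') :
    HasPrincipalValue s (fun y => u y + v y) x (L + L') := by
  refine (Tendsto.add hu hv).congr' ?_
  filter_upwards [self_mem_nhdsWithin] with ρ hρ
  rw [← integral_add (integrableOn_quotient hn hs hum huM x hρ)
    (integrableOn_quotient hn hs hvm hvM x hρ)]
  refine integral_congr_ae (Eventually.of_forall fun y => ?_)
  simp only
  ring

theorem Continuous.exists_abs_le_of_eq_zero {v : EuclideanSpace ℝ (Fin n) → ℝ}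
    (hv : Continuous v) (hv0 : ∀ y, 1 ≤ ‖y‖ → v y = 0) : ∃ M, ∀ y, |v y| ≤ M := by
  obtain ⟨M, hM⟩ := (isCompact_closedBall (0 : EuclideanSpace ℝ (Fin n))
    1).exists_bound_of_continuousOn hv.continuousOn
  refine ⟨M, fun y => ?_⟩
  rcases le_or_gt ‖y‖ 1 with h | h
  · exact hM y (mem_closedBall_zero_iff.2 h)
  · rw [hv0 y h.le, abs_zero]
    exact (norm_nonneg _).trans (hM 0 (by simp))

theorem nonpos_of_hasPrincipalValue_neg {v g : EuclideanSpace ℝ (Fin n) → ℝ}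
    (hv : Continuous v) (hv0 : ∀ y, 1 ≤ ‖y‖ → v y = 0)
    (hg : ∀ x, ‖x‖ < 1 → HasPrincipalValue s v x (g x)) (hneg : ∀ x, ‖x‖ < 1 → g x < 0)
    (x : EuclideanSpace ℝ (Fin n)) : v x ≤ 0 := by
  obtain ⟨x₀, -, hx₀⟩ := (isCompact_closedBall (0 : EuclideanSpace ℝ (Fin n)) 1).exists_isMaxOn
    ⟨0, by simp⟩ hv.continuousOn
  by_contra! hx
  have hmem : ∀ y, 0 < v y → ‖y‖ < 1 := fun y hy => by
    by_contra! h
    exact hy.ne' (hv0 y h)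
  have hx₀pos : 0 < v x₀ := hx.trans_le (hx₀ (mem_closedBall_zero_iff.2 (hmem x hx).le))
  have hle : ∀ y, v y ≤ v x₀ := fun y => by
    rcases le_or_gt ‖y‖ 1 with h | h
    · exact hx₀ (mem_closedBall_zero_iff.2 h)
    · rw [hv0 y h.le]
      exact hx₀pos.le
  refine (hneg x₀ (hmem x₀ hx₀pos)).not_ge (ge_of_tendsto' (hg x₀ (hmem x₀ hx₀pos)) fun ρ => ?_)
  refine integral_nonneg fun y => ?_
  exact div_nonneg (sub_nonneg.2 (hle y)) (by positivity)

/-- The principal value of `ballWeight s` at the points of the unit ball. -/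
noncomputable def ballWeightPV (n : ℕ) (s : ℝ) : ℝ :=
  1 / 2 * (Real.Gamma s * Real.Gamma (1 - s) *
    (volume : Measure (EuclideanSpace ℝ (Fin n))).toSphere.real univ)

theorem ballWeightPV_pos (hn : 1 ≤ n) (hs : s ∈ Ioo (0 : ℝ) 1) : 0 < ballWeightPV n s := by
  have : Nonempty (Fin n) := ⟨⟨0, hn⟩⟩
  have h1 := Real.Gamma_pos_of_pos hs.1
  have h2 := Real.Gamma_pos_of_pos (show 0 < 1 - s by linarith [hs.2])
  have h3 : 0 < (volume : Measure (EuclideanSpace ℝ (Fin n))).toSphere.real univ := by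
    rw [measureReal_def]
    refine ENNReal.toReal_pos ?_ (measure_ne_top _ _)
    rw [Measure.toSphere_apply_univ]
    refine mul_ne_zero ?_ (measure_ball_pos _ _ one_pos).ne'
    simpa using (by omega : n ≠ 0)
  unfold ballWeightPV
  positivity

theorem le_ballWeight_of_hasPrincipalValue_lt (hn : 1 ≤ n) (hs : s ∈ Ioo (0 : ℝ) 1)
    {v g : EuclideanSpace ℝ (Fin n) → ℝ} (hv : Continuous v) (hv0 : ∀ y, 1 ≤ ‖y‖ → v y = 0)
    (hg : ∀ x, ‖x‖ < 1 → HasPrincipalValue s v x (g x)) {δ : ℝ}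
    (hδ : ∀ x, ‖x‖ < 1 → g x < δ) (x : EuclideanSpace ℝ (Fin n)) :
    v x ≤ δ / ballWeightPV n s * ballWeight s x := by
  obtain ⟨M, hM⟩ := hv.exists_abs_le_of_eq_zero hv0
  have hc := ballWeightPV_pos hn hs
  set d := δ / ballWeightPV n s with hd
  have hw : Continuous fun y : EuclideanSpace ℝ (Fin n) => d * ballWeight s y :=
    continuous_const.mul (continuous_ballWeight hs.1)
  have hw0 : ∀ y : EuclideanSpace ℝ (Fin n), 1 ≤ ‖y‖ → d * ballWeight s y = 0 := fun y hy => by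
    rw [ballWeight_of_le_norm hs.1 hy, mul_zero]
  obtain ⟨M', hM'⟩ := hw.exists_abs_le_of_eq_zero hw0
  have := nonpos_of_hasPrincipalValue_neg (s := s) (v := fun y => v y - d * ballWeight s y)
    (g := fun y => g y - d * ballWeightPV n s) (hv.sub hw)
    (fun y hy => by simp [hv0 y hy, ballWeight_of_le_norm hs.1 hy])
    (fun y hy => (hg y hy).sub hn hs.1 ((hasPrincipalValue_ballWeight hn hs hy).const_mul d)
      hv.measurable hw.measurable hM hM')
    (fun y hy => by
      rw [hd, div_mul_cancel₀ _ hc.ne']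
      linarith [hδ y hy]) x
  linarith

theorem abs_le_ballWeight_of_hasPrincipalValue (hn : 1 ≤ n) (hs : s ∈ Ioo (0 : ℝ) 1)
    {v g : EuclideanSpace ℝ (Fin n) → ℝ} (hv : Continuous v) (hv0 : ∀ y, 1 ≤ ‖y‖ → v y = 0)
    (hg : ∀ x, ‖x‖ < 1 → HasPrincipalValue s v x (g x)) {δ : ℝ}
    (hδ : ∀ x, ‖x‖ < 1 → |g x| < δ) (x : EuclideanSpace ℝ (Fin n)) :
    |v x| ≤ δ / ballWeightPV n s * ballWeight s x := by
  refine abs_le.2 ⟨?_, le_ballWeight_of_hasPrincipalValue_lt hn hs hv hv0 hg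
    (fun y hy => (abs_lt.1 (hδ y hy)).2) x⟩
  have := le_ballWeight_of_hasPrincipalValue_lt hn hs (v := fun y => -1 * v y)
    (g := fun y => -1 * g y) (δ := δ) (by fun_prop) (fun y hy => by simp [hv0 y hy])
    (fun y hy => (hg y hy).const_mul (-1)) (fun y hy => by linarith [(abs_lt.1 (hδ y hy)).1]) x
  linarith

end MaximumPrinciple

section KelvinBallWeight

variable {n : ℕ} {s : ℝ}

open EuclideanGeometry in
theorem one_sub_norm_inversion_sq {p y : EuclideanSpace ℝ (Fin n)} (hy : y ≠ p) {a : ℝ}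
    (ha : a ^ 2 = ‖p‖ ^ 2 - 1) :
    1 - ‖inversion p a y‖ ^ 2 = (a / ‖y - p‖) ^ 2 * (1 - ‖y‖ ^ 2) := by
  have hd : ‖y - p‖ ≠ 0 := norm_ne_zero_iff.2 (sub_ne_zero.2 hy)
  have hin : ⟪y - p, p⟫ = (‖y‖ ^ 2 - ‖p‖ ^ 2 - ‖y - p‖ ^ 2) / 2 := by
    have := norm_add_sq_real (y - p) p
    rw [sub_add_cancel] at this
    linarith
  rw [inversion, vsub_eq_sub, vadd_eq_add, norm_add_sq_real, inner_smul_left, hin, norm_smul,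
    dist_eq_norm]
  simp only [map_pow, map_div₀, RCLike.conj_to_real, norm_pow, norm_div, Real.norm_eq_abs,
    abs_norm, mul_pow, div_pow, sq_abs]
  field_simp
  rw [ha]
  ring

open EuclideanGeometry in
theorem ballWeight_inversion {p y : EuclideanSpace ℝ (Fin n)} (hy : y ≠ p) {a : ℝ}
    (ha0 : 0 < a) (ha : a ^ 2 = ‖p‖ ^ 2 - 1) :
    ballWeight s (inversion p a y) =
      a ^ (2 * s) * ‖y - p‖ ^ (-(2 * s)) * ballWeight s y := by
  have hd : 0 < ‖y - p‖ := norm_pos_iff.2 (sub_ne_zero.2 hy)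
  rw [ballWeight, one_sub_norm_inversion_sq hy ha, ballWeight,
    ← mul_zero ((a / ‖y - p‖) ^ 2), ← mul_max_of_nonneg _ _ (by positivity), mul_zero,
    Real.mul_rpow (by positivity) (le_max_right _ _), ← Real.rpow_natCast_mul (by positivity),
    Real.div_rpow ha0.le hd.le, Real.rpow_neg hd.le, Nat.cast_two, div_eq_mul_inv]

open EuclideanGeometry in
theorem norm_inversion_lt_one {p y : EuclideanSpace ℝ (Fin n)} (hy : y ≠ p) {a : ℝ}
    (ha0 : 0 < a) (ha : a ^ 2 = ‖p‖ ^ 2 - 1) : ‖inversion p a y‖ < 1 ↔ ‖y‖ < 1 := by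
  have hd : 0 < ‖y - p‖ := norm_pos_iff.2 (sub_ne_zero.2 hy)
  have h := one_sub_norm_inversion_sq hy ha
  have h1 : ‖inversion p a y‖ < 1 ↔ 0 < 1 - ‖inversion p a y‖ ^ 2 := by
    rw [sub_pos, sq_lt_one_iff₀ (norm_nonneg _)]
  have h2 : ‖y‖ < 1 ↔ 0 < 1 - ‖y‖ ^ 2 := by
    rw [sub_pos, sq_lt_one_iff₀ (norm_nonneg _)]
  rw [h1, h2, h, mul_pos_iff_of_pos_left (by positivity)]

/-- A function that agrees with `‖x - p‖ ^ (-N)` on the unit ball and is continuous if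
`1 < ‖p‖`. -/
noncomputable def poleFun (N : ℝ) (p x : EuclideanSpace ℝ (Fin n)) : ℝ :=
  max ‖x - p‖ (‖p‖ - 1) ^ (-N)

theorem poleFun_of_norm_le (N : ℝ) (p : EuclideanSpace ℝ (Fin n)) {x : EuclideanSpace ℝ (Fin n)}
    (hx : ‖x‖ ≤ 1) : poleFun N p x = ‖x - p‖ ^ (-N) := by
  rw [poleFun, max_eq_left]
  linarith [norm_sub_norm_le p x, norm_sub_rev p x]

theorem continuous_poleFun (N : ℝ) {p : EuclideanSpace ℝ (Fin n)} (hp : 1 < ‖p‖) :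
    Continuous (poleFun N p) := by
  unfold poleFun
  refine Continuous.rpow_const (by fun_prop) fun x => Or.inl ?_
  exact (lt_max_of_lt_right (by linarith)).ne'

theorem ballWeight_mul_poleFun (hs : 0 < s) (N : ℝ) (p x : EuclideanSpace ℝ (Fin n)) :
    ballWeight s x * poleFun N p x = ballWeight s x * ‖x - p‖ ^ (-N) := by
  rcases le_or_gt ‖x‖ 1 with h | h
  · rw [poleFun_of_norm_le N p h]
  · rw [ballWeight_of_le_norm hs h.le, zero_mul, zero_mul]

open EuclideanGeometry in
theorem hasPrincipalValue_ballWeight_mul_poleFun (hn : 1 ≤ n) (hs : s ∈ Ioo (0 : ℝ) 1)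
    {p x : EuclideanSpace ℝ (Fin n)} (hp : 1 < ‖p‖) (hx : ‖x‖ < 1) :
    HasPrincipalValue s (fun y => ballWeight s y * poleFun n p y) x
      ((‖p‖ ^ 2 - 1) ^ s * ballWeightPV n s * poleFun (n + 2 * s) p x) := by
  have hb : 0 < ‖p‖ ^ 2 - 1 := by nlinarith
  set a := √(‖p‖ ^ 2 - 1) with hadef
  have ha0 : 0 < a := Real.sqrt_pos.2 hb
  have ha : a ^ 2 = ‖p‖ ^ 2 - 1 := Real.sq_sqrt hb.le
  have hxp : x ≠ p := fun h => by rw [h] at hx; linarith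
  have hx' : ‖inversion p a x‖ < 1 := (norm_inversion_lt_one hxp ha0 ha).2 hx
  have hk := ((hasPrincipalValue_ballWeight hn hs hx').kelvin hn hs hxp ha0
    (continuous_ballWeight hs.1).measurable (abs_ballWeight_le_one hs.1)
    (differentiableAt_ballWeight hx')).const_mul (a ^ (-(2 * s)))
  have has : (‖p‖ ^ 2 - 1) ^ s = a ^ (2 * s) := by
    rw [← ha, ← Real.rpow_natCast_mul ha0.le, Nat.cast_two]
  convert hk using 1
  · ext y
    rw [ballWeight_mul_poleFun hs.1]
    rcases eq_or_ne y p with rfl | hy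
    · rw [inversion_self, ballWeight_of_le_norm hs.1 hp.le]
      simp
    · have hd : 0 < ‖y - p‖ := norm_pos_iff.2 (sub_ne_zero.2 hy)
      rw [ballWeight_inversion hy ha0 ha, Real.rpow_neg ha0.le,
        show (-(n : ℝ)) = (2 * s - n) + (-(2 * s)) by ring, Real.rpow_add hd]
      have := (Real.rpow_pos_of_pos ha0 (2 * s)).ne'
      field_simp
  · rw [has, poleFun_of_norm_le _ p hx.le, neg_add', ballWeightPV, show 4 * s = 2 * s + 2 * s by ring,
      Real.rpow_add ha0,
      Real.rpow_neg ha0.le]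
    have := (Real.rpow_pos_of_pos ha0 (2 * s)).ne'
    field_simp

end KelvinBallWeight

section SphereIntegral

variable {n : ℕ} {s : ℝ}

theorem max_zero_rpow_mul_exp_eq_indicator {q : ℝ} (hq : 0 < q) :
    (fun t : ℝ => max t 0 ^ q * Real.exp (-t ^ 2)) =
      (Ioi 0).indicator fun t : ℝ => t ^ q * Real.exp (-t ^ (2 : ℝ)) := by
  ext t
  rcases le_or_gt t 0 with h | h
  · rw [indicator_of_notMem (by simpa using h), max_eq_right h, Real.zero_rpow hq.ne', zero_mul]
  · rw [indicator_of_mem (show t ∈ Ioi 0 from h), max_eq_left h.le, Real.rpow_two]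

theorem integrable_max_zero_rpow_mul_exp {q : ℝ} (hq : 0 < q) :
    Integrable fun t : ℝ => max t 0 ^ q * Real.exp (-t ^ 2) := by
  rw [max_zero_rpow_mul_exp_eq_indicator hq, integrable_indicator_iff measurableSet_Ioi]
  exact integrableOn_rpow_mul_exp_neg_rpow (by linarith) two_pos

theorem integral_max_zero_rpow_mul_exp {q : ℝ} (hq : 0 < q) :
    ∫ t : ℝ, max t 0 ^ q * Real.exp (-t ^ 2) = 1 / 2 * Real.Gamma ((q + 1) / 2) := by
  rw [max_zero_rpow_mul_exp_eq_indicator hq, integral_indicator measurableSet_Ioi,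
    integral_rpow_mul_exp_neg_rpow two_pos (by linarith)]

/-- The function `(-⟪e, y⟫)₊ ^ q * exp (-‖y‖²)` is integrable, with explicit integral. -/
theorem integral_inner_rpow_mul_exp (hn : 1 ≤ n) {q : ℝ} (hq : 0 < q)
    {e : EuclideanSpace ℝ (Fin n)} (he : ‖e‖ = 1) :
    Integrable (fun y => max (-⟪e, y⟫) 0 ^ q * Real.exp (-‖y‖ ^ 2)) ∧
    ∫ y, max (-⟪e, y⟫) 0 ^ q * Real.exp (-‖y‖ ^ 2) =
      1 / 2 * Real.Gamma ((q + 1) / 2) * √Real.pi ^ (n - 1) := by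
  obtain ⟨m, rfl⟩ : ∃ m, n = m + 1 := ⟨n - 1, by omega⟩
  set e₀ : EuclideanSpace ℝ (Fin (m + 1)) := -EuclideanSpace.single 0 1 with he₀
  have hnorm : ‖e‖ = ‖e₀‖ := by simp [he₀, he]
  set R := (ℝ ∙ (e - e₀))ᗮ.reflection with hR
  have hRe : R e = e₀ := Submodule.reflection_sub hnorm
  set T := (MeasurableEquiv.toLp 2 (Fin (m + 1) → ℝ)).symm with hT
  have hmp : MeasurePreserving T volume volume :=
    EuclideanSpace.volume_preserving_symm_measurableEquiv_toLp _
  set f : Fin (m + 1) → ℝ → ℝ := Fin.cons (fun t => max t 0 ^ q * Real.exp (-t ^ 2))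
    (fun _ t => Real.exp (-t ^ 2)) with hf
  set F : (Fin (m + 1) → ℝ) → ℝ := fun x => ∏ i, f i (x i) with hF
  have hgauss : Integrable fun t : ℝ => Real.exp (-t ^ 2) := by
    simpa using integrable_exp_neg_mul_sq one_pos
  have hfi : ∀ i, Integrable (f i) := fun i => by
    refine Fin.cases ?_ (fun j => ?_) i
    · exact integrable_max_zero_rpow_mul_exp hq
    · exact hgauss
  have hFi : Integrable F := Integrable.fintype_prod hfi
  have hcomp : (fun y : EuclideanSpace ℝ (Fin (m + 1)) =>
      max (-⟪e, y⟫) 0 ^ q * Real.exp (-‖y‖ ^ 2)) = fun y => F (T (R y)) := by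
    ext y
    have h1 : ⟪e, y⟫ = -(R y) 0 := by
      rw [← R.inner_map_map, hRe, he₀, inner_neg_left, EuclideanSpace.inner_single_left]
      simp
    have h2 : ‖y‖ ^ 2 = ∑ i, (R y) i ^ 2 := by
      rw [← R.norm_map, EuclideanSpace.norm_sq_eq]
      simp
    have h3 : ∀ i, T (R y) i = (R y) i := fun i => rfl
    simp only [hF, h3]
    rw [h1, h2, neg_neg, Fin.prod_univ_succ, Fin.sum_univ_succ, neg_add, Real.exp_add,
      ← Finset.sum_neg_distrib, Real.exp_sum, ← mul_assoc]
    rfl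
  have hmpR : MeasurePreserving (fun y => T (R y)) volume volume :=
    hmp.comp R.measurePreserving
  have hemb : MeasurableEmbedding fun y => T (R y) :=
    T.measurableEmbedding.comp R.toHomeomorph.measurableEmbedding
  rw [hcomp]
  refine ⟨(hmpR.integrable_comp_emb hemb).2 hFi, ?_⟩
  rw [hmpR.integral_comp hemb F]
  have h1 : ∫ x, F x = ∏ i, ∫ t, f i t := integral_fintype_prod_eq_prod f
  have h2 : ∫ t : ℝ, Real.exp (-t ^ 2) = √Real.pi := by
    simpa using integral_gaussian 1
  rw [h1, Fin.prod_univ_succ]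
  simp only [hf, Fin.cons_zero, Fin.cons_succ]
  rw [integral_max_zero_rpow_mul_exp hq, h2]
  simp

theorem integral_sphere_inner_rpow (hn : 1 ≤ n) {q : ℝ} (hq : 0 < q)
    {e : EuclideanSpace ℝ (Fin n)} (he : ‖e‖ = 1) :
    (∫ θ : sphere (0 : EuclideanSpace ℝ (Fin n)) 1,
      max (-⟪e, (θ : EuclideanSpace ℝ (Fin n))⟫) 0 ^ q ∂(volume.toSphere)) *
        Real.Gamma (((n : ℝ) + q) / 2) =
      Real.Gamma ((q + 1) / 2) * √Real.pi ^ (n - 1) := by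
  have : Nonempty (Fin n) := ⟨⟨0, hn⟩⟩
  obtain ⟨hi, hv⟩ := integral_inner_rpow_mul_exp hn hq he
  rw [integral_eq_integral_toSphere volume hi] at hv
  have hin : ∀ θ : sphere (0 : EuclideanSpace ℝ (Fin n)) 1,
      ∫ t in Ioi (0 : ℝ), t ^ (Module.finrank ℝ (EuclideanSpace ℝ (Fin n)) - 1) *
        (max (-⟪e, t • (θ : EuclideanSpace ℝ (Fin n))⟫) 0 ^ q *
          Real.exp (-‖t • (θ : EuclideanSpace ℝ (Fin n))‖ ^ 2)) =
      max (-⟪e, (θ : EuclideanSpace ℝ (Fin n))⟫) 0 ^ q *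
        (1 / 2 * Real.Gamma (((n : ℝ) + q) / 2)) := fun θ => by
    have hθ : ‖(θ : EuclideanSpace ℝ (Fin n))‖ = 1 := norm_eq_of_mem_sphere θ
    have := integral_rpow_mul_exp_neg_rpow two_pos (q := (n : ℝ) - 1 + q)
      (by have : (1 : ℝ) ≤ n := by exact_mod_cast hn
          linarith)
    rw [show (n : ℝ) - 1 + q + 1 = n + q by ring] at this
    rw [← this, ← integral_const_mul]
    refine setIntegral_congr_fun measurableSet_Ioi fun t (ht : 0 < t) => ?_
    rw [finrank_euclideanSpace_fin, norm_smul, hθ, mul_one, inner_smul_right, Real.norm_eq_abs,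
      sq_abs, ← mul_neg, ← mul_zero t, ← mul_max_of_nonneg _ _ ht.le, mul_zero,
      Real.mul_rpow ht.le (le_max_right _ _), Real.rpow_add ht, ← Real.rpow_natCast t (n - 1),
      Nat.cast_sub hn, Nat.cast_one, Real.rpow_two]
    ring
  simp only [hin] at hv
  rw [integral_mul_const] at hv
  linarith

end SphereIntegral

section BoundaryPotential

variable {n : ℕ} {s : ℝ}

theorem integral_rpow_mul_one_sub_rpow {α β : ℝ} (hα : 0 < α) (hβ : 0 < β) :
    ∫ t in Ioc (0 : ℝ) 1, t ^ (α - 1) * (1 - t) ^ (β - 1) =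
      Real.Gamma α * Real.Gamma β / Real.Gamma (α + β) := by
  change _ = ProbabilityTheory.beta α β
  rw [ProbabilityTheory.beta_eq_betaIntegralReal α β hα hβ, Complex.betaIntegral,
    intervalIntegral.integral_of_le zero_le_one, ← RCLike.re_to_complex, ← integral_re]
  · refine setIntegral_congr_fun measurableSet_Ioc fun x ⟨hx1, hx2⟩ => ?_
    norm_cast
    rw [← Complex.ofReal_cpow hx1.le, ← Complex.ofReal_cpow (by linarith), RCLike.re_to_complex,
      Complex.re_mul_ofReal, Complex.ofReal_re]
  · exact (intervalIntegrable_iff_integrableOn_Ioc_of_le zero_le_one).1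
      (Complex.betaIntegral_convergent (u := α) (v := β) (by simpa) (by simpa))

theorem integral_inv_mul_max_rpow (hs : 0 < s) (b : ℝ) :
    ∫ t in Ioi (0 : ℝ), t⁻¹ * max (b * t - t ^ 2) 0 ^ s =
      max b 0 ^ (2 * s) * (Real.Gamma s * Real.Gamma (s + 1) / Real.Gamma (2 * s + 1)) := by
  rcases le_or_gt b 0 with hb | hb
  · rw [max_eq_right hb, Real.zero_rpow (by positivity), zero_mul]
    refine setIntegral_eq_zero_of_forall_eq_zero fun t (ht : 0 < t) => ?_
    rw [max_eq_right (by nlinarith), Real.zero_rpow hs.ne', mul_zero]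
  have hone : ∫ t in Ioi (0 : ℝ), t⁻¹ * max (t - t ^ 2) 0 ^ s =
      Real.Gamma s * Real.Gamma (s + 1) / Real.Gamma (2 * s + 1) := by
    have h := integral_rpow_mul_one_sub_rpow hs (show 0 < s + 1 by linarith)
    rw [show s + (s + 1) = 2 * s + 1 by ring] at h
    rw [← h]
    rw [setIntegral_eq_of_subset_of_forall_sdiff_eq_zero (s := Ioc (0 : ℝ) 1) measurableSet_Ioi
      Ioc_subset_Ioi_self]
    rotate_left
    · intro t ht
      have h1 : 1 < t := by
        by_contra! h1
        exact ht.2 ⟨ht.1, h1⟩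
      rw [max_eq_right (by nlinarith), Real.zero_rpow hs.ne', mul_zero]
    · refine setIntegral_congr_fun measurableSet_Ioc fun t ht => ?_
      rw [max_eq_left (by nlinarith [ht.1, ht.2]), show t - t ^ 2 = t * (1 - t) by ring,
        Real.mul_rpow ht.1.le (by linarith [ht.2]), add_sub_cancel_right,
        Real.rpow_sub_one ht.1.ne']
      ring
  have hcomp := integral_comp_mul_left_Ioi (fun t => t⁻¹ * max (b * t - t ^ 2) 0 ^ s) 0 hb
  rw [mul_zero, smul_eq_mul] at hcomp
  have hval : ∫ t in Ioi (0 : ℝ), (b * t)⁻¹ * max (b * (b * t) - (b * t) ^ 2) 0 ^ s =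
      b⁻¹ * b ^ (2 * s) * ∫ t in Ioi (0 : ℝ), t⁻¹ * max (t - t ^ 2) 0 ^ s := by
    rw [← integral_const_mul]
    refine setIntegral_congr_fun measurableSet_Ioi fun t (ht : 0 < t) => ?_
    rw [show b * (b * t) - (b * t) ^ 2 = b ^ 2 * (t - t ^ 2) by ring, ← mul_zero (b ^ 2),
      ← mul_max_of_nonneg _ _ (by positivity), mul_zero,
      Real.mul_rpow (by positivity) (le_max_right _ _), ← Real.rpow_natCast_mul hb.le,
      Nat.cast_two, mul_inv]
    ring
  rw [hval, hone] at hcomp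
  rw [max_eq_left hb.le]
  refine (mul_left_cancel₀ (inv_ne_zero hb.ne') (hcomp.symm.trans ?_))
  ring

theorem ballWeight_le_norm_sub_rpow (hs : 0 < s) {e : EuclideanSpace ℝ (Fin n)} (he : ‖e‖ = 1)
    (z : EuclideanSpace ℝ (Fin n)) : ballWeight s z ≤ 2 ^ s * ‖z - e‖ ^ s := by
  rw [← Real.mul_rpow two_pos.le (norm_nonneg _)]
  refine Real.rpow_le_rpow (le_max_right _ _) (max_le ?_ (by positivity)) hs.le
  have h := norm_sub_norm_le e z
  rw [he, norm_sub_rev] at h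
  nlinarith [norm_nonneg z, norm_nonneg (z - e)]

theorem integrable_ballWeight_mul_norm_sub_rpow (hn : 1 ≤ n) (hs : 0 < s)
    {e : EuclideanSpace ℝ (Fin n)} (he : ‖e‖ = 1) :
    Integrable fun z => ballWeight s z * ‖z - e‖ ^ (-(n : ℝ)) := by
  have : Nonempty (Fin n) := ⟨⟨0, hn⟩⟩
  have h := Integrable.const_mul (integrable_ball_norm_sub_rpow hn (α := s - n) (by linarith) e 2)
    (2 ^ s)
  have h2 : IntegrableOn (fun z => ballWeight s z * ‖z - e‖ ^ (-(n : ℝ))) (ball e 2) := by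
    refine Integrable.mono' h ?_ ((Measure.ae_ne _ e).mono fun z hz => ?_)
    · exact ((continuous_ballWeight hs).measurable.mul (by fun_prop)).aestronglyMeasurable
    · have hd : 0 < ‖z - e‖ := norm_pos_iff.2 (sub_ne_zero.2 hz)
      rw [Real.norm_eq_abs, abs_of_nonneg (mul_nonneg (ballWeight_nonneg z) (by positivity)),
        sub_eq_add_neg s, Real.rpow_add hd, ← mul_assoc]
      exact mul_le_mul_of_nonneg_right (ballWeight_le_norm_sub_rpow hs he z) (by positivity)
  rw [← integrableOn_univ]
  refine h2.of_forall_sdiff_eq_zero MeasurableSet.univ fun z hz => ?_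
  have hz2 : 2 ≤ ‖z - e‖ := by simpa [dist_eq_norm] using hz
  rw [ballWeight_of_le_norm hs, zero_mul]
  have := norm_sub_le z e
  linarith

theorem integral_ballWeight_mul_norm_sub_rpow (hn : 1 ≤ n) (hs : 0 < s)
    {e : EuclideanSpace ℝ (Fin n)} (he : ‖e‖ = 1) :
    (∫ z, ballWeight s z * ‖z - e‖ ^ (-(n : ℝ))) * Real.Gamma ((n : ℝ) / 2 + s) =
      4 ^ s * (Real.Gamma s * Real.Gamma (s + 1) / Real.Gamma (2 * s + 1)) *
        (Real.Gamma (s + 1 / 2) * √Real.pi ^ (n - 1)) := by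
  have : Nonempty (Fin n) := ⟨⟨0, hn⟩⟩
  have hi := (integrable_ballWeight_mul_norm_sub_rpow hn hs he).comp_add_left e
  have hsph := integral_sphere_inner_rpow hn (q := 2 * s) (by positivity) he
  rw [← integral_add_left_eq_self _ e, integral_eq_integral_toSphere volume hi]
  have hin : ∀ θ : sphere (0 : EuclideanSpace ℝ (Fin n)) 1,
      ∫ t in Ioi (0 : ℝ), t ^ (Module.finrank ℝ (EuclideanSpace ℝ (Fin n)) - 1) *
        (ballWeight s (e + t • (θ : EuclideanSpace ℝ (Fin n))) *
          ‖e + t • (θ : EuclideanSpace ℝ (Fin n)) - e‖ ^ (-(n : ℝ))) =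
      max (-⟪e, (θ : EuclideanSpace ℝ (Fin n))⟫) 0 ^ (2 * s) *
        (4 ^ s * (Real.Gamma s * Real.Gamma (s + 1) / Real.Gamma (2 * s + 1))) := fun θ => by
    have hθ : ‖(θ : EuclideanSpace ℝ (Fin n))‖ = 1 := norm_eq_of_mem_sphere θ
    have h := integral_inv_mul_max_rpow hs (2 * -⟪e, (θ : EuclideanSpace ℝ (Fin n))⟫)
    rw [← mul_zero (2 : ℝ), ← mul_max_of_nonneg _ _ two_pos.le, mul_zero,
      Real.mul_rpow two_pos.le (le_max_right _ _), Real.rpow_mul two_pos.le, Real.rpow_two,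
      show (2 : ℝ) ^ 2 = 4 by norm_num] at h
    rw [mul_left_comm, ← mul_assoc, ← h]
    refine setIntegral_congr_fun measurableSet_Ioi fun t (ht : 0 < t) => ?_
    rw [finrank_euclideanSpace_fin, ballWeight_add_smul e _ hθ, add_sub_cancel_left, norm_smul, hθ,
      mul_one, Real.norm_eq_abs, abs_of_pos ht, he, Real.rpow_neg ht.le, Real.rpow_natCast]
    rw [show (1 - 1 ^ 2 - 2 * ⟪e, (θ : EuclideanSpace ℝ (Fin n))⟫ * t - t ^ 2) =
      2 * -⟪e, (θ : EuclideanSpace ℝ (Fin n))⟫ * t - t ^ 2 by ring]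
    have ht' : t ^ n = t ^ (n - 1) * t := by rw [← pow_succ, Nat.sub_add_cancel hn]
    rw [ht']
    have := ht.ne'
    field_simp
  simp only [hin]
  rw [integral_mul_const]
  rw [show ((n : ℝ) + 2 * s) / 2 = n / 2 + s by ring, show (2 * s + 1) / 2 = s + 1 / 2 by ring]
    at hsph
  linear_combination (4 ^ s * (Real.Gamma s * Real.Gamma (s + 1) / Real.Gamma (2 * s + 1))) * hsph

theorem real_toSphere_univ (hn : 1 ≤ n) :
    (volume : Measure (EuclideanSpace ℝ (Fin n))).toSphere.real univ =
      2 * √Real.pi ^ n / Real.Gamma ((n : ℝ) / 2) := by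
  have : Nonempty (Fin n) := ⟨⟨0, hn⟩⟩
  have hn' : (n : ℝ) / 2 ≠ 0 := by
    have : (0 : ℝ) < n := by exact_mod_cast hn
    positivity
  have hΓ := (Real.Gamma_pos_of_pos (show 0 < (n : ℝ) / 2 by positivity)).ne'
  rw [measureReal_def, Measure.toSphere_apply_univ, EuclideanSpace.volume_ball]
  simp only [finrank_euclideanSpace_fin, Fintype.card_fin, ENNReal.ofReal_one, one_pow, one_mul,
    ENNReal.toReal_mul, ENNReal.toReal_natCast]
  rw [ENNReal.toReal_ofReal (by positivity), Real.Gamma_add_one hn']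
  have : (n : ℝ) ≠ 0 := fun h => hn' (by rw [h]; simp)
  field_simp

/-- The constant in the boundary value formula is normalized. -/
theorem fracC_mul_kappaC_mul_integral (hn : 1 ≤ n) (hs : s ∈ Ioo (0 : ℝ) 1)
    {e : EuclideanSpace ℝ (Fin n)} (he : ‖e‖ = 1) :
    fracC n s * (kappaC n s / s) * (ballWeightPV n s *
      ∫ z, ballWeight s z * ‖z - e‖ ^ (-(n : ℝ))) = 1 := by
  have hs0 := hs.1
  have hn0 : (0 : ℝ) < n := by exact_mod_cast hn
  have hI := integral_ballWeight_mul_norm_sub_rpow hn hs0 he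
  have g1 := Real.Gamma_pos_of_pos (show 0 < (n : ℝ) / 2 by positivity)
  have g2 := Real.Gamma_pos_of_pos (show 0 < (n : ℝ) / 2 + s by positivity)
  have g3 := Real.Gamma_pos_of_pos hs0
  have g4 := Real.Gamma_pos_of_pos (show 0 < 1 - s by linarith [hs.2])
  have g5 := Real.Gamma_pos_of_pos (show 0 < 2 * s + 1 by positivity)
  have hdup := Real.Gamma_mul_Gamma_add_half (s + 1 / 2)
  rw [show s + 1 / 2 + 1 / 2 = s + 1 by ring, show 2 * (s + 1 / 2) = 2 * s + 1 by ring,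
    show 1 - (2 * s + 1) = -(2 * s) by ring, Real.rpow_neg two_pos.le,
    Real.rpow_mul two_pos.le, Real.rpow_two, show (2 : ℝ) ^ 2 = 4 by norm_num] at hdup
  have hπ : Real.pi ^ ((n : ℝ) / 2) = √Real.pi ^ (n - 1) * √Real.pi := by
    rw [← pow_succ, Nat.sub_add_cancel hn, Real.sqrt_eq_rpow,
      ← Real.rpow_mul_natCast Real.pi_pos.le]
    congr 1
    ring
  have hπ' : √Real.pi ^ n = √Real.pi ^ (n - 1) * √Real.pi := by
    rw [← pow_succ, Nat.sub_add_cancel hn]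
  have hsq : 0 < √Real.pi := Real.sqrt_pos.2 Real.pi_pos
  have h4 : (0 : ℝ) < 4 ^ s := by positivity
  set I := ∫ z, ballWeight s z * ‖z - e‖ ^ (-(n : ℝ)) with hIdef
  have hIval : I = Real.Gamma s * √Real.pi ^ (n - 1) * √Real.pi /
      Real.Gamma ((n : ℝ) / 2 + s) := by
    rw [eq_div_iff g2.ne', hI]
    field_simp at hdup ⊢
    linear_combination hdup
  rw [hIval, fracC, kappaC, ballWeightPV, real_toSphere_univ hn, hπ, hπ']
  field_simp

end BoundaryPotential

section Potentials

variable {n : ℕ} {s : ℝ}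

open EuclideanGeometry in
theorem integral_ballWeight_mul_norm_sub_rpow_inversion (hn : 1 ≤ n)
    {e p : EuclideanSpace ℝ (Fin n)} (hep : e ≠ p) {a : ℝ} (ha0 : 0 < a)
    (ha : a ^ 2 = ‖p‖ ^ 2 - 1) :
    ∫ z, ballWeight s z * ‖z - inversion p a e‖ ^ (-(n : ℝ)) =
      a ^ (2 * s) * ‖e - p‖ ^ (n : ℝ) * ∫ z, ‖z - p‖ ^ (-(n + 2 * s)) *
        (ballWeight s z * ‖z - e‖ ^ (-(n : ℝ))) := by
  have : Nonempty (Fin n) := ⟨⟨0, hn⟩⟩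
  rw [integral_comp_inversion p hn ha0.ne', ← integral_const_mul]
  refine integral_congr_ae ((Measure.ae_ne _ p).mono fun z hz => ?_)
  simp only
  have hd : 0 < ‖z - p‖ := norm_pos_iff.2 (sub_ne_zero.2 hz)
  have he : 0 < ‖e - p‖ := norm_pos_iff.2 (sub_ne_zero.2 hep)
  rw [ballWeight_inversion hz ha0 ha, norm_inversion_sub_inversion hep hz,
    Real.mul_rpow (by positivity) (norm_nonneg _), neg_add, Real.rpow_add hd,
    Real.rpow_neg (show 0 ≤ a ^ 2 / (‖z - p‖ * ‖e - p‖) by positivity), Real.rpow_natCast,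
    Real.rpow_natCast, Real.rpow_neg hd.le, Real.rpow_neg hd.le, Real.rpow_natCast]
  have h1 := (Real.rpow_pos_of_pos hd (2 * s)).ne'
  simp only [div_pow, mul_pow]
  field_simp
  ring

open EuclideanGeometry in
theorem poleFun_eq_integral (hn : 1 ≤ n) (hs : s ∈ Ioo (0 : ℝ) 1)
    {e p : EuclideanSpace ℝ (Fin n)} (he : ‖e‖ = 1) (hp : 1 < ‖p‖) :
    poleFun n p e = fracC n s * (kappaC n s / s) *
      ∫ z, (‖p‖ ^ 2 - 1) ^ s * ballWeightPV n s * poleFun (n + 2 * s) p z *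
        (ballWeight s z * ‖z - e‖ ^ (-(n : ℝ))) := by
  have hb : 0 < ‖p‖ ^ 2 - 1 := by nlinarith
  set a := √(‖p‖ ^ 2 - 1) with hadef
  have ha0 : 0 < a := Real.sqrt_pos.2 hb
  have ha : a ^ 2 = ‖p‖ ^ 2 - 1 := Real.sq_sqrt hb.le
  have hep : e ≠ p := fun h => by rw [h] at he; linarith
  have hd : 0 < ‖e - p‖ := norm_pos_iff.2 (sub_ne_zero.2 hep)
  have he' : ‖inversion p a e‖ = 1 := by
    have h := one_sub_norm_inversion_sq hep ha
    rw [he] at h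
    have h2 : ‖inversion p a e‖ ^ 2 = 1 := by linarith
    exact (pow_eq_one_iff_of_nonneg (norm_nonneg _) two_ne_zero).1 h2
  have has : (‖p‖ ^ 2 - 1) ^ s = a ^ (2 * s) := by
    rw [← ha, ← Real.rpow_natCast_mul ha0.le, Nat.cast_two]
  have hconst := fracC_mul_kappaC_mul_integral hn hs he'
  rw [integral_ballWeight_mul_norm_sub_rpow_inversion hn hep ha0 ha] at hconst
  have hcongr : ∫ z, (‖p‖ ^ 2 - 1) ^ s * ballWeightPV n s * poleFun (n + 2 * s) p z *
      (ballWeight s z * ‖z - e‖ ^ (-(n : ℝ))) = a ^ (2 * s) * ballWeightPV n s *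
      ∫ z, ‖z - p‖ ^ (-(n + 2 * s)) * (ballWeight s z * ‖z - e‖ ^ (-(n : ℝ))) := by
    rw [← integral_const_mul]
    congr 1
    ext z
    have := ballWeight_mul_poleFun hs.1 (n + 2 * s) p z
    rw [has]
    linear_combination a ^ (2 * s) * ballWeightPV n s * ‖z - e‖ ^ (-(n : ℝ)) * this
  rw [hcongr, poleFun_of_norm_le _ p he.le, Real.rpow_neg hd.le, inv_eq_iff_eq_inv]
  refine eq_inv_of_mul_eq_one_left ?_
  linear_combination hconst

theorem integrable_mul_ballWeight_mul_norm_sub_rpow (hn : 1 ≤ n) (hs : 0 < s)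
    {e : EuclideanSpace ℝ (Fin n)} (he : ‖e‖ = 1) {F : EuclideanSpace ℝ (Fin n) → ℝ}
    (hF : Continuous F) :
    Integrable fun z => F z * (ballWeight s z * ‖z - e‖ ^ (-(n : ℝ))) := by
  obtain ⟨M, hM⟩ := (isCompact_closedBall (0 : EuclideanSpace ℝ (Fin n))
    1).exists_bound_of_continuousOn hF.continuousOn
  have hw := integrable_ballWeight_mul_norm_sub_rpow hn hs he
  refine Integrable.mono' (hw.const_mul M) (hF.aestronglyMeasurable.mul hw.1)
    (Eventually.of_forall fun z => ?_)
  have hnn : 0 ≤ ballWeight s z * ‖z - e‖ ^ (-(n : ℝ)) :=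
    mul_nonneg (ballWeight_nonneg z) (by positivity)
  rw [norm_mul, Real.norm_of_nonneg hnn]
  rcases le_or_gt ‖z‖ 1 with h | h
  · exact mul_le_mul_of_nonneg_right (hM z (mem_closedBall_zero_iff.2 h)) hnn
  · rw [ballWeight_of_le_norm hs h.le]
    simp

/-- `IsBoundaryPotential s e F q`: the function `ballWeight s * q` solves the Dirichlet problem
with right-hand side `F` in the unit ball, and `q e` is given by the corresponding boundary
integral. -/
structure IsBoundaryPotential (s : ℝ) (e : EuclideanSpace ℝ (Fin n))
    (F q : EuclideanSpace ℝ (Fin n) → ℝ) : Prop where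
  continuous_rhs : Continuous F
  continuous_factor : Continuous q
  hasPrincipalValue : ∀ x, ‖x‖ < 1 →
    HasPrincipalValue s (fun y => ballWeight s y * q y) x (F x)
  factor_eq : q e = fracC n s * (kappaC n s / s) *
    ∫ z, F z * (ballWeight s z * ‖z - e‖ ^ (-(n : ℝ)))

theorem IsBoundaryPotential.const_mul {e : EuclideanSpace ℝ (Fin n)}
    {F q : EuclideanSpace ℝ (Fin n) → ℝ} (h : IsBoundaryPotential s e F q) (c : ℝ) :
    IsBoundaryPotential s e (fun x => c * F x) (fun x => c * q x) where
  continuous_rhs := continuous_const.mul h.continuous_rhs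
  continuous_factor := continuous_const.mul h.continuous_factor
  hasPrincipalValue x hx := by
    simpa only [mul_left_comm] using (h.hasPrincipalValue x hx).const_mul c
  factor_eq := by
    simp only [mul_assoc c, integral_const_mul]
    rw [h.factor_eq]
    ring

theorem continuous_ballWeight_mul (hs : 0 < s) {q : EuclideanSpace ℝ (Fin n) → ℝ}
    (hq : Continuous q) : Continuous fun y => ballWeight s y * q y :=
  (continuous_ballWeight hs).mul hq

theorem ballWeight_mul_of_le_norm (hs : 0 < s) (q : EuclideanSpace ℝ (Fin n) → ℝ)
    (y : EuclideanSpace ℝ (Fin n)) (hy : 1 ≤ ‖y‖) : ballWeight s y * q y = 0 := by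
  rw [ballWeight_of_le_norm hs hy, zero_mul]

theorem IsBoundaryPotential.add (hn : 1 ≤ n) (hs : 0 < s) {e : EuclideanSpace ℝ (Fin n)}
    (he : ‖e‖ = 1) {F q F' q' : EuclideanSpace ℝ (Fin n) → ℝ} (h : IsBoundaryPotential s e F q)
    (h' : IsBoundaryPotential s e F' q') :
    IsBoundaryPotential s e (fun x => F x + F' x) (fun x => q x + q' x) where
  continuous_rhs := h.continuous_rhs.add h'.continuous_rhs
  continuous_factor := h.continuous_factor.add h'.continuous_factor
  hasPrincipalValue x hx := by
    have hc := continuous_ballWeight_mul hs h.continuous_factor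
    have hc' := continuous_ballWeight_mul hs h'.continuous_factor
    obtain ⟨M, hM⟩ := hc.exists_abs_le_of_eq_zero (ballWeight_mul_of_le_norm hs q)
    obtain ⟨M', hM'⟩ := hc'.exists_abs_le_of_eq_zero (ballWeight_mul_of_le_norm hs q')
    simpa only [mul_add] using (h.hasPrincipalValue x hx).add hn hs (h'.hasPrincipalValue x hx)
      hc.measurable hc'.measurable hM hM'
  factor_eq := by
    simp only [add_mul]
    rw [integral_add (integrable_mul_ballWeight_mul_norm_sub_rpow hn hs he h.continuous_rhs)
      (integrable_mul_ballWeight_mul_norm_sub_rpow hn hs he h'.continuous_rhs), h.factor_eq,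
      h'.factor_eq]
    ring

/-- The restriction of `x ↦ ‖x - p‖ ^ (-N)` to the closed unit ball. -/
noncomputable def poleMap (N : ℝ) (p : {p : EuclideanSpace ℝ (Fin n) // 1 < ‖p‖}) :
    C(closedBall (0 : EuclideanSpace ℝ (Fin n)) 1, ℝ) :=
  ⟨fun z => poleFun N p.1 z.1, (continuous_poleFun N p.2).comp continuous_subtype_val⟩

theorem exists_isBoundaryPotential (hn : 1 ≤ n) (hs : s ∈ Ioo (0 : ℝ) 1)
    {e : EuclideanSpace ℝ (Fin n)} (he : ‖e‖ = 1)
    {f : C(closedBall (0 : EuclideanSpace ℝ (Fin n)) 1, ℝ)}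
    (hf : f ∈ Submodule.span ℝ (range (poleMap (n := n) (n + 2 * s)))) :
    ∃ F q, IsBoundaryPotential s e F q ∧ ∀ z, f z = F z.1 := by
  induction hf using Submodule.span_induction with
  | mem f hf =>
    obtain ⟨⟨p, hp⟩, rfl⟩ := hf
    have hb : 0 < ‖p‖ ^ 2 - 1 := by nlinarith
    have hc : (‖p‖ ^ 2 - 1) ^ s * ballWeightPV n s ≠ 0 :=
      (mul_pos (Real.rpow_pos_of_pos hb _) (ballWeightPV_pos hn hs)).ne'
    have hpole : IsBoundaryPotential s e
        (fun x => (‖p‖ ^ 2 - 1) ^ s * ballWeightPV n s * poleFun (n + 2 * s) p x)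
        (poleFun n p) :=
      ⟨continuous_const.mul (continuous_poleFun _ hp), continuous_poleFun _ hp,
        fun x hx => hasPrincipalValue_ballWeight_mul_poleFun hn hs hp hx,
        poleFun_eq_integral hn hs he hp⟩
    refine ⟨_, _, hpole.const_mul ((‖p‖ ^ 2 - 1) ^ s * ballWeightPV n s)⁻¹, fun z => ?_⟩
    rw [inv_mul_cancel_left₀ hc]
    rfl
  | zero =>
    refine ⟨fun _ => 0, fun _ => 0, ⟨continuous_const, continuous_const, fun x _ => ?_, by simp⟩,
      fun z => rfl⟩
    simp [HasPrincipalValue]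
  | add f g _ _ hf hg =>
    obtain ⟨F, q, h, hF⟩ := hf
    obtain ⟨G, r, h', hG⟩ := hg
    exact ⟨_, _, h.add hn hs.1 he h', fun z => by rw [ContinuousMap.add_apply, hF, hG]⟩
  | smul c f _ hf =>
    obtain ⟨F, q, h, hF⟩ := hf
    exact ⟨_, _, h.const_mul c, fun z => by rw [ContinuousMap.smul_apply, hF, smul_eq_mul]⟩

end Potentials

section RestrictionMem

variable {X : Type*} [TopologicalSpace X] {K : Set X}

/-- The restriction of `g` to `K` is a continuous function belonging to `W`. -/
def RestrictMem (W : Submodule ℝ C(K, ℝ)) (g : X → ℝ) : Prop :=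
  ∃ f ∈ W, ∀ z : K, f z = g z

variable {W : Submodule ℝ C(K, ℝ)}

theorem RestrictMem.congr {g g' : X → ℝ} (h : RestrictMem W g) (hg : ∀ z ∈ K, g z = g' z) :
    RestrictMem W g' := by
  obtain ⟨f, hf, hfg⟩ := h
  exact ⟨f, hf, fun z => (hfg z).trans (hg z z.2)⟩

theorem RestrictMem.add {g g' : X → ℝ} (h : RestrictMem W g) (h' : RestrictMem W g') :
    RestrictMem W fun z => g z + g' z := by
  obtain ⟨f, hf, hfg⟩ := h
  obtain ⟨f', hf', hfg'⟩ := h'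
  exact ⟨f + f', W.add_mem hf hf', fun z => by rw [ContinuousMap.add_apply, hfg, hfg']⟩

theorem RestrictMem.const_mul {g : X → ℝ} (h : RestrictMem W g) (c : ℝ) :
    RestrictMem W fun z => c * g z := by
  obtain ⟨f, hf, hfg⟩ := h
  exact ⟨c • f, W.smul_mem c hf, fun z => by rw [ContinuousMap.smul_apply, hfg, smul_eq_mul]⟩

theorem RestrictMem.sum {ι : Type*} (t : Finset ι) {g : ι → X → ℝ}
    (h : ∀ i ∈ t, RestrictMem W (g i)) : RestrictMem W fun z => ∑ i ∈ t, g i z := by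
  choose! f hf hfg using h
  refine ⟨∑ i ∈ t, f i, W.sum_mem hf, fun z => ?_⟩
  rw [ContinuousMap.sum_apply]
  exact Finset.sum_congr rfl fun i hi => hfg i hi z

theorem RestrictMem.mem {f : C(K, ℝ)} {g : X → ℝ} (h : RestrictMem W g)
    (hf : ∀ z : K, f z = g z) : f ∈ W := by
  obtain ⟨f', hf', hfg⟩ := h
  convert hf'
  ext z
  rw [hf, hfg]

theorem RestrictMem.of_approx [CompactSpace K] (hW : IsClosed (W : Set C(K, ℝ))) {g : X → ℝ}
    (hg : ContinuousOn g K)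
    (h : ∀ ε > 0, ∃ g', RestrictMem W g' ∧ ∀ z ∈ K, |g' z - g z| ≤ ε) : RestrictMem W g := by
  refine ⟨⟨K.domRestrict g, hg.domRestrict⟩, ?_, fun z => rfl⟩
  rw [← SetLike.mem_coe, ← hW.closure_eq, Metric.mem_closure_iff]
  intro ε hε
  obtain ⟨g', ⟨f', hf', hfg'⟩, happ⟩ := h (ε / 2) (by positivity)
  refine ⟨f', hf', lt_of_le_of_lt ?_ (half_lt_self hε)⟩
  rw [ContinuousMap.dist_le (by positivity)]
  intro z
  rw [dist_comm, Real.dist_eq, hfg']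
  exact happ z z.2

/-- A parameter derivative of functions with restriction in a closed subspace again has
restriction in that subspace. -/
theorem RestrictMem.of_hasDerivAt (hK : IsCompact K) (hW : IsClosed (W : Set C(K, ℝ)))
    {G G' : ℝ → X → ℝ} {δ : ℝ} (hδ : 0 < δ) (hG : ∀ h ∈ Icc (-δ) δ, RestrictMem W (G h))
    (hd : ∀ h ∈ Icc (-δ) δ, ∀ z ∈ K, HasDerivAt (fun t => G t z) (G' h z) h)
    (hc : ContinuousOn (Function.uncurry G') (Icc (-δ) δ ×ˢ K)) : RestrictMem W (G' 0) := by
  have : CompactSpace K := isCompact_iff_compactSpace.1 hK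
  have h0 : (0 : ℝ) ∈ Icc (-δ) δ := ⟨by linarith, hδ.le⟩
  have hc0 : ContinuousOn (G' 0) K :=
    hc.comp (f := fun z => ((0 : ℝ), z)) (by fun_prop) fun z hz => ⟨h0, hz⟩
  refine RestrictMem.of_approx hW hc0 fun ε hε => ?_
  obtain ⟨v, hv, hvK⟩ := hK.mem_uniformity_of_prod hc h0 (dist_mem_uniformity hε)
  rw [nhdsWithin_eq_nhds.2 (Icc_mem_nhds (by linarith) hδ)] at hv
  obtain ⟨ρ, hρ, hρv⟩ := Metric.mem_nhds_iff.1 hv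
  set r := min (ρ / 2) δ with hr
  have hr0 : 0 < r := lt_min (by positivity) hδ
  have hrδ : r ≤ δ := min_le_right _ _
  have hrρ : r < ρ := (min_le_left _ _).trans_lt (half_lt_self hρ)
  have hIcc : Icc 0 r ⊆ Icc (-δ) δ := Icc_subset_Icc (by linarith) hrδ
  refine ⟨_, ((hG r (hIcc ⟨hr0.le, le_rfl⟩)).add ((hG 0 h0).const_mul (-1))).const_mul r⁻¹,
    fun z hz => ?_⟩
  obtain ⟨c, hc, hcz⟩ := exists_hasDerivAt_eq_slope (fun t => G t z) (fun t => G' t z) hr0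
    (fun t ht => (hd t (hIcc ht) z hz).continuousAt.continuousWithinAt)
    (fun t ht => hd t (hIcc (Ioo_subset_Icc_self ht)) z hz)
  have hcv : c ∈ v := hρv (by
    rw [mem_ball_zero_iff, Real.norm_eq_abs, abs_of_pos hc.1]
    exact hc.2.trans hrρ)
  have h1 : r⁻¹ * (G r z + -1 * G 0 z) = G' c z := by
    rw [hcz]
    ring
  rw [h1]
  exact le_of_lt (by simpa [Real.dist_eq] using hvK c hcv z hz)

end RestrictionMem

section Density

variable {n : ℕ}
  {W : Submodule ℝ C(closedBall (0 : EuclideanSpace ℝ (Fin n)) 1, ℝ)}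

theorem norm_add_smul_sub_sq_pos {p v z : EuclideanSpace ℝ (Fin n)} (hv : ‖v‖ = 1) {δ h : ℝ}
    (hδ : 1 + δ < ‖p‖) (hh : h ∈ Icc (-δ) δ)
    (hz : z ∈ closedBall (0 : EuclideanSpace ℝ (Fin n)) 1) :
    1 < ‖p + h • v‖ ∧ 0 < ‖p + h • v - z‖ ^ 2 := by
  have hz' := mem_closedBall_zero_iff.1 hz
  have h1 : ‖h • v‖ ≤ δ := by
    rw [norm_smul, hv, mul_one]
    exact abs_le.2 hh
  have h2 : 1 < ‖p + h • v‖ := by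
    have := norm_sub_norm_le p (-(h • v))
    rw [norm_neg, sub_neg_eq_add] at this
    linarith
  have h3 := norm_sub_norm_le (p + h • v) z
  exact ⟨h2, pow_pos (by linarith) 2⟩

theorem hasDerivAt_norm_add_smul_sub_sq (p v z : EuclideanSpace ℝ (Fin n)) (h : ℝ) :
    HasDerivAt (fun t : ℝ => ‖p + t • v - z‖ ^ 2) (2 * ⟪p + h • v - z, v⟫) h := by
  have h1 : HasDerivAt (fun t : ℝ => p + t • v - z) v h := by
    simpa using (((hasDerivAt_id h).smul_const v).const_add p).sub_const z
  exact h1.norm_sq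

theorem hasDerivAt_inner_add_smul_sub (p v z : EuclideanSpace ℝ (Fin n)) (h : ℝ) :
    HasDerivAt (fun t : ℝ => ⟪p + t • v - z, v⟫) (⟪v, v⟫) h := by
  have h1 : HasDerivAt (fun t : ℝ => p + t • v - z) v h := by
    simpa using (((hasDerivAt_id h).smul_const v).const_add p).sub_const z
  simpa using h1.inner ℝ (hasDerivAt_const h v)

theorem RestrictMem.inner_mul_norm_sub_rpow
    (hW : IsClosed (W : Set C(closedBall (0 : EuclideanSpace ℝ (Fin n)) 1, ℝ))) {β : ℝ}
    (hβ : β ≠ 0) (hmem : ∀ p, 1 < ‖p‖ → RestrictMem W fun z => (‖p - z‖ ^ 2) ^ β)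
    {p v : EuclideanSpace ℝ (Fin n)} (hp : 1 < ‖p‖) (hv : ‖v‖ = 1) :
    RestrictMem W fun z => ⟪p - z, v⟫ * (‖p - z‖ ^ 2) ^ (β - 1) := by
  obtain ⟨δ, hδ, hδp⟩ : ∃ δ > 0, 1 + δ < ‖p‖ := ⟨(‖p‖ - 1) / 2, by linarith, by linarith⟩
  have h := RestrictMem.of_hasDerivAt (isCompact_closedBall _ _) hW hδ
    (G := fun t z => (‖p + t • v - z‖ ^ 2) ^ β)
    (G' := fun t z => 2 * ⟪p + t • v - z, v⟫ * β * (‖p + t • v - z‖ ^ 2) ^ (β - 1))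
    (fun h hh => hmem _ (norm_add_smul_sub_sq_pos hv hδp hh (mem_closedBall_self zero_le_one)).1)
    (fun h hh z hz => (hasDerivAt_norm_add_smul_sub_sq p v z h).rpow_const
      (Or.inl (norm_add_smul_sub_sq_pos hv hδp hh hz).2.ne'))
    (by
      refine ContinuousOn.mul (Continuous.continuousOn (by fun_prop))
        (ContinuousOn.rpow_const (Continuous.continuousOn (by fun_prop)) fun x hx => Or.inl ?_)
      exact (norm_add_smul_sub_sq_pos hv hδp hx.1 hx.2).2.ne')
  refine (h.const_mul (2 * β)⁻¹).congr fun z _ => ?_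
  simp only [zero_smul, add_zero]
  field_simp

theorem RestrictMem.second_order
    (hW : IsClosed (W : Set C(closedBall (0 : EuclideanSpace ℝ (Fin n)) 1, ℝ))) {β : ℝ}
    (hβ : β ≠ 0) (hmem : ∀ p, 1 < ‖p‖ → RestrictMem W fun z => (‖p - z‖ ^ 2) ^ β)
    {p v : EuclideanSpace ℝ (Fin n)} (hp : 1 < ‖p‖) (hv : ‖v‖ = 1) :
    RestrictMem W fun z => (‖p - z‖ ^ 2) ^ (β - 1) +
      2 * (β - 1) * ⟪p - z, v⟫ ^ 2 * (‖p - z‖ ^ 2) ^ (β - 2) := by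
  obtain ⟨δ, hδ, hδp⟩ : ∃ δ > 0, 1 + δ < ‖p‖ := ⟨(‖p‖ - 1) / 2, by linarith, by linarith⟩
  have h := RestrictMem.of_hasDerivAt (isCompact_closedBall _ _) hW hδ
    (G := fun t z => ⟪p + t • v - z, v⟫ * (‖p + t • v - z‖ ^ 2) ^ (β - 1))
    (G' := fun t z => ⟪v, v⟫ * (‖p + t • v - z‖ ^ 2) ^ (β - 1) + ⟪p + t • v - z, v⟫ *
      (2 * ⟪p + t • v - z, v⟫ * (β - 1) * (‖p + t • v - z‖ ^ 2) ^ (β - 1 - 1)))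
    (fun h hh => RestrictMem.inner_mul_norm_sub_rpow hW hβ hmem
      (norm_add_smul_sub_sq_pos hv hδp hh (mem_closedBall_self zero_le_one)).1 hv)
    (fun h hh z hz => (hasDerivAt_inner_add_smul_sub p v z h).mul
      ((hasDerivAt_norm_add_smul_sub_sq p v z h).rpow_const
        (Or.inl (norm_add_smul_sub_sq_pos hv hδp hh hz).2.ne')))
    (by
      have hr : ∀ γ : ℝ, ContinuousOn (fun x : ℝ × EuclideanSpace ℝ (Fin n) =>
          (‖p + x.1 • v - x.2‖ ^ 2) ^ γ) (Icc (-δ) δ ×ˢ closedBall 0 1) := fun γ =>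
        ContinuousOn.rpow_const (Continuous.continuousOn (by fun_prop)) fun x hx =>
          Or.inl (norm_add_smul_sub_sq_pos hv hδp hx.1 hx.2).2.ne'
      exact ((Continuous.continuousOn (by fun_prop)).mul (hr _)).add
        ((Continuous.continuousOn (by fun_prop)).mul
          ((Continuous.continuousOn (by fun_prop)).mul (hr _))))
  refine h.congr fun z _ => ?_
  simp only [zero_smul, add_zero]
  rw [real_inner_self_eq_norm_sq, hv, show β - 1 - 1 = β - 2 by ring]
  ring

theorem RestrictMem.norm_sub_rpow_sub_one
    (hW : IsClosed (W : Set C(closedBall (0 : EuclideanSpace ℝ (Fin n)) 1, ℝ))) {β : ℝ}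
    (hβ : β ≠ 0) (hβn : (n : ℝ) + 2 * (β - 1) ≠ 0)
    (hmem : ∀ p, 1 < ‖p‖ → RestrictMem W fun z => (‖p - z‖ ^ 2) ^ β)
    {p : EuclideanSpace ℝ (Fin n)} (hp : 1 < ‖p‖) :
    RestrictMem W fun z => (‖p - z‖ ^ 2) ^ (β - 1) := by
  have h := RestrictMem.sum Finset.univ fun (i : Fin n) _ => RestrictMem.second_order hW hβ hmem hp
    (v := EuclideanSpace.single i 1) (by simp)
  refine (h.const_mul ((n : ℝ) + 2 * (β - 1))⁻¹).congr fun z hz => ?_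
  have hpos : 0 < ‖p - z‖ ^ 2 := by
    have h1 := norm_sub_norm_le p z
    have h2 := mem_closedBall_zero_iff.1 hz
    exact pow_pos (by linarith) 2
  have hsum : ∑ i, ⟪p - z, EuclideanSpace.single i (1 : ℝ)⟫ ^ 2 = ‖p - z‖ ^ 2 := by
    rw [EuclideanSpace.norm_sq_eq]
    simp [EuclideanSpace.inner_single_right]
  rw [Finset.sum_add_distrib, ← Finset.sum_mul, ← Finset.mul_sum, hsum,
    show β - 1 = (β - 2) + 1 by ring, Real.rpow_add_one hpos.ne']
  rw [show β - 1 = (β - 2) + 1 by ring] at hβn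
  simp only [Finset.sum_const, Finset.card_univ, Fintype.card_fin, nsmul_eq_mul]
  field_simp

theorem RestrictMem.norm_sub_rpow_sub_natCast
    (hW : IsClosed (W : Set C(closedBall (0 : EuclideanSpace ℝ (Fin n)) 1, ℝ))) {β : ℝ}
    (hβ : β < 0) (hβn : (n : ℝ) + 2 * β ≤ 0)
    (hmem : ∀ p, 1 < ‖p‖ → RestrictMem W fun z => (‖p - z‖ ^ 2) ^ β) (j : ℕ) :
    ∀ p, 1 < ‖p‖ → RestrictMem W fun z => (‖p - z‖ ^ 2) ^ (β - j) := by
  induction j with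
  | zero => simpa using hmem
  | succ j ih =>
    intro p hp
    have hj : (0 : ℝ) ≤ j := j.cast_nonneg
    have := RestrictMem.norm_sub_rpow_sub_one hW (β := β - j) (by linarith) (by linarith) ih hp
    rwa [sub_sub, ← Nat.cast_succ] at this

end Density

section Density

variable {n : ℕ}
  {W : Submodule ℝ C(closedBall (0 : EuclideanSpace ℝ (Fin n)) 1, ℝ)}

theorem RestrictMem.exp_norm_sub_sq
    (hW : IsClosed (W : Set C(closedBall (0 : EuclideanSpace ℝ (Fin n)) 1, ℝ))) {β : ℝ}
    (hβ : β < 0) (hβn : (n : ℝ) + 2 * β ≤ 0)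
    (hmem : ∀ p, 1 < ‖p‖ → RestrictMem W fun z => (‖p - z‖ ^ 2) ^ β)
    {p : EuclideanSpace ℝ (Fin n)} (hp : 1 < ‖p‖) (t : ℝ) :
    RestrictMem W fun z => Real.exp (-t * ‖p - z‖ ^ 2) := by
  have hm0 : 0 < ‖p‖ - 1 := by linarith
  set a := ((‖p‖ + 1) ^ 2)⁻¹ with ha
  set b := ((‖p‖ - 1) ^ 2)⁻¹ with hb
  have ha0 : 0 < a := by positivity
  have hQ : ∀ z ∈ closedBall (0 : EuclideanSpace ℝ (Fin n)) 1,
      0 < ‖p - z‖ ^ 2 ∧ (‖p - z‖ ^ 2)⁻¹ ∈ Icc a b := fun z hz => by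
    have h0 := mem_closedBall_zero_iff.1 hz
    have h1 := norm_sub_norm_le p z
    have h2 := norm_sub_le p z
    have h3 : 0 < ‖p - z‖ := by linarith
    refine ⟨by positivity, ?_, ?_⟩
    · rw [ha]
      gcongr
      linarith
    · rw [hb]
      gcongr
      linarith
  have hcont : ContinuousOn (fun y : ℝ => Real.exp (-t * y⁻¹) * y ^ β) (Icc a b) := by
    have hne : ∀ y ∈ Icc a b, y ≠ 0 := fun y hy => (ha0.trans_le hy.1).ne'
    refine ContinuousOn.mul (Real.continuous_exp.comp_continuousOn
      (continuousOn_const.mul (continuousOn_inv₀.mono hne))) ?_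
    exact continuousOn_id.rpow_const fun y hy => Or.inl (hne y hy)
  have hb0 : 0 < b := by positivity
  refine RestrictMem.of_approx hW (Continuous.continuousOn (by fun_prop)) fun ε hε => ?_
  obtain ⟨P, hP⟩ := exists_polynomial_near_of_continuousOn a b _ hcont (ε / b ^ (-β))
    (by positivity)
  refine ⟨_, RestrictMem.sum P.support fun j _ =>
    (RestrictMem.norm_sub_rpow_sub_natCast hW hβ hβn hmem j p hp).const_mul (P.coeff j),
    fun z hz => ?_⟩
  obtain ⟨hz0, hzab⟩ := hQ z hz
  set Q := ‖p - z‖ ^ 2 with hQdef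
  have h1 : ∑ j ∈ P.support, P.coeff j * Q ^ (β - j) = Q ^ β * P.eval Q⁻¹ := by
    rw [Polynomial.eval_eq_sum, Polynomial.sum, Finset.mul_sum]
    refine Finset.sum_congr rfl fun j _ => ?_
    rw [Real.rpow_sub hz0, Real.rpow_natCast, inv_pow]
    ring
  have h2 : Real.exp (-t * Q) = Q ^ β * (Real.exp (-t * Q⁻¹⁻¹) * Q⁻¹ ^ β) := by
    rw [inv_inv, Real.inv_rpow hz0.le]
    have := (Real.rpow_pos_of_pos hz0 β).ne'
    field_simp
  have h3 : Q ^ β ≤ b ^ (-β) := by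
    rw [← neg_neg β, Real.rpow_neg hz0.le, neg_neg, ← Real.inv_rpow hz0.le]
    exact Real.rpow_le_rpow (by positivity) hzab.2 (by linarith)
  rw [h1, h2, ← mul_sub, abs_mul, abs_of_pos (Real.rpow_pos_of_pos hz0 β)]
  calc Q ^ β * |P.eval Q⁻¹ - Real.exp (-t * Q⁻¹⁻¹) * Q⁻¹ ^ β|
      ≤ b ^ (-β) * (ε / b ^ (-β)) :=
        mul_le_mul h3 (hP _ hzab).le (abs_nonneg _) (by positivity)
    _ = ε := by
      have := (Real.rpow_pos_of_pos hb0 (-β)).ne'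
      field_simp

theorem RestrictMem.exp_inner_of_ne_zero
    (hW : IsClosed (W : Set C(closedBall (0 : EuclideanSpace ℝ (Fin n)) 1, ℝ))) {β : ℝ}
    (hβ : β < 0) (hβn : (n : ℝ) + 2 * β ≤ 0)
    (hmem : ∀ p, 1 < ‖p‖ → RestrictMem W fun z => (‖p - z‖ ^ 2) ^ β)
    {ξ : EuclideanSpace ℝ (Fin n)} (hξ : ξ ≠ 0) :
    RestrictMem W fun z => Real.exp ⟪ξ, z⟫ := by
  have hξ0 : 0 < ‖ξ‖ := norm_pos_iff.2 hξ
  refine RestrictMem.of_approx hW (Continuous.continuousOn (by fun_prop)) fun ε hε => ?_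
  obtain ⟨r, hr1, hr2⟩ : ∃ r : ℝ, 1 / ‖ξ‖ < r ∧ Real.exp ‖ξ‖ / ε < r :=
    ⟨max (1 / ‖ξ‖) (Real.exp ‖ξ‖ / ε) + 1, by linarith [le_max_left (1 / ‖ξ‖) (Real.exp ‖ξ‖ / ε)],
      by linarith [le_max_right (1 / ‖ξ‖) (Real.exp ‖ξ‖ / ε)]⟩
  have hr0 : 0 < r := lt_trans (by positivity) hr1
  have hp : 1 < ‖r • ξ‖ := by
    rw [norm_smul, Real.norm_of_nonneg hr0.le]
    rwa [div_lt_iff₀ hξ0] at hr1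
  refine ⟨_, (RestrictMem.exp_norm_sub_sq hW hβ hβn hmem hp (1 / (2 * r))).const_mul
    (Real.exp (1 / (2 * r) * ‖r • ξ‖ ^ 2)), fun z hz => ?_⟩
  have hz' := mem_closedBall_zero_iff.1 hz
  have h1 : Real.exp (1 / (2 * r) * ‖r • ξ‖ ^ 2) * Real.exp (-(1 / (2 * r)) * ‖r • ξ - z‖ ^ 2) =
      Real.exp ⟪ξ, z⟫ * Real.exp (-(‖z‖ ^ 2 / (2 * r))) := by
    rw [← Real.exp_add, ← Real.exp_add, norm_sub_sq_real, inner_smul_left, RCLike.conj_to_real]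
    congr 1
    field_simp
    ring
  set d := ‖z‖ ^ 2 / (2 * r) with hd
  have hd0 : 0 ≤ d := by positivity
  have hd1 : d ≤ 1 / r := by
    rw [hd, div_le_div_iff₀ (by positivity) hr0]
    nlinarith [pow_le_one₀ (n := 2) (norm_nonneg z) hz']
  have h2 : |Real.exp (-d) - 1| ≤ d := by
    rw [abs_sub_comm, abs_of_nonneg (by simpa using hd0)]
    linarith [Real.add_one_le_exp (-d)]
  have h3 : Real.exp ⟪ξ, z⟫ ≤ Real.exp ‖ξ‖ := by
    refine Real.exp_le_exp.2 ((real_inner_le_norm _ _).trans ?_)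
    exact mul_le_of_le_one_right hξ0.le hz'
  rw [h1, ← mul_sub_one, abs_mul, abs_of_pos (Real.exp_pos _)]
  calc Real.exp ⟪ξ, z⟫ * |Real.exp (-d) - 1| ≤ Real.exp ‖ξ‖ * (1 / r) :=
        mul_le_mul h3 (h2.trans hd1) (abs_nonneg _) (Real.exp_pos _).le
    _ ≤ ε := by
      rw [div_lt_iff₀ hε] at hr2
      rw [mul_one_div, div_le_iff₀ hr0]
      linarith

theorem RestrictMem.exp_inner (hn : 1 ≤ n)
    (hW : IsClosed (W : Set C(closedBall (0 : EuclideanSpace ℝ (Fin n)) 1, ℝ))) {β : ℝ}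
    (hβ : β < 0) (hβn : (n : ℝ) + 2 * β ≤ 0)
    (hmem : ∀ p, 1 < ‖p‖ → RestrictMem W fun z => (‖p - z‖ ^ 2) ^ β)
    (ξ : EuclideanSpace ℝ (Fin n)) :
    RestrictMem W fun z => Real.exp ⟪ξ, z⟫ := by
  rcases eq_or_ne ξ 0 with rfl | hξ
  swap
  · exact RestrictMem.exp_inner_of_ne_zero hW hβ hβn hmem hξ
  refine RestrictMem.of_approx hW (Continuous.continuousOn (by fun_prop)) fun ε hε => ?_
  set η := min 1 (ε / 2) with hη
  have hη0 : 0 < η := by positivity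
  set v : EuclideanSpace ℝ (Fin n) := EuclideanSpace.single ⟨0, hn⟩ η with hv
  have hvn : ‖v‖ = η := by simp [hv, abs_of_pos hη0]
  have hv0 : v ≠ 0 := norm_pos_iff.1 (by rw [hvn]; exact hη0)
  refine ⟨_, RestrictMem.exp_inner_of_ne_zero hW hβ hβn hmem hv0, fun z hz => ?_⟩
  have hz' := mem_closedBall_zero_iff.1 hz
  have h1 : |⟪v, z⟫| ≤ η := by
    refine (abs_real_inner_le_norm _ _).trans ?_
    rw [hvn]
    exact mul_le_of_le_one_right hη0.le hz'
  rw [inner_zero_left, Real.exp_zero]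
  refine (Real.abs_exp_sub_one_le (h1.trans (min_le_left _ _))).trans ?_
  linarith [min_le_right (1 : ℝ) (ε / 2)]

/-- The restriction of `z ↦ exp ⟪ξ, z⟫` to the closed unit ball. -/
noncomputable def expInnerMap (ξ : EuclideanSpace ℝ (Fin n)) :
    C(closedBall (0 : EuclideanSpace ℝ (Fin n)) 1, ℝ) :=
  ⟨fun z => Real.exp ⟪ξ, z.1⟫, by fun_prop⟩

theorem span_expInnerMap_dense :
    (Submodule.span ℝ (range (expInnerMap (n := n)))).topologicalClosure = ⊤ := by
  set M : Submonoid C(closedBall (0 : EuclideanSpace ℝ (Fin n)) 1, ℝ) :=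
    { carrier := range expInnerMap
      one_mem' := ⟨0, by ext z; simp [expInnerMap]⟩
      mul_mem' := by
        rintro _ _ ⟨ξ, rfl⟩ ⟨ζ, rfl⟩
        refine ⟨ξ + ζ, ?_⟩
        ext z
        simp [expInnerMap, inner_add_left, Real.exp_add] } with hM
  have hspan : Subalgebra.toSubmodule (Algebra.adjoin ℝ (M : Set C(closedBall
      (0 : EuclideanSpace ℝ (Fin n)) 1, ℝ))) = Submodule.span ℝ (range expInnerMap) := by
    rw [Algebra.adjoin_eq_span, Submonoid.closure_eq]
    rfl
  have hsep : (Algebra.adjoin ℝ (M : Set C(closedBall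
      (0 : EuclideanSpace ℝ (Fin n)) 1, ℝ))).SeparatesPoints := by
    intro x y hxy
    refine ⟨_, ⟨expInnerMap (x.1 - y.1), Algebra.subset_adjoin ⟨_, rfl⟩, rfl⟩, fun h => hxy ?_⟩
    have h1 : ⟪x.1 - y.1, x.1⟫ = ⟪x.1 - y.1, y.1⟫ := Real.exp_injective h
    rw [← sub_eq_zero, ← inner_sub_right, inner_self_eq_zero, sub_eq_zero] at h1
    exact Subtype.ext h1
  have htop := ContinuousMap.subalgebra_topologicalClosure_eq_top_of_separatesPoints _ hsep
  rw [← hspan]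
  ext f
  have hf : f ∈ (Algebra.adjoin ℝ (M : Set C(closedBall
      (0 : EuclideanSpace ℝ (Fin n)) 1, ℝ))).topologicalClosure := by
    rw [htop]
    trivial
  exact ⟨fun _ => trivial, fun _ => hf⟩

/-- Linear combinations of the functions `‖z - p‖ ^ (-N)` with poles `p` outside the closed unit
ball are dense in the continuous functions on the closed unit ball. -/
theorem span_poleMap_dense (hn : 1 ≤ n) {N : ℝ} (hN : (n : ℝ) ≤ N) :
    (Submodule.span ℝ (range (poleMap (n := n) N))).topologicalClosure = ⊤ := by
  set W := (Submodule.span ℝ (range (poleMap (n := n) N))).topologicalClosure with hW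
  have hWc : IsClosed (W : Set C(closedBall (0 : EuclideanSpace ℝ (Fin n)) 1, ℝ)) :=
    Submodule.isClosed_topologicalClosure _
  have hn0 : (1 : ℝ) ≤ n := by exact_mod_cast hn
  have hmem : ∀ p : EuclideanSpace ℝ (Fin n), 1 < ‖p‖ →
      RestrictMem W fun z => (‖p - z‖ ^ 2) ^ (-N / 2) := fun p hp => by
    refine ⟨poleMap N ⟨p, hp⟩, Submodule.le_topologicalClosure _
      (Submodule.subset_span ⟨_, rfl⟩), fun z => ?_⟩
    change poleFun N p z.1 = (‖p - z.1‖ ^ 2) ^ (-N / 2)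
    rw [poleFun_of_norm_le N p (mem_closedBall_zero_iff.1 z.2), norm_sub_rev,
      ← Real.rpow_natCast_mul (norm_nonneg _)]
    congr 1
    push_cast
    ring
  rw [eq_top_iff, ← span_expInnerMap_dense]
  refine Submodule.topologicalClosure_minimal _ (Submodule.span_le.2 ?_) hWc
  rintro _ ⟨ξ, rfl⟩
  exact (RestrictMem.exp_inner hn hWc (by linarith) (by linarith) hmem ξ).mem fun z => rfl

end Density

section BoundaryLimit

variable {n : ℕ} {s : ℝ}

theorem tendsto_rpow_neg_mul_ballWeight (hs : 0 < s) {e ω : EuclideanSpace ℝ (Fin n)}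
    (he : ‖e‖ = 1) (hω : ‖ω‖ = 1) :
    Tendsto (fun ε : ℝ => ε ^ (-s) * ballWeight s (e + ε • ω)) (nhdsWithin 0 (Ioi 0))
      (nhds (2 ^ s * max (-⟪e, ω⟫) 0 ^ s)) := by
  have hc : Continuous fun ε : ℝ => max (-2 * ⟪e, ω⟫ - ε) 0 ^ s :=
    Continuous.rpow_const (by fun_prop) fun _ => Or.inr hs.le
  have h0 : max (-2 * ⟪e, ω⟫ - 0) 0 ^ s = 2 ^ s * max (-⟪e, ω⟫) 0 ^ s := by
    rw [← Real.mul_rpow zero_le_two (le_max_right _ _), mul_max_of_nonneg _ _ zero_le_two]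
    ring_nf
  rw [← h0]
  refine ((hc.tendsto 0).mono_left nhdsWithin_le_nhds).congr' ?_
  filter_upwards [self_mem_nhdsWithin] with ε (hε : 0 < ε)
  rw [ballWeight_add_smul e ω hω, he, Real.rpow_neg hε.le, ← Real.inv_rpow hε.le,
    ← Real.mul_rpow (inv_nonneg.2 hε.le) (le_max_right _ _),
    mul_max_of_nonneg _ _ (inv_nonneg.2 hε.le)]
  congr 2
  · field_simp
    ring
  · rw [mul_zero]

/-- A function with continuous fractional Laplacian `g` in the unit ball and vanishing outside is,
up to a small multiple of `ballWeight`, the product of `ballWeight` with a continuous function whose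
value at `e` is close to the one predicted by `g`. -/
theorem exists_continuous_factor (hn : 1 ≤ n) (hs : s ∈ Ioo (0 : ℝ) 1)
    {e : EuclideanSpace ℝ (Fin n)} (he : ‖e‖ = 1) {v g : EuclideanSpace ℝ (Fin n) → ℝ}
    (hv : Continuous v) (hv0 : ∀ y, 1 ≤ ‖y‖ → v y = 0) (hg : Continuous g)
    (hvg : ∀ x, ‖x‖ < 1 → HasPrincipalValue s v x (g x)) {δ : ℝ} (hδ : 0 < δ) :
    ∃ q : EuclideanSpace ℝ (Fin n) → ℝ, Continuous q ∧
      (∀ x, |v x - ballWeight s x * q x| ≤ δ / ballWeightPV n s * ballWeight s x) ∧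
      |q e - fracC n s * (kappaC n s / s) *
        ∫ z, g z * (ballWeight s z * ‖z - e‖ ^ (-(n : ℝ)))| ≤
      |fracC n s * (kappaC n s / s)| *
        (δ * ∫ z, ballWeight s z * ‖z - e‖ ^ (-(n : ℝ))) := by
  let g' : C(closedBall (0 : EuclideanSpace ℝ (Fin n)) 1, ℝ) :=
    ⟨fun z => g z.1, hg.comp continuous_subtype_val⟩
  have hmem : g' ∈
      (Submodule.span ℝ (range (poleMap (n := n) (n + 2 * s)))).topologicalClosure := by
    rw [span_poleMap_dense hn (by linarith [hs.1])]
    trivial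
  obtain ⟨f, hf, hfδ⟩ := Metric.mem_closure_iff.1 hmem δ hδ
  obtain ⟨F, q, hFq, hfF⟩ := exists_isBoundaryPotential hn hs he hf
  have hdist : ∀ x, ‖x‖ ≤ 1 → |g x - F x| < δ := fun x hx => by
    have := (ContinuousMap.dist_apply_le_dist (f := g') (g := f)
      ⟨x, mem_closedBall_zero_iff.2 hx⟩).trans_lt hfδ
    rwa [hfF, Real.dist_eq] at this
  have hwq := continuous_ballWeight_mul hs.1 hFq.continuous_factor
  obtain ⟨M, hM⟩ := hv.exists_abs_le_of_eq_zero hv0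
  obtain ⟨M', hM'⟩ := hwq.exists_abs_le_of_eq_zero (ballWeight_mul_of_le_norm hs.1 q)
  refine ⟨q, hFq.continuous_factor, ?_, ?_⟩
  · refine abs_le_ballWeight_of_hasPrincipalValue hn hs
      (v := fun y => v y - ballWeight s y * q y) (hv.sub hwq)
      (fun y hy => by rw [hv0 y hy, ballWeight_mul_of_le_norm hs.1 q y hy, sub_zero])
      (fun x hx => (hvg x hx).sub hn hs.1 (hFq.hasPrincipalValue x hx) hv.measurable
        hwq.measurable hM hM') fun x hx => hdist x hx.le
  · rw [hFq.factor_eq, ← mul_sub, abs_mul, ← integral_sub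
      (integrable_mul_ballWeight_mul_norm_sub_rpow hn hs.1 he hFq.continuous_rhs)
      (integrable_mul_ballWeight_mul_norm_sub_rpow hn hs.1 he hg), ← integral_const_mul]
    refine mul_le_mul_of_nonneg_left ?_ (abs_nonneg _)
    rw [← Real.norm_eq_abs]
    refine norm_integral_le_of_norm_le
      ((integrable_ballWeight_mul_norm_sub_rpow hn hs.1 he).const_mul δ)
      (Eventually.of_forall fun z => ?_)
    rw [← sub_mul, norm_mul, Real.norm_eq_abs, abs_sub_comm, Real.norm_of_nonneg
      (mul_nonneg (ballWeight_nonneg z) (Real.rpow_nonneg (norm_nonneg _) _))]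
    rcases le_or_gt ‖z‖ 1 with hz | hz
    · exact mul_le_mul_of_nonneg_right (hdist z hz).le
        (mul_nonneg (ballWeight_nonneg z) (Real.rpow_nonneg (norm_nonneg _) _))
    · simp [ballWeight_of_le_norm hs.1 hz.le]

/-- Boundary behaviour of a function with continuous fractional Laplacian in the unit ball and
vanishing outside. -/
theorem tendsto_rpow_neg_mul_of_hasPrincipalValue (hn : 1 ≤ n) (hs : s ∈ Ioo (0 : ℝ) 1)
    {e ω : EuclideanSpace ℝ (Fin n)} (he : ‖e‖ = 1) (hω : ‖ω‖ = 1)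
    {v g : EuclideanSpace ℝ (Fin n) → ℝ}
    (hv : Continuous v) (hv0 : ∀ y, 1 ≤ ‖y‖ → v y = 0) (hg : Continuous g)
    (hvg : ∀ x, ‖x‖ < 1 → HasPrincipalValue s v x (g x)) :
    Tendsto (fun ε : ℝ => ε ^ (-s) * v (e + ε • ω)) (nhdsWithin 0 (Ioi 0))
      (nhds (2 ^ s * max (-⟪e, ω⟫) 0 ^ s * (fracC n s * (kappaC n s / s) *
        ∫ z, g z * (ballWeight s z * ‖z - e‖ ^ (-(n : ℝ)))))) := by
  have hm := tendsto_rpow_neg_mul_ballWeight hs.1 he hω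
  have hP := ballWeightPV_pos hn hs
  have hI : 0 ≤ ∫ z, ballWeight s z * ‖z - e‖ ^ (-(n : ℝ)) := integral_nonneg fun z =>
    mul_nonneg (ballWeight_nonneg z) (Real.rpow_nonneg (norm_nonneg _) _)
  have hA : 0 ≤ 2 ^ s * max (-⟪e, ω⟫) 0 ^ s :=
    mul_nonneg (by positivity) (Real.rpow_nonneg (le_max_right _ _) _)
  have happrox := fun δ (hδ : (0 : ℝ) < δ) => exists_continuous_factor hn hs he hv hv0 hg hvg hδ
  generalize fracC n s * (kappaC n s / s) = K at *
  generalize ∫ z, g z * (ballWeight s z * ‖z - e‖ ^ (-(n : ℝ))) = Q at *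
  generalize ∫ z, ballWeight s z * ‖z - e‖ ^ (-(n : ℝ)) = I at *
  generalize 2 ^ s * max (-⟪e, ω⟫) 0 ^ s = A at *
  set C := A * (|K| * I) + A / ballWeightPV n s with hC
  have hC0 : 0 ≤ C := by positivity
  refine Metric.tendsto_nhds.2 fun η hη => ?_
  obtain ⟨q, hq, hvq, hqe⟩ := happrox (η / (C + 1)) (by positivity)
  set δ := η / (C + 1) with hδ
  have hδη : C * δ < η := by
    rw [hδ, mul_div_assoc', div_lt_iff₀ (by positivity)]
    linarith
  have hqt : Tendsto (fun ε : ℝ => q (e + ε • ω)) (nhdsWithin 0 (Ioi 0)) (nhds (q e)) := by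
    have hc : Continuous fun ε : ℝ => q (e + ε • ω) := by fun_prop
    simpa using (hc.tendsto 0).mono_left (nhdsWithin_le_nhds (s := Ioi 0))
  have hlim := (((hm.mul hqt).sub_const (A * (K * Q))).abs).add
    (hm.const_mul (δ / ballWeightPV n s))
  have hlt : |A * q e - A * (K * Q)| + δ / ballWeightPV n s * A < η := by
    refine lt_of_le_of_lt ?_ hδη
    rw [← mul_sub, abs_mul, abs_of_nonneg hA]
    calc A * |q e - K * Q| + δ / ballWeightPV n s * A
        ≤ A * (|K| * (δ * I)) + δ / ballWeightPV n s * A := by gcongr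
      _ = C * δ := by rw [hC]; ring
  filter_upwards [hlim.eventually_lt_const hlt, self_mem_nhdsWithin] with ε hε (hε0 : 0 < ε)
  refine lt_of_le_of_lt ?_ hε
  have hp : 0 ≤ ε ^ (-s) := Real.rpow_nonneg hε0.le _
  rw [Real.dist_eq]
  calc |ε ^ (-s) * v (e + ε • ω) - A * (K * Q)|
      = |(ε ^ (-s) * ballWeight s (e + ε • ω) * q (e + ε • ω) - A * (K * Q)) +
          ε ^ (-s) * (v (e + ε • ω) - ballWeight s (e + ε • ω) * q (e + ε • ω))| := by
        congr 1
        ring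
    _ ≤ _ := abs_add_le _ _
    _ ≤ _ := by
        rw [abs_mul (ε ^ (-s)), abs_of_nonneg hp]
        have := mul_le_mul_of_nonneg_left (hvq (e + ε • ω)) hp
        linarith

end BoundaryLimit

/-- Boundary behavior of the first Dirichlet eigenfunction `φ⋆` of `(-Δ)^s` in `B₁`:
for every `ω ∈ ∂B₁`, `lim_{ε→0⁺} ε^{-s} φ⋆(e+εω) = κ⋆ λ⋆ (-e·ω)₊^s`. -/
theorem eigenfunction_boundary_limit
    (n : ℕ) (hn : 1 ≤ n) (s : ℝ) (hs : s ∈ Set.Ioo (0 : ℝ) 1)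
    (e : EuclideanSpace ℝ (Fin n)) (he : ‖e‖ = 1)
    (φ : EuclideanSpace ℝ (Fin n) → ℝ) (lam : ℝ) (hlam : 0 < lam)
    (hφc : Continuous φ)
    (hφ0 : ∀ z ∉ Metric.ball (0 : EuclideanSpace ℝ (Fin n)) 1, φ z = 0)
    (hφpos : ∀ z ∈ Metric.ball (0 : EuclideanSpace ℝ (Fin n)) 1, 0 < φ z)
    (hφL2 : ∫ z in Metric.ball (0 : EuclideanSpace ℝ (Fin n)) 1, φ z ^ 2 = 1)
    (hφHolder : ∃ C : ℝ, ∀ x y : EuclideanSpace ℝ (Fin n), |φ x - φ y| ≤ C * ‖x - y‖ ^ s)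
    (hφeig : ∀ x ∈ Metric.ball (0 : EuclideanSpace ℝ (Fin n)) 1,
      HasFracLap n s φ x (lam * φ x))
    (κ : ℝ)
    (hκ : κ = 2 ^ s * kappaC n s *
      ∫ z in Metric.ball (0 : EuclideanSpace ℝ (Fin n)) 1,
        φ z * (1 - ‖z‖ ^ 2) ^ s / (s * ‖z - e‖ ^ n))
    (ω : EuclideanSpace ℝ (Fin n)) (hω : ‖ω‖ = 1) :
    Tendsto (fun ε : ℝ => ε ^ (-s) * φ (e + ε • ω))
      (nhdsWithin 0 (Set.Ioi 0))
      (nhds (κ * lam * max (-⟪e, ω⟫) 0 ^ s)) := by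
  have hv0 : ∀ y, 1 ≤ ‖y‖ → φ y = 0 := fun y hy =>
    hφ0 y fun h => (mem_ball_zero_iff.1 h).not_ge hy
  have hfC := (fracC_pos (n := n) hs).ne'
  have hκ' : ∫ z in ball (0 : EuclideanSpace ℝ (Fin n)) 1,
      φ z * (1 - ‖z‖ ^ 2) ^ s / (s * ‖z - e‖ ^ n) =
      s⁻¹ * ∫ z, φ z * (ballWeight s z * ‖z - e‖ ^ (-(n : ℝ))) := by
    have hzero : ∀ z ∉ ball (0 : EuclideanSpace ℝ (Fin n)) 1,
        s⁻¹ * (φ z * (ballWeight s z * ‖z - e‖ ^ (-(n : ℝ)))) = 0 := fun z hz => by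
      rw [hφ0 z hz, zero_mul, mul_zero]
    rw [← integral_const_mul, ← setIntegral_eq_integral_of_forall_compl_eq_zero hzero]
    refine setIntegral_congr_fun measurableSet_ball fun z hz => ?_
    simp only [ballWeight_of_norm_lt (mem_ball_zero_iff.1 hz), Real.rpow_neg (norm_nonneg _),
      Real.rpow_natCast, div_eq_mul_inv, mul_inv]
    ring
  convert tendsto_rpow_neg_mul_of_hasPrincipalValue hn hs he hω hφc hv0
    (g := fun z => lam / fracC n s * φ z) (by fun_prop) (fun x hx => ?_) using 2
  · simp only [mul_assoc, integral_const_mul]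
    rw [hκ, hκ']
    simp only [mul_assoc]
    field_simp
  · rw [div_mul_eq_mul_div]
    exact (hφeig x (mem_ball_zero_iff.2 hx)).hasPrincipalValue hs
end

section
/- Let $n=1$ and $s=1/2$, and for $x,z\in(-1,1)$ with $x\neq z$ let $r_0(x,z)=\frac{(1-x^2)(1-z^2)}{(z-x)^2}$ and $G(x,z)=\int_0^{r_0(x,z)}\frac{t^{-1/2}}{(t+1)^{1/2}}\,dt$. Then $G(x,z)=2\log\frac{1-xz+\sqrt{(1-x^2)(1-z^2)}}{|z-x|}$. -/
open MeasureTheory intervalIntegral Set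

/-- The derivative of `2 * arsinh √t` on the positive half-line. -/
theorem hasDerivAt_two_mul_arsinh_sqrt {t : ℝ} (ht : 0 < t) :
    HasDerivAt (fun t : ℝ => 2 * Real.arsinh √t)
      (t ^ (-(1 / 2) : ℝ) * (t + 1) ^ (-(1 / 2) : ℝ)) t := by
  refine ((Real.hasDerivAt_sqrt ht.ne').arsinh.const_mul 2).congr_deriv ?_
  rw [Real.rpow_neg ht.le, Real.rpow_neg (by positivity), ← Real.sqrt_eq_rpow,
    ← Real.sqrt_eq_rpow, Real.sq_sqrt ht.le, add_comm t 1, smul_eq_mul]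
  field_simp

theorem integral_rpow_neg_half_mul_add_one_rpow_neg_half {r : ℝ} (hr : 0 ≤ r) :
    ∫ t in (0 : ℝ)..r, t ^ (-(1 / 2) : ℝ) * (t + 1) ^ (-(1 / 2) : ℝ) =
      2 * Real.arsinh √r := by
  have hcont : Continuous fun t : ℝ => 2 * Real.arsinh √t :=
    continuous_const.mul Real.continuous_sqrt.arsinh
  have hderiv : ∀ t ∈ Ioo 0 r, HasDerivAt (fun t : ℝ => 2 * Real.arsinh √t)
      (t ^ (-(1 / 2) : ℝ) * (t + 1) ^ (-(1 / 2) : ℝ)) t :=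
    fun t ht => hasDerivAt_two_mul_arsinh_sqrt ht.1
  rw [integral_eq_sub_of_hasDerivAt_of_le hr hcont.continuousOn hderiv]
  · simp
  · rw [intervalIntegrable_iff_integrableOn_Ioc_of_le hr]
    refine integrableOn_deriv_of_nonneg hcont.continuousOn hderiv fun t ht => ?_
    have := ht.1
    positivity

/-- Explicit form of the fractional Green-type function for `n = 1`, `s = 1/2`:
with `r₀(x,z) = (1-x²)(1-z²)/(z-x)²`,
`∫₀^{r₀(x,z)} t^{-1/2} (t+1)^{-1/2} dt = 2 log((1 - xz + √((1-x²)(1-z²)))/|z-x|)`. -/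
theorem green_function_one_dimensional_half
    (x z : ℝ) (hx : x ∈ Set.Ioo (-1 : ℝ) 1) (hz : z ∈ Set.Ioo (-1 : ℝ) 1) (hxz : x ≠ z) :
    ∫ t in (0 : ℝ)..((1 - x ^ 2) * (1 - z ^ 2) / (z - x) ^ 2),
        t ^ (-(1 / 2) : ℝ) * (t + 1) ^ (-(1 / 2) : ℝ)
      = 2 * Real.log ((1 - x * z + Real.sqrt ((1 - x ^ 2) * (1 - z ^ 2))) / |z - x|) := by
  have hx2 : 0 < 1 - x ^ 2 := by nlinarith [hx.1, hx.2]
  have hz2 : 0 < 1 - z ^ 2 := by nlinarith [hz.1, hz.2]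
  have hxz1 : 0 < 1 - x * z := by nlinarith [sq_nonneg (x - z)]
  have hd : 0 < |z - x| := abs_pos.2 (sub_ne_zero.2 hxz.symm)
  have hr : 0 ≤ (1 - x ^ 2) * (1 - z ^ 2) / (z - x) ^ 2 := by positivity
  have hsqrt : √(1 + (1 - x ^ 2) * (1 - z ^ 2) / (z - x) ^ 2) = (1 - x * z) / |z - x| := by
    rw [Real.sqrt_eq_iff_mul_self_eq (by positivity) (by positivity), ← sq, div_pow, sq_abs]
    have : z - x ≠ 0 := sub_ne_zero.2 hxz.symm
    field_simp
    ring
  rw [integral_rpow_neg_half_mul_add_one_rpow_neg_half hr, Real.arsinh, Real.sq_sqrt hr, hsqrt,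
    Real.sqrt_div (by positivity), Real.sqrt_sq_eq_abs, ← add_div, add_comm (√_)]
end

section
/- Let $n\geq 1$, $s\in(0,1)$, $\alpha\in(0,1)$, $e,\omega\in\partial B_1\subset\mathbb{R}^n$ and $\varepsilon_o>0$ with $e+\varepsilon\omega\in B_1$ for all $\varepsilon\in(0,\varepsilon_o]$, and let $f\in C^\alpha(\mathbb{R}^n)$ with $f=0$ outside $B_1$. For $\varepsilon\in(0,\varepsilon_o]$ define $F_\varepsilon(z)=f(z)\,\frac{(-\varepsilon-2\,e\cdot\omega)^s\,(1-|z|^2)^s}{s\,|z-e-\varepsilon\omega|^n}$ if $2\varepsilon\,(-\varepsilon-2\,e\cdot\omega)\,(1-|z|^2)\leq|z-e-\varepsilon\omega|^2$, and $F_\varepsilon(z)=0$ otherwise. Then the family $(F_\varepsilon)$ is uniformly integrable on $B_1$: for every $\eta>0$ there exists $\delta>0$, independent of $\varepsilon$, such that for every measurable set $E\subset\mathbb{R}^n$ with Lebesgue measure $|E|\leq\delta$ and every $\varepsilon\in(0,\varepsilon_o]$ one has $\int_{B_1\cap E}|F_\varepsilon(z)|\,dz\leq\eta$. -/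
open MeasureTheory Filter Metric Set
open scoped RealInnerProductSpace

/-- The weak singularity `‖x‖ ^ (s - n)`, truncated to the ball of radius `2`, is integrable. -/
theorem integrable_truncated_norm_rpow {n : ℕ} (hn : 1 ≤ n) {s : ℝ} (hs : 0 < s) :
    Integrable (fun x : EuclideanSpace ℝ (Fin n) =>
      (Set.Iic (2 : ℝ)).indicator (fun r => r ^ (s - n)) ‖x‖) := by
  have : Nonempty (Fin n) := ⟨⟨0, hn⟩⟩
  rw [integrable_fun_norm_addHaar volume (f := (Set.Iic (2 : ℝ)).indicator (fun r => r ^ (s - n)))]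
  have hpow : IntegrableOn (fun r : ℝ => r ^ (s - 1)) (Set.Ioc 0 2) := by
    rw [← intervalIntegrable_iff_integrableOn_Ioc_of_le (by norm_num)]
    exact intervalIntegral.intervalIntegrable_rpow' (by linarith)
  have hind : IntegrableOn ((Set.Iic (2 : ℝ)).indicator (fun r : ℝ => r ^ (s - 1))) (Set.Ioi 0) := by
    rw [integrableOn_indicator_iff measurableSet_Iic, Set.inter_comm, Set.Ioi_inter_Iic]
    exact hpow
  refine hind.congr_fun (fun r hr => ?_) measurableSet_Ioi
  have hr : 0 < r := hr
  by_cases h2 : r ∈ Set.Iic (2 : ℝ)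
  · simp only [Set.indicator_of_mem h2, finrank_euclideanSpace, Fintype.card_fin, smul_eq_mul]
    rw [← Real.rpow_natCast, ← Real.rpow_add hr, Nat.cast_sub hn]
    congr 1
    push_cast
    ring
  · simp [Set.indicator_of_notMem h2]

/-- For `z` in the unit ball and a point `p` with `2 (1 - ‖p‖²) (1 - ‖z‖²) ≤ ‖z - p‖²`, the boundary
defect `1 - ‖z‖²` is controlled by the distance from `z` to `p`. -/
theorem one_sub_norm_sq_le_of_mul_le {V : Type*} [SeminormedAddCommGroup V] {p z : V}
    (hz : ‖z‖ < 1)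
    (h : 2 * (1 - ‖p‖ ^ 2) * (1 - ‖z‖ ^ 2) ≤ ‖z - p‖ ^ 2) :
    1 - ‖z‖ ^ 2 ≤ 4 * ‖z - p‖ := by
  by_contra! hlt
  have hd := norm_nonneg (z - p)
  have htri : ‖p‖ - ‖z‖ ≤ ‖z - p‖ := norm_sub_rev z p ▸ norm_sub_norm_le p z
  have hp0 := norm_nonneg p
  have hz0 := norm_nonneg z
  have hsq : ‖p‖ ^ 2 - ‖z‖ ^ 2 ≤ 2 * ‖z - p‖ := by nlinarith
  have hza : 0 < 1 - ‖z‖ ^ 2 := by nlinarith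
  nlinarith

/-- Integrals of the translates of an integrable function over small sets are uniformly small. -/
theorem exists_setIntegral_translate_le {V : Type*} [NormedAddCommGroup V]
    [MeasurableSpace V] [BorelSpace V] [SecondCountableTopology V]
    {μ : Measure V} [μ.IsAddRightInvariant]
    {g : V → ℝ} (hg : Integrable g μ) (hg0 : 0 ≤ g) {η : ℝ} (hη : 0 < η) :
    ∃ δ : ℝ, 0 < δ ∧ ∀ S : Set V, μ S ≤ ENNReal.ofReal δ → ∀ p : V,
      ∫ z in S, g (z - p) ∂μ ≤ η := by
  have hfin : ∫⁻ x, ENNReal.ofReal (g x) ∂μ ≠ ⊤ := hg.lintegral_lt_top.ne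
  obtain ⟨δ, hδ, H⟩ := exists_pos_setLIntegral_lt_of_measure_lt hfin
    (ENNReal.ofReal_pos.2 hη).ne'
  obtain ⟨δ', hδ', hlt⟩ := ENNReal.lt_iff_exists_nnreal_btwn.1 hδ
  refine ⟨δ', by exact_mod_cast hδ', fun S hS p => ?_⟩
  have hmp := measurePreserving_sub_right μ p
  have hemb : MeasurableEmbedding (fun z : V => z - p) := measurableEmbedding_subRight p
  have hpre : (fun z => z - p) ⁻¹' ((fun z => z - p) '' S) = S :=
    Set.preimage_image_eq _ hemb.injective
  have hmeas : μ ((fun z => z - p) '' S) = μ S := by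
    rw [← hmp.measure_preimage_emb hemb, hpre]
  have hint : ∫ z in S, g (z - p) ∂μ = ∫ z in (fun z => z - p) '' S, g z ∂μ := by
    rw [← hmp.setIntegral_preimage_emb hemb g, hpre]
  rw [hint, integral_eq_lintegral_of_nonneg_ae (.of_forall hg0) hg.1.restrict]
  refine ENNReal.toReal_le_of_le_ofReal hη.le (H _ ?_).le
  rw [hmeas]
  exact hS.trans_lt (by simpa using hlt)

/-- Uniform integrability of the family `F_ε` appearing in the boundary asymptotics of
the fractional Green function: for every `η > 0` there is `δ > 0`, independent of `ε`,
such that `∫_{B₁ ∩ E} |F_ε| ≤ η` whenever `|E| ≤ δ`. -/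
theorem green_family_uniformly_integrable
    (n : ℕ) (hn : 1 ≤ n) (s : ℝ) (hs : s ∈ Set.Ioo (0 : ℝ) 1)
    (α : ℝ) (hα : α ∈ Set.Ioo (0 : ℝ) 1)
    (e ω : EuclideanSpace ℝ (Fin n)) (he : ‖e‖ = 1) (hω : ‖ω‖ = 1)
    (εo : ℝ) (hεo : 0 < εo)
    (hin : ∀ ε ∈ Set.Ioc (0 : ℝ) εo,
      e + ε • ω ∈ Metric.ball (0 : EuclideanSpace ℝ (Fin n)) 1)
    (f : EuclideanSpace ℝ (Fin n) → ℝ)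
    (hfH : ∃ C : ℝ, ∀ x y : EuclideanSpace ℝ (Fin n), |f x - f y| ≤ C * ‖x - y‖ ^ α)
    (hfb : ∃ M : ℝ, ∀ x : EuclideanSpace ℝ (Fin n), |f x| ≤ M)
    (hf0 : ∀ x ∉ Metric.ball (0 : EuclideanSpace ℝ (Fin n)) 1, f x = 0)
    (F : ℝ → EuclideanSpace ℝ (Fin n) → ℝ)
    (hF : ∀ ε z, F ε z =
      if 2 * ε * (-ε - 2 * ⟪e, ω⟫) * (1 - ‖z‖ ^ 2) ≤ ‖z - (e + ε • ω)‖ ^ 2 then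
        f z * ((-ε - 2 * ⟪e, ω⟫) ^ s * (1 - ‖z‖ ^ 2) ^ s / (s * ‖z - (e + ε • ω)‖ ^ n))
      else 0) :
    ∀ η : ℝ, 0 < η → ∃ δ : ℝ, 0 < δ ∧
      ∀ E : Set (EuclideanSpace ℝ (Fin n)), MeasurableSet E →
        volume E ≤ ENNReal.ofReal δ →
        ∀ ε ∈ Set.Ioc (0 : ℝ) εo,
          ∫ z in Metric.ball (0 : EuclideanSpace ℝ (Fin n)) 1 ∩ E, |F ε z| ≤ η := by
  obtain ⟨M, hM⟩ := hfb
  obtain ⟨hs0, -⟩ := hs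
  have hM0 : 0 ≤ M := (abs_nonneg _).trans (hM 0)
  intro η hη
  let g : EuclideanSpace ℝ (Fin n) → ℝ := fun x =>
    M * (2 ^ s * 4 ^ s / s) * (Set.Iic (2 : ℝ)).indicator (fun r => r ^ (s - n)) ‖x‖
  have hg : Integrable g := (integrable_truncated_norm_rpow hn hs0).const_mul _
  have hg0 : 0 ≤ g := fun x => by
    have : 0 ≤ (Set.Iic (2 : ℝ)).indicator (fun r => r ^ (s - n)) ‖x‖ :=
      Set.indicator_apply_nonneg fun _ => Real.rpow_nonneg (norm_nonneg x) _
    positivity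
  obtain ⟨δ, hδ, H⟩ := exists_setIntegral_translate_le hg hg0 hη
  refine ⟨δ, hδ, fun E hE hvol ε hε => ?_⟩
  refine le_trans ?_ (H (ball 0 1 ∩ E) ((measure_mono Set.inter_subset_right).trans hvol)
    (e + ε • ω))
  refine integral_mono_of_nonneg (.of_forall fun z => abs_nonneg _)
    (hg.comp_sub_right (e + ε • ω)).integrableOn ?_
  refine (ae_restrict_iff' (measurableSet_ball.inter hE)).2 (.of_forall fun z hz => ?_)
  have hz1 : ‖z‖ < 1 := by simpa using hz.1
  have hp1 : ‖e + ε • ω‖ < 1 := by simpa using hin ε hε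
  have hpsq : ε * (-ε - 2 * ⟪e, ω⟫) = 1 - ‖e + ε • ω‖ ^ 2 := by
    rw [norm_add_sq_real, norm_smul, inner_smul_right, he, hω, Real.norm_eq_abs, mul_one, sq_abs]
    ring
  have hκ0 : 0 ≤ -ε - 2 * ⟪e, ω⟫ := by
    refine (pos_of_mul_pos_right (a := ε) ?_ hε.1.le).le
    rw [hpsq]
    nlinarith [norm_nonneg (e + ε • ω)]
  have hκ2 : -ε - 2 * ⟪e, ω⟫ ≤ 2 := by
    have := neg_le_of_abs_le (abs_real_inner_le_norm e ω)
    rw [he, hω] at this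
    linarith [hε.1]
  change |F ε z| ≤ g (z - (e + ε • ω))
  rw [hF]
  split_ifs with hcond
  swap
  · simpa using hg0 (z - (e + ε • ω))
  rw [mul_assoc 2 ε, hpsq] at hcond
  have hdef := one_sub_norm_sq_le_of_mul_le hz1 hcond
  have hz0 : 0 ≤ 1 - ‖z‖ ^ 2 := by nlinarith [norm_nonneg z]
  have hd2 : ‖z - (e + ε • ω)‖ ∈ Set.Iic (2 : ℝ) :=
    (norm_sub_le _ _).trans (by linarith)
  simp only [g, Set.indicator_of_mem hd2]
  generalize ‖z - (e + ε • ω)‖ = d at *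
  have hd : 0 < d := by
    nlinarith [norm_nonneg z]
  rw [abs_mul, abs_of_nonneg (by positivity : 0 ≤ (-ε - 2 * ⟪e, ω⟫) ^ s * (1 - ‖z‖ ^ 2) ^ s /
    (s * d ^ n)), mul_assoc]
  have hkey : (-ε - 2 * ⟪e, ω⟫) ^ s * (1 - ‖z‖ ^ 2) ^ s / (s * d ^ n) ≤
      2 ^ s * (4 * d) ^ s / (s * d ^ n) := by
    gcongr
  refine mul_le_mul (hM z) (hkey.trans_eq ?_) (by positivity) hM0
  rw [Real.mul_rpow (by norm_num) hd.le, Real.rpow_sub hd, Real.rpow_natCast]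
  field_simp
end
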